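/- arXiv:1905.02083 — 2 statements merged into one kernel-verified Lean document; each statement's English description precedes it below -/
import Mathlib

section
/- For every n > 1, Σ_{T ∈ C_{n+1}} y^{impe(T)} (t+1)^{impp(T)} x^{deg_T(1)-1} z^{lead(T)-deg_T(1)-1} = Σ_{T ∈ O_{n+1}} y^{impe(T)+eld(T)} t^{eld(T)} x^{young_T(1)-1} z^{n-impe(T)-young_T(1)-eld(T)}, where the left sum is over Cayley trees of size n+1 rooted at 1 and the right sum is over planar trees of size n+1 rooted at 1. -/
noncomputable section

open MvPolynomial Function

/-! ### The polynomial sequences -/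

/-- The generalized Ramanujan polynomials `Q n`, in the variables
`x = X 0`, `y = X 1`, `z = X 2`, `t = X 3`:
`Q 1 = 1` and `Q (n+1) = (x + n z + n (y+t)) Q n + (y+t) y ∂_y (Q n)` for `n ≥ 1`. -/
def Qpoly : ℕ → MvPolynomial (Fin 4) ℚ
  | 0 => 1
  | 1 => 1
  | n + 2 =>
      (X 0 + C ((n : ℚ) + 1) * X 2 + C ((n : ℚ) + 1) * (X 1 + X 3)) * Qpoly (n + 1)
        + (X 1 + X 3) * (X 1 * pderiv 1 (Qpoly (n + 1)))

/-- `R n (x,y,z,t) = Q n (x, y+1, z, t-1)`. -/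
def Rpoly (n : ℕ) : MvPolynomial (Fin 4) ℚ :=
  bind₁ (fun i : Fin 4 => if i = 1 then X 1 + 1 else if i = 3 then X 3 - 1 else X i) (Qpoly n)

/-- `H 1 = 1` and `H (n+1) = (2n-1+(n+1)y) H n + (1+y)^2 H n'` for `n ≥ 1`. -/
def Hpoly : ℕ → Polynomial ℚ
  | 0 => 1
  | 1 => 1
  | n + 2 =>
      (Polynomial.C (2 * (n : ℚ) + 1) + Polynomial.C ((n : ℚ) + 2) * Polynomial.X)
          * Hpoly (n + 1)
        + (1 + Polynomial.X) ^ 2 * Polynomial.derivative (Hpoly (n + 1))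

/-- The Ramanujan polynomials, in the variables `x = X 0`, `y = X 1`:
`P 1 = 1` and `P (n+1) = (x + n + n y) P n + y^2 ∂_y (P n)` for `n ≥ 1`. -/
def Ppoly : ℕ → MvPolynomial (Fin 2) ℚ
  | 0 => 1
  | 1 => 1
  | n + 2 =>
      (X 0 + C ((n : ℚ) + 1) * (1 + X 1)) * Ppoly (n + 1)
        + X 1 ^ 2 * pderiv 1 (Ppoly (n + 1))

/-- `C 1 = 1` and `C (n+1) = n (1+y) C n + y^2 C n'` for `n ≥ 1`. -/
def Cpoly : ℕ → Polynomial ℚ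
  | 0 => 1
  | 1 => 1
  | n + 2 =>
      Polynomial.C ((n : ℚ) + 1) * (1 + Polynomial.X) * Cpoly (n + 1)
        + Polynomial.X ^ 2 * Polynomial.derivative (Cpoly (n + 1))

/-! ### Cayley trees

A Cayley tree of size `n`, rooted at the vertex with label `1`, is encoded by its parent
function on `Fin n` (vertex `v` carries label `v+1`; the root is the vertex with value `0`).
The root is a fixed point and every vertex reaches the root by iterating the parent map. -/

def CayleyTree (n : ℕ) : Type :=
  {p : Fin n → Fin n //
    (∀ v, v.val = 0 → p v = v) ∧ ∀ v : Fin n, ∃ k, k < n ∧ (p^[k] v).val = 0}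

noncomputable instance (n : ℕ) : Fintype (CayleyTree n) := by
  unfold CayleyTree; exact Fintype.ofFinite _

namespace CayleyTree

variable {n : ℕ} (T : CayleyTree n)

/-- `Desc T v a` : `v` is a descendant of `a` (including `a` itself). -/
def Desc (v a : Fin n) : Prop := ∃ k, T.1^[k] v = a

/-- `β_T(a)` : the smallest label among the descendants of `a`, as a 0-based index. -/
def beta (a : Fin n) : ℕ := sInf {j : ℕ | ∃ v : Fin n, v.val = j ∧ T.Desc v a}

/-- The edge from `c` to its parent is improper: `λ(parent c) > β(c)`. -/
def ImproperEdge (c : Fin n) : Prop := c.val ≠ 0 ∧ T.beta c < (T.1 c).val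

/-- The number of improper edges. -/
def impe : ℕ := {c : Fin n | T.ImproperEdge c}.ncard

/-- `a` is an improper parent, i.e. `β_T(a) ≠ λ_T(a)`. -/
def ImproperParent (a : Fin n) : Prop := T.beta a ≠ a.val

/-- The number of improper parents. -/
def impp : ℕ := {a : Fin n | T.ImproperParent a}.ncard

/-- The degree of the root (= its number of children). -/
def degRoot : ℕ := {c : Fin n | c.val ≠ 0 ∧ (T.1 c).val = 0}.ncard

/-- The length of the greater ancestors path of `i` : the largest `k` such that all the
ancestors `p^[l] i`, `l ≤ k`, have a label `≥ λ(i)`. -/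
def bapLen (i : Fin n) : ℕ := Nat.findGreatest (fun k => ∀ l ≤ k, i ≤ T.1^[l] i) n

/-- `i` is a leading vertex: `β_T(a_p) = λ_T(i)` where `a_p` is the top of the greater
ancestors path of `i`. -/
def Leading (i : Fin n) : Prop := T.beta (T.1^[T.bapLen i] i) = i.val

/-- The number of leading vertices. -/
def lead : ℕ := {i : Fin n | T.Leading i}.ncard

end CayleyTree

/-! ### Greg trees

A Greg tree of size `n`, rooted at the vertex with label `1`, has labelled vertices `Fin n`
(vertex `Sum.inl v` carries label `v+1`) and unlabelled vertices `Fin m`, each of degree at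
least `3`.  It is encoded by its parent function.  To make the encoding canonical, the
unlabelled vertices are required to be indexed in increasing order of the pair
`(β, depth)` (this pair is distinct for distinct unlabelled vertices, so every abstract Greg
tree admits exactly one such encoding). -/

/-- The root: the labelled vertex with label `1` (value `0`). -/
def gregRoot {n m : ℕ} (v : Fin n ⊕ Fin m) : Prop := ∃ w : Fin n, w.val = 0 ∧ v = Sum.inl w

namespace GregRaw

variable {n m : ℕ} (p : Fin n ⊕ Fin m → Fin n ⊕ Fin m)

/-- `v` is a descendant of `a` (including `a` itself). -/
def Desc (v a : Fin n ⊕ Fin m) : Prop := ∃ k, p^[k] v = a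

/-- `β(a)` : smallest label among the descendants of `a`, as a 0-based index. -/
def beta (a : Fin n ⊕ Fin m) : ℕ :=
  sInf {j : ℕ | ∃ w : Fin n, w.val = j ∧ Desc p (Sum.inl w) a}

/-- Distance from `v` to the root. -/
def depth (v : Fin n ⊕ Fin m) : ℕ := sInf {k : ℕ | gregRoot (p^[k] v)}

/-- Sorting key for unlabelled vertices: the pair `(β, depth)` encoded as a number. -/
def key (u : Fin m) : ℕ := beta p (Sum.inr u) * (n + m + 1) + depth p (Sum.inr u)

/-- The set of children of a vertex. -/
def children (a : Fin n ⊕ Fin m) : Set (Fin n ⊕ Fin m) := {w | w ≠ a ∧ p w = a}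

end GregRaw

/-- The conditions making a parent function on `Fin n ⊕ Fin m` a (canonically encoded)
Greg tree: the root is a fixed point, every vertex reaches the root, every unlabelled
vertex has at least two children (hence, having also a parent, degree at least `3`),
and unlabelled vertices are indexed in increasing order of `(β, depth)`. -/
def GregCond (n m : ℕ) (p : Fin n ⊕ Fin m → Fin n ⊕ Fin m) : Prop :=
  (∀ v, gregRoot v → p v = v) ∧
  (∀ v, ∃ k, k < n + m ∧ gregRoot (p^[k] v)) ∧
  (∀ u : Fin m, 2 ≤ (GregRaw.children p (Sum.inr u)).ncard) ∧
  (∀ u w : Fin m, u < w ↔ GregRaw.key p u < GregRaw.key p w)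

/-- Greg trees of size `n` rooted at `1`.  (The number of unlabelled vertices of a Greg
tree with `n` labelled vertices is always at most `n`, so the bound `m ≤ n` does not
exclude any Greg tree.) -/
def GregTree (n : ℕ) : Type :=
  Σ m : Fin (n + 1), {p : Fin n ⊕ Fin m.val → Fin n ⊕ Fin m.val // GregCond n m.val p}

noncomputable instance (n : ℕ) : Fintype (GregTree n) := by
  unfold GregTree; exact Fintype.ofFinite _

namespace GregTree

variable {n : ℕ} (T : GregTree n)

/-- The number of unlabelled vertices. -/
def unl : ℕ := T.1.val

/-- `β_T`. -/
def beta (a : Fin n ⊕ Fin T.1.val) : ℕ := GregRaw.beta T.2.1 a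

/-- The labelled vertex `a` is an improper parent, i.e. `β_T(a) ≠ λ_T(a)`. -/
def ImproperParent (a : Fin n) : Prop := T.beta (Sum.inl a) ≠ a.val

/-- The number of improper parents. -/
def impp : ℕ := {a : Fin n | T.ImproperParent a}.ncard

/-- The degree of the root (= its number of children). -/
def degRoot : ℕ :=
  {w : Fin n ⊕ Fin T.1.val | ¬gregRoot w ∧ gregRoot (T.2.1 w)}.ncard

/-- The length of the greater ancestors path of the labelled vertex `i` : the largest `k`
such that all labelled vertices among the ancestors `p^[l] (inl i)`, `l ≤ k`, have a label
`≥ λ(i)`. -/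
def bapLen (i : Fin n) : ℕ :=
  Nat.findGreatest
    (fun k => ∀ l ≤ k, ∀ j : Fin n, T.2.1^[l] (Sum.inl i) = Sum.inl j → i ≤ j)
    (n + T.1.val)

/-- The labelled vertex `i` is a leading vertex. -/
def Leading (i : Fin n) : Prop := T.beta (T.2.1^[T.bapLen i] (Sum.inl i)) = i.val

/-- The number of leading vertices. -/
def lead : ℕ := {i : Fin n | T.Leading i}.ncard

end GregTree

/-! ### Planar trees

A planar tree of size `n` rooted at `1` is encoded by a parent function together with a
rank function giving each non-root vertex its position (from the left, starting at `0`)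
among the children of its parent; ranks of the children of a fixed vertex form an initial
segment of `ℕ`, so the encoding is canonical. -/

def PlanarTree (n : ℕ) : Type :=
  {pr : (Fin n → Fin n) × (Fin n → Fin n) //
    (∀ v, v.val = 0 → pr.1 v = v) ∧
    (∀ v : Fin n, ∃ k, k < n ∧ (pr.1^[k] v).val = 0) ∧
    (∀ v, v.val = 0 → (pr.2 v).val = 0) ∧
    (∀ c d, c.val ≠ 0 → d.val ≠ 0 → pr.1 c = pr.1 d → pr.2 c = pr.2 d → c = d) ∧
    (∀ c, c.val ≠ 0 → ∀ s : Fin n, s < pr.2 c →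
      ∃ d, d.val ≠ 0 ∧ pr.1 d = pr.1 c ∧ pr.2 d = s)}

noncomputable instance (n : ℕ) : Fintype (PlanarTree n) := by
  unfold PlanarTree; exact Fintype.ofFinite _

namespace PlanarTree

variable {n : ℕ} (T : PlanarTree n)

/-- `β_T(a)` : the smallest label among the descendants of `a`, as a 0-based index. -/
def beta (a : Fin n) : ℕ := sInf {j : ℕ | ∃ v : Fin n, v.val = j ∧ ∃ k, T.1.1^[k] v = a}

/-- `j` is elder: it has a brother to its right with a smaller `β`. -/
def Elder (j : Fin n) : Prop :=
  j.val ≠ 0 ∧ ∃ k : Fin n, k.val ≠ 0 ∧ T.1.1 k = T.1.1 j ∧ T.1.2 j < T.1.2 k ∧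
    T.beta k < T.beta j

/-- The number of elder vertices. -/
def eld : ℕ := {j : Fin n | T.Elder j}.ncard

/-- The edge from `c` to its parent is improper: `c` is a younger child and
`λ(parent c) > β(c)`. -/
def ImproperEdge (c : Fin n) : Prop := c.val ≠ 0 ∧ ¬T.Elder c ∧ T.beta c < (T.1.1 c).val

/-- The number of improper edges. -/
def impe : ℕ := {c : Fin n | T.ImproperEdge c}.ncard

/-- `young_T(i)` : the number of younger children of `i`. -/
def young (i : Fin n) : ℕ := {c : Fin n | c.val ≠ 0 ∧ T.1.1 c = i ∧ ¬T.Elder c}.ncard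

/-- `young_T(1)` : the number of younger children of the root. -/
def youngRoot : ℕ := {c : Fin n | c.val ≠ 0 ∧ (T.1.1 c).val = 0 ∧ ¬T.Elder c}.ncard

end PlanarTree



namespace RT

/-- parent functions on `ℕ` in which every vertex reaches the root `0`. -/
def IsT (p : ℕ → ℕ) : Prop := p 0 = 0 ∧ ∀ v, ∃ k, p^[k] v = 0

/-- smallest label among the descendants -/
def bt (p : ℕ → ℕ) (a : ℕ) : ℕ := sInf {v | ∃ k, p^[k] v = a}

lemma bt_spec (p : ℕ → ℕ) (a : ℕ) : ∃ k, p^[k] (bt p a) = a :=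
  Nat.sInf_mem (s := {v | ∃ k, p^[k] v = a}) ⟨a, 0, rfl⟩

lemma bt_le_of (p : ℕ → ℕ) {v a k : ℕ} (h : p^[k] v = a) : bt p a ≤ v :=
  Nat.sInf_le ⟨k, h⟩

lemma bt_le (p : ℕ → ℕ) (a : ℕ) : bt p a ≤ a := bt_le_of p (k := 0) rfl

lemma bt_mono (p : ℕ → ℕ) (v : ℕ) : bt p (p v) ≤ bt p v := by
  obtain ⟨k, hk⟩ := bt_spec p v
  exact bt_le_of p (k := k + 1) (by rw [iterate_succ_apply', hk])

lemma bt_mono_iter (p : ℕ → ℕ) (k v : ℕ) : bt p (p^[k] v) ≤ bt p v := by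
  induction k with
  | zero => exact le_rfl
  | succ k ih => rw [iterate_succ_apply']; exact (bt_mono p _).trans ih

/-- lower bound criterion -/
lemma le_bt {q h : ℕ → ℕ} (h1 : ∀ v, h v ≤ v) (h2 : ∀ v, h (q v) ≤ h v) (a : ℕ) :
    h a ≤ bt q a := by
  obtain ⟨k, hk⟩ := bt_spec q a
  have : ∀ k v, h (q^[k] v) ≤ h v := by
    intro k
    induction k with
    | zero => intro v; exact le_rfl
    | succ k ih => intro v; rw [iterate_succ_apply']; exact (h2 _).trans (ih v)
  calc h a = h (q^[k] (bt q a)) := by rw [hk]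
    _ ≤ h (bt q a) := this _ _
    _ ≤ _ := h1 _

lemma bt_eq_of {q g : ℕ → ℕ} (h1 : ∀ v, g v ≤ v) (h2 : ∀ v, g (q v) ≤ g v)
    (h3 : ∀ a, ∃ k, q^[k] (g a) = a) : bt q = g := by
  funext a
  apply le_antisymm
  · obtain ⟨k, hk⟩ := h3 a; exact bt_le_of q hk
  · exact le_bt h1 h2 a

/-- reachability -/
def Rc (q : ℕ → ℕ) (v a : ℕ) : Prop := ∃ k, q^[k] v = a

lemma Rc.refl (q : ℕ → ℕ) (v : ℕ) : Rc q v v := ⟨0, rfl⟩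
lemma Rc.step {q : ℕ → ℕ} {v a : ℕ} (h : Rc q (q v) a) : Rc q v a := by
  obtain ⟨k, hk⟩ := h; exact ⟨k + 1, hk⟩
lemma Rc.one (q : ℕ → ℕ) (v : ℕ) : Rc q v (q v) := ⟨1, rfl⟩
lemma Rc.trans {q : ℕ → ℕ} {v a b : ℕ} (h : Rc q v a) (h' : Rc q a b) : Rc q v b := by
  obtain ⟨k, hk⟩ := h; obtain ⟨l, hl⟩ := h'
  exact ⟨l + k, by rw [iterate_add_apply, hk, hl]⟩

/-- path criterion: `g` is the statistic; walk along minimal paths of `p` -/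
lemma bt_path {p : ℕ → ℕ} {q : ℕ → ℕ} (hh : ℕ → ℕ)
    (hstep : ∀ v, bt p (p v) = bt p v → Rc q (hh v) (hh (p v))) (a : ℕ) :
    Rc q (hh (bt p a)) (hh a) := by
  obtain ⟨k, hk⟩ := bt_spec p a
  have key : ∀ l ≤ k, Rc q (hh (bt p a)) (hh (p^[l] (bt p a))) := by
    intro l
    induction l with
    | zero => intro _; exact Rc.refl _ _
    | succ l ih =>
      intro hl
      refine (ih (by omega)).trans ?_
      rw [iterate_succ_apply']
      apply hstep
      have e : ∀ j ≤ k, bt p (p^[j] (bt p a)) = bt p a := by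
        intro j hj
        apply le_antisymm
        · exact bt_le_of p rfl
        · have := bt_mono_iter p (k - j) (p^[j] (bt p a))
          rw [← iterate_add_apply, Nat.sub_add_cancel hj, hk] at this
          exact this
      have e1 := e (l + 1) hl
      rw [iterate_succ_apply'] at e1
      rw [e1, e l (by omega)]
  have := key k le_rfl
  rwa [hk] at this

namespace IsT
variable {p : ℕ → ℕ}

lemma iter_zero (hp : IsT p) (k : ℕ) : p^[k] 0 = 0 := iterate_fixed hp.1 k

lemma no_cycle (hp : IsT p) {v j : ℕ} (h : p^[j + 1] v = v) : v = 0 := by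
  obtain ⟨k, hk⟩ := hp.2 v
  have h1 : ∀ i, p^[(j + 1) * i] v = v := by
    intro i
    rw [iterate_mul]
    exact iterate_fixed h i
  have h2 : (j + 1) * k = ((j + 1) * k - k) + k := by
    have : k ≤ (j + 1) * k := Nat.le_mul_of_pos_left _ (by omega)
    omega
  rw [← h1 k, h2, iterate_add_apply, hk, iter_zero hp]

lemma p_ne (hp : IsT p) {v : ℕ} (hv : v ≠ 0) : p v ≠ v := fun h => hv (hp.no_cycle (j := 0) h)

lemma bt_zero (hp : IsT p) : bt p 0 = 0 := Nat.le_zero.1 (bt_le p 0)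

lemma bt_pos (hp : IsT p) {v : ℕ} (hv : v ≠ 0) : 0 < bt p v := by
  rcases Nat.eq_zero_or_pos (bt p v) with h | h
  · obtain ⟨k, hk⟩ := bt_spec p v
    rw [h, iter_zero hp] at hk
    exact absurd hk.symm hv
  · exact h

lemma sib_inj (hp : IsT p) {c d : ℕ} (hc : c ≠ 0) (hd : d ≠ 0) (hpc : p c = p d) (hb : bt p c = bt p d) :
    c = d := by
  have key : ∀ c d : ℕ, d ≠ 0 → p c = p d → ∀ k l m, p^[k] m = c → p^[l] m = d → k ≤ l → c = d := by
    intro c d hd hpc k l m hk hl hkl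
    obtain ⟨j, rfl⟩ := Nat.exists_eq_add_of_le' hkl
    rw [iterate_add_apply, hk] at hl
    cases j with
    | zero => exact hl
    | succ j =>
      exfalso
      apply hd
      apply hp.no_cycle (j := j)
      rw [iterate_succ_apply] at hl ⊢
      rw [← hpc, hl]
  obtain ⟨k, hk⟩ := bt_spec p c
  obtain ⟨l, hl⟩ := bt_spec p d
  rw [← hb] at hl
  rcases le_total k l with h | h
  · exact key c d hd hpc k l _ hk hl h
  · exact (key d c hc hpc.symm l k _ hl hk h).symm

/-- an improper vertex has a child with the same `bt` -/
lemma exists_child (hp : IsT p) {v : ℕ} (h : bt p v ≠ v) : ∃ c, c ≠ 0 ∧ p c = v ∧ bt p c = bt p v := by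
  obtain ⟨k, hk⟩ := bt_spec p v
  cases k with
  | zero => exact absurd hk h
  | succ k =>
    have hv : v ≠ 0 := by rintro rfl; exact h hp.bt_zero
    rw [iterate_succ_apply'] at hk
    refine ⟨p^[k] (bt p v), ?_, hk, ?_⟩
    · intro h0; rw [h0, hp.1] at hk; exact hv hk.symm
    · apply le_antisymm
      · exact bt_le_of p rfl
      · have := bt_mono p (p^[k] (bt p v)); rwa [hk] at this

lemma imp_of_eq (hp : IsT p) {c : ℕ} (hc : c ≠ 0) (h : bt p c = bt p (p c)) : bt p c < p c := by
  have h1 : bt p c ≤ p c := h ▸ bt_le p (p c)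
  rcases h1.lt_or_eq with h2 | h2
  · exact h2
  · exfalso
    obtain ⟨k, hk⟩ := bt_spec p c
    rw [h2, ← iterate_succ_apply] at hk
    exact hc (hp.no_cycle hk)

end IsT

/-- Trees on vertices `0..m` -/
def Tr (m : ℕ) : Set (ℕ → ℕ) := {p | IsT p ∧ ∀ v, p v ≤ m ∧ (m < v → p v = 0)}

lemma Tr_finite (m : ℕ) : (Tr m).Finite := by
  have : Set.InjOn (fun (p : ℕ → ℕ) (v : Fin (m + 1)) => (Fin.ofNat (m + 1) (p v))) (Tr m) := by
    intro p hp q hq h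
    funext v
    rcases le_or_gt v m with hv | hv
    · have := congrFun h ⟨v, by omega⟩
      simp only [Fin.ofNat, Fin.mk.injEq] at this
      rwa [Nat.mod_eq_of_lt, Nat.mod_eq_of_lt] at this
      · have := (hq.2 v).1; omega
      · have := (hp.2 v).1; omega
    · rw [(hp.2 v).2 hv, (hq.2 v).2 hv]
  exact Set.Finite.of_injOn (Set.mapsTo_univ _ _) this Set.finite_univ

def TrF (m : ℕ) : Finset (ℕ → ℕ) := (Tr_finite m).toFinset

lemma mem_TrF {m : ℕ} {p : ℕ → ℕ} : p ∈ TrF m ↔ p ∈ Tr m := by simp [TrF]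

/-- improper edges -/
def imp (m : ℕ) (p : ℕ → ℕ) : Finset ℕ := (Finset.Icc 1 m).filter (fun c => bt p c < p c)
/-- improper parents -/
def ipp (m : ℕ) (p : ℕ → ℕ) : Finset ℕ := (Finset.Icc 1 m).filter (fun c => bt p c ≠ c)
def rch (m : ℕ) (p : ℕ → ℕ) : Finset ℕ := (Finset.Icc 1 m).filter (fun c => p c = 0)

lemma mem_imp {m : ℕ} {p : ℕ → ℕ} {c : ℕ} : c ∈ imp m p ↔ (1 ≤ c ∧ c ≤ m) ∧ bt p c < p c := by
  simp [imp]
lemma mem_ipp {m : ℕ} {p : ℕ → ℕ} {c : ℕ} : c ∈ ipp m p ↔ (1 ≤ c ∧ c ≤ m) ∧ bt p c ≠ c := by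
  simp [ipp]
lemma mem_rch {m : ℕ} {p : ℕ → ℕ} {c : ℕ} : c ∈ rch m p ↔ (1 ≤ c ∧ c ≤ m) ∧ p c = 0 := by
  simp [rch]

namespace Tr
variable {m : ℕ} {p : ℕ → ℕ}

lemma le_of_p_ne (hp : p ∈ Tr m) {c : ℕ} (h : p c ≠ 0) : c ≤ m := by
  by_contra hc
  exact h ((hp.2 c).2 (by omega))

lemma bt_big (hp : p ∈ Tr m) {v : ℕ} (hv : m < v) : bt p v = v := by
  obtain ⟨k, hk⟩ := bt_spec p v
  cases k with
  | zero => exact hk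
  | succ k =>
    rw [iterate_succ_apply'] at hk
    have := (hp.2 (p^[k] (bt p v))).1
    omega

/-- first improper edges are counted by `ipp` -/
lemma card_first (hp : p ∈ Tr m) : ((imp m p).filter (fun c => bt p c = bt p (p c))).card = (ipp m p).card := by
  apply Finset.card_bij (fun c _ => p c)
  · intro c hc
    simp only [Finset.mem_filter, mem_imp] at hc
    have := (hp.2 c).1
    rw [mem_ipp]
    omega
  · intro c hc d hd h
    simp only [Finset.mem_filter, mem_imp] at hc hd
    exact hp.1.sib_inj (by omega) (by omega) h (by rw [hc.2, hd.2, h])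
  · intro v hv
    rw [mem_ipp] at hv
    obtain ⟨c, hc, hcv, hb⟩ := hp.1.exists_child hv.2
    refine ⟨c, ?_, hcv⟩
    have h1 := le_of_p_ne hp (c := c) (by omega)
    have h2 := hp.1.imp_of_eq hc (by rw [hb, hcv])
    simp only [Finset.mem_filter, mem_imp]
    refine ⟨⟨⟨by omega, h1⟩, h2⟩, by rw [hb, hcv]⟩

/-- last improper edges are counted by `ipp` -/
lemma card_last (hp : p ∈ Tr m) : ((imp m p).filter (fun c => ∀ d ∈ imp m p, p d = p c → bt p d ≤ bt p c)).card
    = (ipp m p).card := by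
  apply Finset.card_bij (fun c _ => p c)
  · intro c hc
    simp only [Finset.mem_filter, mem_imp] at hc
    have := (hp.2 c).1
    have := bt_mono p c
    rw [mem_ipp]
    omega
  · intro c hc d hd h
    simp only [Finset.mem_filter] at hc hd
    have h1 := hc.2 d hd.1 h.symm
    have h2 := hd.2 c hc.1 h
    rw [mem_imp] at hc hd
    exact hp.1.sib_inj (by omega) (by omega) h (by omega)
  · intro v hv
    rw [mem_ipp] at hv
    obtain ⟨c, hc, hcv, hb⟩ := hp.1.exists_child hv.2
    have h1 := le_of_p_ne hp (c := c) (by omega)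
    have h2 := hp.1.imp_of_eq hc (by rw [hb, hcv])
    obtain ⟨d, hd, hd'⟩ := Finset.exists_max_image ((imp m p).filter (fun c => p c = v)) (bt p)
      ⟨c, by rw [Finset.mem_filter, mem_imp]; exact ⟨⟨⟨by omega, h1⟩, h2⟩, hcv⟩⟩
    rw [Finset.mem_filter] at hd
    refine ⟨d, ?_, hd.2⟩
    rw [Finset.mem_filter]
    refine ⟨hd.1, fun e he hpe => hd' e ?_⟩
    rw [Finset.mem_filter]
    exact ⟨he, hpe.trans hd.2⟩

lemma ipp_le_imp (hp : p ∈ Tr m) : (ipp m p).card ≤ (imp m p).card := by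
  rw [← card_first hp]; exact Finset.card_filter_le _ _

lemma imp_add_rch (hp : p ∈ Tr m) : (imp m p).card + (rch m p).card ≤ m := by
  rw [← Finset.card_union_of_disjoint]
  · calc _ ≤ (Finset.Icc 1 m).card := by
          apply Finset.card_le_card
          intro c hc
          rw [Finset.mem_union, mem_imp, mem_rch] at hc
          rw [Finset.mem_Icc]
          omega
      _ = m := by simp
  · rw [Finset.disjoint_left]
    intro c h1 h2
    rw [mem_imp] at h1
    rw [mem_rch] at h2
    omega

end Tr
end RT

namespace RT

/-- insertion of the vertex `N = m+1` above `i` -/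
def ins (m : ℕ) (p : ℕ → ℕ) (i t : ℕ) (v : ℕ) : ℕ :=
  if v = m + 1 then p i else if v = i then m + 1
    else if p v = i ∧ bt p v ≤ t then m + 1 else p v

/-- contraction -/
def con (m : ℕ) (q : ℕ → ℕ) (i : ℕ) (v : ℕ) : ℕ :=
  if v = m + 1 then 0 else if v = i then q (m + 1) else if q v = m + 1 then i else q v

structure Good (m : ℕ) (p : ℕ → ℕ) (i t : ℕ) : Prop where
  mem : p ∈ Tr m
  i1 : 1 ≤ i
  im : i ≤ m
  ht : t = 0 ∨ ∃ j, j ≠ 0 ∧ p j = i ∧ bt p j = t ∧ t < i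

namespace Good
variable {m : ℕ} {p : ℕ → ℕ} {i t : ℕ}

lemma p_le (h : Good m p i t) (v : ℕ) : p v ≤ m := (h.mem.2 v).1
lemma pN (h : Good m p i t) : p (m + 1) = 0 := (h.mem.2 (m + 1)).2 (by omega)
lemma t_lt (h : Good m p i t) : t < i := by
  rcases h.ht with h1 | ⟨j, _, _, _, h2⟩
  · have := h.i1; omega
  · exact h2
lemma pi_ne (h : Good m p i t) : p i ≠ i := h.mem.1.p_ne (by have := h.i1; omega)
lemma bt_i_le (h : Good m p i t) : t ≠ 0 → bt p i ≤ t := by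
  intro ht
  rcases h.ht with h1 | ⟨j, _, h3, h4, h2⟩
  · exact absurd h1 ht
  · rw [← h4, ← h3]; exact bt_mono p j

lemma insN (h : Good m p i t) : ins m p i t (m + 1) = p i := by simp [ins]
lemma insi (h : Good m p i t) : ins m p i t i = m + 1 := by have := h.im; simp [ins]; omega
lemma ins_mv (h : Good m p i t) {v : ℕ} (h1 : p v = i) (h2 : bt p v ≤ t) : ins m p i t v = m + 1 := by
  have h3 : v ≠ m + 1 := by rintro rfl; rw [h.pN] at h1; have := h.i1; omega
  have h4 : v ≠ i := by rintro rfl; exact h.pi_ne h1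
  simp [ins, h1, h2, h3, h4]
lemma ins_else (h : Good m p i t) {v : ℕ} (h1 : v ≠ m + 1) (h2 : v ≠ i) (h3 : ¬ (p v = i ∧ bt p v ≤ t)) :
    ins m p i t v = p v := by
  simp only [ins, if_neg h1, if_neg h2, if_neg h3]

lemma isT (h : Good m p i t) : IsT (ins m p i t) := by
  have hi := h.i1
  have key : ∀ k v, v ≠ m + 1 → p^[k] v = 0 → Rc (ins m p i t) v 0 := by
    intro k
    induction k using Nat.strong_induction_on with
    | _ k ih =>
      intro v hv hk
      rcases Nat.eq_zero_or_pos v with rfl | hv0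
      · exact Rc.refl _ _
      cases k with
      | zero => simp at hk; omega
      | succ k =>
        rw [iterate_succ_apply] at hk
        have hne : ∀ v, p v ≠ m + 1 := fun v => by have := h.p_le v; omega
        by_cases h1 : v = i
        · subst h1
          apply Rc.step; rw [h.insi]; apply Rc.step; rw [h.insN]
          exact ih k (by omega) _ (hne _) hk
        · by_cases h2 : p v = i ∧ bt p v ≤ t
          · apply Rc.step; rw [h.ins_mv h2.1 h2.2]; apply Rc.step; rw [h.insN]
            rw [h2.1] at hk
            cases k with
            | zero => simp at hk; omega
            | succ k =>
              rw [iterate_succ_apply] at hk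
              exact ih k (by omega) _ (hne _) hk
          · apply Rc.step; rw [h.ins_else hv h1 h2]
            exact ih k (by omega) _ (hne _) hk
  refine ⟨?_, fun v => ?_⟩
  · have h0 := h.mem.1.1
    rw [h.ins_else (by omega) (by omega) (by omega), h0]
  · by_cases hv : v = m + 1
    · subst hv
      apply Rc.step; rw [h.insN]
      obtain ⟨k, hk⟩ := h.mem.1.2 (p i)
      exact key k _ (by have := h.p_le i; omega) hk
    · obtain ⟨k, hk⟩ := h.mem.1.2 v
      exact key k v hv hk

lemma mem' (h : Good m p i t) : ins m p i t ∈ Tr (m + 1) := by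
  refine ⟨h.isT, fun v => ⟨?_, fun hv => ?_⟩⟩
  · have := h.p_le i
    have := h.p_le v
    unfold ins; split_ifs <;> omega
  · have h1 := h.im
    have h2 := h.i1
    have h3 := (h.mem.2 v).2 (by omega)
    rw [h.ins_else (by omega) (by omega) (by omega), h3]

lemma low (h : Good m p i t) (a : ℕ) : (if a = i then (if t = 0 then bt p i else t + 1) else if a = m + 1 then bt p i else bt p a)
    ≤ bt (ins m p i t) a := by
  have hi := h.i1
  have him := h.im
  have htl := h.t_lt
  have hbi := bt_le p i
  have hbt := h.bt_i_le
  apply le_bt (h := fun a => (if a = i then (if t = 0 then bt p i else t + 1) else if a = m + 1 then bt p i else bt p a))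
  · intro v
    have := bt_le p v
    beta_reduce
    split_ifs <;> omega
  · intro v
    beta_reduce
    by_cases h1 : v = m + 1
    · subst h1
      rw [h.insN, if_neg h.pi_ne, if_neg (by have := h.p_le i; omega), if_neg (by omega), if_pos rfl]
      exact bt_mono p i
    · by_cases h2 : v = i
      · subst h2
        rw [h.insi, if_neg (by omega), if_pos rfl, if_pos rfl]
        split_ifs <;> omega
      · rw [if_neg h2, if_neg h1]
        by_cases h3 : p v = i ∧ bt p v ≤ t
        · rw [h.ins_mv h3.1 h3.2, if_neg (by omega), if_pos rfl, ← h3.1]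
          exact bt_mono p v
        · rw [h.ins_else h1 h2 h3]
          have := bt_mono p v
          by_cases h4 : p v = i
          · rw [if_pos h4]
            rw [h4] at this
            split_ifs
            · exact this
            · simp [h4] at h3; omega
          · rw [if_neg h4, if_neg (by have := h.p_le v; omega)]
            exact this

lemma path (h : Good m p i t) (a : ℕ) (ha : a ≠ m + 1) :
    Rc (ins m p i t) (bt p a) (if a = i then m + 1 else a) := by
  have hi := h.i1
  have him := h.im
  have := bt_path (p := p) (q := ins m p i t) (fun a => if a = i then m + 1 else a) ?_ a
  · beta_reduce at this
    by_cases hb : bt p a = i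
    · rw [if_pos hb] at this
      apply Rc.trans _ this
      rw [hb]
      have := Rc.one (ins m p i t) i
      rwa [h.insi] at this
    · rwa [if_neg hb] at this
  · intro v hv
    beta_reduce
    have h1 : v ≠ m + 1 := by
      rintro rfl
      rw [h.pN, h.mem.1.bt_zero] at hv
      have := h.mem.1.bt_pos (v := m + 1) (by omega)
      omega
    by_cases h2 : v = i
    · subst h2
      rw [if_pos rfl, if_neg h.pi_ne, ← h.insN (p := p) (t := t)]
      exact Rc.one _ _
    · rw [if_neg h2]
      by_cases h3 : p v = i
      · rw [if_pos h3]
        by_cases h4 : bt p v ≤ t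
        · rw [← h.ins_mv h3 h4]; exact Rc.one _ _
        · apply Rc.step
          rw [h.ins_else h1 h2 (by tauto), h3]
          rw [← h.insi]
          exact Rc.one _ _
      · rw [if_neg h3]
        rw [← h.ins_else h1 h2 (by tauto)]
        exact Rc.one _ _

lemma bt_else (h : Good m p i t) {a : ℕ} (h1 : a ≠ m + 1) (h2 : a ≠ i) : bt (ins m p i t) a = bt p a := by
  apply le_antisymm
  · obtain ⟨k, hk⟩ := h.path a h1
    rw [if_neg h2] at hk
    exact bt_le_of _ hk
  · have := h.low a
    rwa [if_neg h2, if_neg h1] at this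

lemma bt_N (h : Good m p i t) : bt (ins m p i t) (m + 1) = bt p i := by
  have him := h.im
  apply le_antisymm
  · obtain ⟨k, hk⟩ := h.path i (by omega)
    rw [if_pos rfl] at hk
    exact bt_le_of _ hk
  · have := h.low (m + 1)
    rwa [if_neg (by omega), if_pos rfl] at this

lemma bt_i_gt (h : Good m p i t) : t < bt (ins m p i t) i := by
  have := h.low i
  rw [if_pos rfl] at this
  have := h.mem.1.bt_pos (v := i) (by have := h.i1; omega)
  split_ifs at * <;> omega

/-- `t = 0` : no change at `i` -/
lemma bt_i_zero (h : Good m p i t) (ht : t = 0) : bt (ins m p i t) i = bt p i := by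
  have hi := h.i1
  have him := h.im
  have hlow := h.low i
  rw [if_pos rfl, if_pos ht] at hlow
  refine le_antisymm ?_ hlow
  by_cases hb : bt p i = i
  · rw [hb]; exact bt_le _ _
  · obtain ⟨c, hc0, hc, hcb⟩ := h.mem.1.exists_child hb
    have hcm := Tr.le_of_p_ne h.mem (c := c) (by omega)
    have hci : c ≠ i := by rintro rfl; exact h.pi_ne hc
    have := h.mem.1.bt_pos hc0
    rw [← hcb, ← h.bt_else (a := c) (by omega) hci]
    have h4 := bt_mono (ins m p i t) c
    rw [h.ins_else (by omega) hci (by omega), hc] at h4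
    exact h4

/-- `t ≠ 0` : `i` is proper afterwards iff there is no kept improper child -/
lemma bt_i_iff (h : Good m p i t) : bt (ins m p i t) i ≠ i ↔ ∃ c, c ≠ 0 ∧ p c = i ∧ t < bt p c ∧ bt p c < i := by
  have hi := h.i1
  have him := h.im
  constructor
  · intro hb
    obtain ⟨c, hc0, hc, hcb⟩ := h.isT.exists_child hb
    have hlt := h.isT.imp_of_eq hc0 (by rw [hcb, hc])
    rw [hc] at hlt
    have hcN : c ≠ m + 1 := by
      rintro rfl; rw [h.insN] at hc; exact h.pi_ne hc
    have hci : c ≠ i := by rintro rfl; exact h.isT.p_ne hc0 hc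
    by_cases hm : p c = i ∧ bt p c ≤ t
    · rw [h.ins_mv hm.1 hm.2] at hc; omega
    · rw [h.ins_else hcN hci hm] at hc
      rw [h.bt_else hcN hci] at hlt
      refine ⟨c, hc0, hc, by simp [hc] at hm; exact hm, hlt⟩
  · rintro ⟨c, hc0, hc, h1, h2⟩
    have hcm := Tr.le_of_p_ne h.mem (c := c) (by omega)
    have hci : c ≠ i := by rintro rfl; exact h.pi_ne hc
    have h4 := bt_mono (ins m p i t) c
    rw [h.ins_else (by omega) hci (by omega), hc, h.bt_else (by omega) hci] at h4
    omega

/-- characterization of the children of `N` -/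
lemma child_le (h : Good m p i t) {c : ℕ} (hc : ins m p i t c = m + 1) (hci : c ≠ i) :
    p c = i ∧ bt p c ≤ t ∧ bt (ins m p i t) c ≤ t := by
  have hcN : c ≠ m + 1 := by
    rintro rfl; rw [h.insN] at hc; have := h.p_le i; omega
  by_cases hm : p c = i ∧ bt p c ≤ t
  · refine ⟨hm.1, hm.2, ?_⟩
    rw [h.bt_else hcN hci]; exact hm.2
  · rw [h.ins_else hcN hci hm] at hc; have := h.p_le c; omega

lemma con_ins (h : Good m p i t) : con m (ins m p i t) i = p := by
  have hi := h.i1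
  have him := h.im
  funext v
  unfold con
  by_cases h1 : v = m + 1
  · rw [if_pos h1, h1, h.pN]
  · rw [if_neg h1]
    by_cases h2 : v = i
    · rw [if_pos h2, h.insN, h2]
    · rw [if_neg h2]
      by_cases h3 : p v = i ∧ bt p v ≤ t
      · rw [if_pos (h.ins_mv h3.1 h3.2), h3.1]
      · rw [h.ins_else h1 h2 h3, if_neg (by have := h.p_le v; omega)]

/-- statistics -/
lemma card_rch (h : Good m p i t) : (rch (m + 1) (ins m p i t)).card = (rch m p).card := by
  have hi := h.i1
  have him := h.im
  have key : ∀ v, v ≠ m + 1 → v ≠ i → (ins m p i t v = 0 ↔ p v = 0) := by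
    intro v h1 h2
    by_cases h3 : p v = i ∧ bt p v ≤ t
    · rw [h.ins_mv h3.1 h3.2]; omega
    · rw [h.ins_else h1 h2 h3]
  by_cases h0 : p i = 0
  · have e1 : rch (m + 1) (ins m p i t) = insert (m + 1) ((rch m p).erase i) := by
      ext v
      rw [mem_rch, Finset.mem_insert, Finset.mem_erase, mem_rch]
      by_cases h1 : v = m + 1
      · subst h1; rw [h.insN]; omega
      · by_cases h2 : v = i
        · subst h2; rw [h.insi]; omega
        · rw [key v h1 h2]; omega
    rw [e1, Finset.card_insert_of_notMem, Finset.card_erase_add_one]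
    · rw [mem_rch]; omega
    · rw [Finset.mem_erase, mem_rch]; omega
  · congr 1
    ext v
    rw [mem_rch, mem_rch]
    by_cases h1 : v = m + 1
    · subst h1; rw [h.insN]; omega
    · by_cases h2 : v = i
      · subst h2; rw [h.insi]; omega
      · rw [key v h1 h2]; omega

lemma card_imp (h : Good m p i t) : (imp (m + 1) (ins m p i t)).card = (imp m p).card + 1 := by
  have hi := h.i1
  have him := h.im
  have hbi := bt_le (ins m p i t) i
  have key : ∀ v, v ≠ m + 1 → v ≠ i →
      (bt (ins m p i t) v < ins m p i t v ↔ bt p v < p v) := by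
    intro v h1 h2
    rw [h.bt_else h1 h2]
    by_cases h3 : p v = i ∧ bt p v ≤ t
    · rw [h.ins_mv h3.1 h3.2]; have := h.t_lt; omega
    · rw [h.ins_else h1 h2 h3]
  by_cases h0 : bt p i < p i
  · have e1 : imp (m + 1) (ins m p i t) = insert (m + 1) (imp m p) := by
      ext v
      rw [mem_imp, Finset.mem_insert, mem_imp]
      by_cases h1 : v = m + 1
      · subst h1; rw [h.insN, h.bt_N]; omega
      · by_cases h2 : v = i
        · subst h2; rw [h.insi]; omega
        · rw [key v h1 h2]; omega
    rw [e1, Finset.card_insert_of_notMem]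
    rw [mem_imp]; omega
  · have e1 : imp (m + 1) (ins m p i t) = insert i (imp m p) := by
      ext v
      rw [mem_imp, Finset.mem_insert, mem_imp]
      by_cases h1 : v = m + 1
      · subst h1; rw [h.insN, h.bt_N]; omega
      · by_cases h2 : v = i
        · subst h2; rw [h.insi]; omega
        · rw [key v h1 h2]; omega
    rw [e1, Finset.card_insert_of_notMem]
    rw [mem_imp]; omega

lemma card_ipp_zero (h : Good m p i t) (ht : t = 0) : (ipp (m + 1) (ins m p i t)).card = (ipp m p).card + 1 := by
  have hi := h.i1
  have him := h.im
  have e1 : ipp (m + 1) (ins m p i t) = insert (m + 1) (ipp m p) := by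
    ext v
    rw [mem_ipp, Finset.mem_insert, mem_ipp]
    by_cases h1 : v = m + 1
    · subst h1; rw [h.bt_N]; have := bt_le p i; omega
    · by_cases h2 : v = i
      · subst h2; rw [h.bt_i_zero ht]; omega
      · rw [h.bt_else h1 h2]; omega
  rw [e1, Finset.card_insert_of_notMem]
  rw [mem_ipp]; omega

lemma card_ipp_pos (h : Good m p i t) (ht : t ≠ 0) : (ipp (m + 1) (ins m p i t)).card =
    (ipp m p).card + (if bt (ins m p i t) i ≠ i then 1 else 0) := by
  have hi := h.i1
  have him := h.im
  have hbp := h.bt_i_le ht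
  have htl := h.t_lt
  split_ifs with hb
  · have e1 : ipp (m + 1) (ins m p i t) = insert (m + 1) (ipp m p) := by
      ext v
      rw [mem_ipp, Finset.mem_insert, mem_ipp]
      by_cases h1 : v = m + 1
      · subst h1; rw [h.bt_N]; have := bt_le p i; omega
      · by_cases h2 : v = i
        · subst h2; omega
        · rw [h.bt_else h1 h2]; omega
    rw [e1, Finset.card_insert_of_notMem]
    rw [mem_ipp]; omega
  · have e1 : ipp (m + 1) (ins m p i t) = insert (m + 1) ((ipp m p).erase i) := by
      ext v
      rw [mem_ipp, Finset.mem_insert, Finset.mem_erase, mem_ipp]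
      by_cases h1 : v = m + 1
      · subst h1; rw [h.bt_N]; have := bt_le p i; omega
      · by_cases h2 : v = i
        · subst h2; omega
        · rw [h.bt_else h1 h2]; omega
    rw [e1, Finset.card_insert_of_notMem, Finset.card_erase_add_one]
    · omega
    · rw [mem_ipp]; omega
    · rw [Finset.mem_erase, mem_ipp]; omega

end Good

/-- injectivity -/
lemma ins_inj {m : ℕ} {p p' : ℕ → ℕ} {i t i' t' : ℕ} (h : Good m p i t) (h' : Good m p' i' t')
    (he : ins m p i t = ins m p' i' t') : p = p' ∧ i = i' ∧ t = t' := by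
  have hi : i = i' := by
    by_contra hne
    have h1 := h'.insi; rw [← he] at h1
    have h2 := (h.child_le h1 (Ne.symm hne)).2.2
    have h3 := h'.bt_i_gt; rw [← he] at h3
    have h4 := h.insi; rw [he] at h4
    have h5 := (h'.child_le h4 hne).2.2
    have h6 := h.bt_i_gt; rw [he] at h6
    rw [he] at h2; rw [he] at h3
    omega
  subst hi
  have hpp : p = p' := by rw [← h.con_ins, he, h'.con_ins]
  subst hpp
  have key : ∀ t t', Good m p i t → Good m p i t' → ins m p i t = ins m p i t' → t ≤ t' := by
    intro t t' h h' he
    rcases h.ht with h1 | ⟨j, hj0, hj, hjt, htj⟩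
    · omega
    · have h2 := h.ins_mv hj hjt.le
      rw [he] at h2
      have := (h'.child_le h2 (by rintro rfl; exact h.pi_ne hj)).2.1
      omega
  exact ⟨rfl, rfl, le_antisymm (key _ _ h h' he) (key _ _ h' h he.symm)⟩

/-- surjectivity -/
lemma ins_surj {m : ℕ} {q : ℕ → ℕ} (hq : q ∈ Tr (m + 1)) (hc : ∃ c, q c = m + 1) :
    ∃ p i t, Good m p i t ∧ ins m p i t = q := by
  classical
  obtain ⟨c0, hc0⟩ := hc
  have hle : ∀ c, q c = m + 1 → 1 ≤ c ∧ c ≤ m := by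
    intro c h
    have h1 : c ≠ 0 := by rintro rfl; rw [hq.1.1] at h; omega
    have h2 : c ≠ m + 1 := by rintro rfl; exact hq.1.p_ne h1 h
    have h3 := Tr.le_of_p_ne hq (c := c) (by omega)
    omega
  set S := (Finset.Icc 1 m).filter (fun c => q c = m + 1) with hS
  have hSm : ∀ c, c ∈ S ↔ q c = m + 1 := by
    intro c; rw [hS, Finset.mem_filter, Finset.mem_Icc]
    exact ⟨fun h => h.2, fun h => ⟨hle c h, h⟩⟩
  obtain ⟨i, hiS, himax⟩ := Finset.exists_max_image S (bt q) ⟨c0, (hSm _).2 hc0⟩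
  rw [hSm] at hiS
  obtain ⟨hi, him⟩ := hle i hiS
  have hlt : ∀ c, q c = m + 1 → c ≠ i → bt q c < bt q i := by
    intro c hcq hne
    refine lt_of_le_of_ne (himax c ((hSm c).2 hcq)) ?_
    intro hb
    exact hne (hq.1.sib_inj (by have := hle c hcq; omega) (by omega) (by rw [hcq, hiS]) hb)
  have hpN : con m q i (m + 1) = 0 := by simp [con]
  have hpi : con m q i i = q (m + 1) := by
    rw [con, if_neg (by omega), if_pos rfl]
  have hpc : ∀ c, q c = m + 1 → c ≠ i → con m q i c = i := by
    intro c h1 h2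
    have := hle c h1
    rw [con, if_neg (by omega), if_neg h2, if_pos h1]
  have hpe : ∀ c, c ≠ m + 1 → q c ≠ m + 1 → con m q i c = q c := by
    intro c h1 h2
    rw [con, if_neg h1, if_neg (by rintro rfl; exact h2 hiS), if_neg h2]
  have hqN : q (m + 1) ≠ m + 1 := hq.1.p_ne (by omega)
  have hqNi : q (m + 1) ≠ i := by
    intro h
    have : i = 0 := hq.1.no_cycle (j := 1) (by simp [hiS, h])
    omega
  -- reach
  have key : ∀ k v, q^[k] v = 0 → Rc (con m q i) v 0 := by
    intro k
    induction k using Nat.strong_induction_on with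
    | _ k ih =>
      intro v hk
      by_cases h1 : v = m + 1
      · subst h1; apply Rc.step; rw [hpN]; exact Rc.refl _ _
      cases k with
      | zero => simp at hk; rw [hk]; exact Rc.refl _ _
      | succ k =>
        rw [iterate_succ_apply] at hk
        by_cases h2 : q v = m + 1
        · rw [h2] at hk
          cases k with
          | zero => simp at hk
          | succ k =>
            rw [iterate_succ_apply] at hk
            have := ih k (by omega) _ hk
            by_cases h3 : v = i
            · apply Rc.step; rw [h3, hpi]; exact this
            · apply Rc.step; rw [hpc v h2 h3]; apply Rc.step; rw [hpi]; exact this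
        · apply Rc.step; rw [hpe v h1 h2]
          exact ih k (by omega) _ hk
  have hz : con m q i 0 = 0 := by
    rw [hpe 0 (by omega) (by rw [hq.1.1]; omega), hq.1.1]
  have hpT : IsT (con m q i) := ⟨hz, fun v => by
    obtain ⟨k, hk⟩ := hq.1.2 v
    exact key k v hk⟩
  have hqle : ∀ v, q v ≠ m + 1 → q v ≤ m := by
    intro v hv
    have := (hq.2 v).1; omega
  have hpTr : con m q i ∈ Tr m := by
    refine ⟨hpT, fun v => ⟨?_, fun hv => ?_⟩⟩
    · by_cases h1 : v = m + 1
      · rw [h1, hpN]; omega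
      by_cases h2 : q v = m + 1
      · by_cases h3 : v = i
        · rw [h3, hpi]; exact hqle _ hqN
        · rw [hpc v h2 h3]; exact him
      · rw [hpe v h1 h2]; exact hqle _ h2
    · by_cases h1 : v = m + 1
      · rw [h1, hpN]
      · have := (hq.2 v).2 (by omega)
        rw [hpe v h1 (by omega), this]
  -- bt
  have hbt : bt (con m q i) = fun v => if v = m + 1 then m + 1 else if v = i then bt q (m + 1)
      else bt q v := by
    have hbN : bt q (m + 1) ≤ bt q i := by have := bt_mono q i; rwa [hiS] at this
    apply bt_eq_of
    · intro v
      have := bt_le q v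
      have := bt_le q i
      split_ifs with h1 h2
      · omega
      · subst h2; omega
      · omega
    · intro v
      by_cases h1 : v = m + 1
      · subst h1; rw [hpN, if_neg (by omega), if_neg (by omega), hq.1.bt_zero]; omega
      · rw [if_neg h1]
        by_cases h2 : q v = m + 1
        · have h4 := bt_mono q v
          rw [h2] at h4
          by_cases h3 : v = i
          · subst h3
            rw [hpi, if_neg hqN, if_neg hqNi, if_pos rfl]
            exact bt_mono q _
          · rw [hpc v h2 h3, if_neg (by omega), if_pos rfl, if_neg h3]; exact h4
        · have h3 : v ≠ i := by rintro rfl; exact h2 hiS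
          rw [hpe v h1 h2, if_neg h2, if_neg h3]
          split_ifs with h4
          · have := bt_mono q v
            rw [h4] at this
            omega
          · exact bt_mono q v
    · have hstep := bt_path (p := q) (q := con m q i) (fun v => if v = m + 1 then i else v) (by
        intro v hv
        beta_reduce
        by_cases h1 : v = m + 1
        · subst h1
          rw [if_pos rfl, if_neg hqN, ← hpi]; exact Rc.one _ _
        · rw [if_neg h1]
          by_cases h2 : q v = m + 1
          · rw [if_pos h2]
            by_cases h3 : v = i
            · rw [h3]; exact Rc.refl _ _
            · have h5 := Rc.one (con m q i) v; rwa [hpc v h2 h3] at h5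
          · rw [if_neg h2, ← hpe v h1 h2]; exact Rc.one _ _)
      have hbne : ∀ a, a ≠ m + 1 → bt q a ≠ m + 1 := by
        intro a ha hb
        have h1 := bt_le q a
        have h2 := Tr.bt_big hq (v := a)
        rcases Nat.lt_or_ge (m + 1) a with h3 | h3
        · have := h2 h3; omega
        · omega
      have hbN' : bt q (m + 1) ≠ m + 1 := by have := bt_le q i; omega
      intro a
      split_ifs with h1 h2
      · subst h1; exact Rc.refl _ _
      · subst h2
        have := hstep (m + 1)
        rwa [if_neg hbN', if_pos rfl] at this
      · have := hstep a
        rwa [if_neg (hbne a h1), if_neg h1] at this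
  have hbc : ∀ v, v ≠ m + 1 → v ≠ i → bt (con m q i) v = bt q v := by
    intro v h1 h2
    rw [hbt]; simp [h1, h2]
  set t := (S.erase i).sup (bt q) with ht
  have htc : ∀ c, q c = m + 1 → c ≠ i → bt q c ≤ t := by
    intro c h1 h2
    exact Finset.le_sup (f := bt q) (Finset.mem_erase.2 ⟨h2, (hSm c).2 h1⟩)
  have htl : t < bt q i := by
    rw [ht, Finset.sup_lt_iff (by exact hq.1.bt_pos (by omega))]
    intro c hc
    rw [Finset.mem_erase, hSm] at hc
    exact hlt c hc.2 hc.1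
  have hgood : Good m (con m q i) i t := by
    refine ⟨hpTr, hi, him, ?_⟩
    rcases (S.erase i).eq_empty_or_nonempty with h1 | h1
    · left; rw [ht, h1]; simp
    · right
      obtain ⟨j, hj, hjt⟩ := Finset.exists_mem_eq_sup _ h1 (bt q)
      rw [Finset.mem_erase, hSm] at hj
      have := hle j hj.2
      refine ⟨j, by omega, hpc j hj.2 hj.1, ?_, ?_⟩
      · rw [hbc j (by omega) hj.1, ← hjt]
      · have := bt_le q i; omega
  refine ⟨_, i, t, hgood, ?_⟩
  funext v
  by_cases h1 : v = m + 1
  · subst h1; rw [hgood.insN, hpi]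
  · by_cases h2 : v = i
    · subst h2; rw [hgood.insi, hiS]
    · by_cases h3 : q v = m + 1
      · rw [hgood.ins_mv (hpc v h3 h2) (by rw [hbc v h1 h2]; exact htc v h3 h2), h3]
      · rw [hgood.ins_else h1 h2, hpe v h1 h3]
        rw [hpe v h1 h3, hbc v h1 h2]
        rintro ⟨h4, h5⟩
        have := bt_mono q v
        rw [h4] at this
        omega

end RT

namespace RT

abbrev Pol := MvPolynomial (Fin 4) ℚ

/-- weight of a tree : variables `x, a, b, z` -/
def W (m : ℕ) (p : ℕ → ℕ) : Pol :=
  X 0 ^ (rch m p).card * X 1 ^ (ipp m p).card * X 2 ^ ((imp m p).card - (ipp m p).card)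
    * X 3 ^ (m - (imp m p).card - (rch m p).card)

def K (m : ℕ) : Pol := ∑ p ∈ TrF m, W m p

section leaf
variable {m : ℕ} {p : ℕ → ℕ} {v : ℕ}

lemma upd_bt (hp : p ∈ Tr m) (hv : v ≤ m) : bt (update p (m + 1) v) = bt p := by
  have hN : bt p (m + 1) = m + 1 := Tr.bt_big hp (by omega)
  apply bt_eq_of (bt_le p)
  · intro w
    by_cases hw : w = m + 1
    · subst hw; rw [update_self, hN]; have := bt_le p v; omega
    · rw [update_of_ne hw]; exact bt_mono p w
  · apply bt_path (fun a => a)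
    intro w h
    have hw : w ≠ m + 1 := by
      rintro rfl
      rw [(hp.2 (m + 1)).2 (by omega), hN, hp.1.bt_zero] at h
      omega
    have := Rc.one (update p (m + 1) v) w
    rwa [update_of_ne hw] at this

lemma upd_mem (hp : p ∈ Tr m) (hv : v ≤ m) : update p (m + 1) v ∈ Tr (m + 1) := by
  have key : ∀ k w, w ≠ m + 1 → (update p (m + 1) v)^[k] w = p^[k] w := by
    intro k
    induction k with
    | zero => intro w _; rfl
    | succ k ih =>
      intro w hw
      rw [iterate_succ_apply, iterate_succ_apply, update_of_ne hw, ih]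
      have := (hp.2 w).1; omega
  refine ⟨⟨?_, fun w => ?_⟩, fun w => ⟨?_, fun hw => ?_⟩⟩
  · rw [update_of_ne (by omega), hp.1.1]
  · by_cases hw : w = m + 1
    · subst hw
      obtain ⟨k, hk⟩ := hp.1.2 v
      refine ⟨k + 1, ?_⟩
      rw [iterate_succ_apply, update_self, key k v (by omega), hk]
    · obtain ⟨k, hk⟩ := hp.1.2 w
      exact ⟨k, by rw [key k w hw, hk]⟩
  · by_cases hw : w = m + 1
    · subst hw; rw [update_self]; omega
    · rw [update_of_ne hw]; have := (hp.2 w).1; omega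
  · rw [update_of_ne (by omega)]; exact (hp.2 w).2 (by omega)

lemma upd_W (hp : p ∈ Tr m) (hv : v ≤ m) : W (m + 1) (update p (m + 1) v) = (if v = 0 then X 0 else X 3) * W m p := by
  have hN : bt p (m + 1) = m + 1 := Tr.bt_big hp (by omega)
  have h1 : imp (m + 1) (update p (m + 1) v) = imp m p := by
    ext w
    rw [mem_imp, mem_imp, upd_bt hp hv]
    by_cases hw : w = m + 1
    · subst hw; rw [update_self]; omega
    · rw [update_of_ne hw]; omega
  have h2 : ipp (m + 1) (update p (m + 1) v) = ipp m p := by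
    ext w
    rw [mem_ipp, mem_ipp, upd_bt hp hv]
    by_cases hw : w = m + 1
    · subst hw; omega
    · omega
  have h5 := Tr.imp_add_rch hp
  by_cases h0 : v = 0
  · have h3 : rch (m + 1) (update p (m + 1) v) = insert (m + 1) (rch m p) := by
      ext w
      rw [mem_rch, Finset.mem_insert, mem_rch]
      by_cases hw : w = m + 1
      · subst hw; rw [update_self]; omega
      · rw [update_of_ne hw]; omega
    have h4 : (rch (m + 1) (update p (m + 1) v)).card = (rch m p).card + 1 := by
      rw [h3, Finset.card_insert_of_notMem]; rw [mem_rch]; omega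
    rw [W, W, h1, h2, h4, if_pos h0]
    rw [show m + 1 - (imp m p).card - ((rch m p).card + 1) = m - (imp m p).card - (rch m p).card by omega]
    ring
  · have h3 : rch (m + 1) (update p (m + 1) v) = rch m p := by
      ext w
      rw [mem_rch, mem_rch]
      by_cases hw : w = m + 1
      · subst hw; rw [update_self]; omega
      · rw [update_of_ne hw]; omega
    rw [W, W, h1, h2, h3, if_neg h0]
    rw [show m + 1 - (imp m p).card - (rch m p).card = m - (imp m p).card - (rch m p).card + 1 by omega]
    ring

end leaf

open scoped Classical in
lemma sum_leaf (m : ℕ) :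
    ∑ q ∈ (TrF (m + 1)).filter (fun q => ¬ ∃ c, q c = m + 1), W (m + 1) q
      = ∑ p ∈ TrF m, (X 0 + (m : Pol) * X 3) * W m p := by
  have e : ∀ p ∈ TrF m, (X 0 + (m : Pol) * X 3) * W m p
      = ∑ v ∈ Finset.range (m + 1), (if v = 0 then X 0 else X 3) * W m p := by
    intro p _
    rw [← Finset.sum_mul, Finset.sum_range_succ']
    simp [add_comm]
  rw [Finset.sum_congr rfl e, Finset.sum_sigma']
  symm
  apply Finset.sum_bij (fun x _ => update x.1 (m + 1) x.2)
  · rintro ⟨p, v⟩ h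
    simp only [Finset.mem_sigma, mem_TrF, Finset.mem_range] at h
    replace h : p ∈ Tr m ∧ v ≤ m := ⟨h.1, by omega⟩
    rw [Finset.mem_filter, mem_TrF]
    refine ⟨upd_mem h.1 h.2, ?_⟩
    rintro ⟨c, hc⟩
    by_cases hw : c = m + 1
    · subst hw; dsimp only at hc; rw [update_self] at hc; omega
    · dsimp only at hc; rw [update_of_ne hw] at hc; have := (h.1.2 c).1; omega
  · rintro ⟨p, v⟩ h ⟨p', v'⟩ h' he
    simp only [Finset.mem_sigma, mem_TrF, Finset.mem_range] at h h' he
    have h1 : v = v' := by simpa using congrFun he (m + 1)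
    have h2 : p = p' := by
      funext c
      by_cases hw : c = m + 1
      · subst hw; rw [(h.1.2 _).2 (by omega), (h'.1.2 _).2 (by omega)]
      · simpa [update_of_ne hw] using congrFun he c
    rw [h1, h2]
  · intro q hq
    rw [Finset.mem_filter, mem_TrF] at hq
    obtain ⟨hq, hc⟩ := hq
    push Not at hc
    have hle : ∀ c, q c ≤ m := by
      intro c; have := hc c; have := (hq.2 c).1; omega
    have key : ∀ k w, w ≠ m + 1 → (update q (m + 1) 0)^[k] w = q^[k] w := by
      intro k
      induction k with
      | zero => intro w _; rfl
      | succ k ih =>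
        intro w hw
        rw [iterate_succ_apply, iterate_succ_apply, update_of_ne hw, ih _ (hc w)]
    refine ⟨⟨update q (m + 1) 0, q (m + 1)⟩, ?_, ?_⟩
    · simp only [Finset.mem_sigma, mem_TrF, Finset.mem_range]
      refine ⟨⟨⟨?_, fun w => ?_⟩, fun w => ⟨?_, fun hw => ?_⟩⟩, by have := hle (m + 1); omega⟩
      · rw [update_of_ne (by omega), hq.1.1]
      · by_cases hw : w = m + 1
        · exact ⟨1, by simp [hw]⟩
        · obtain ⟨k, hk⟩ := hq.1.2 w
          exact ⟨k, by rw [key k w hw, hk]⟩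
      · by_cases hw : w = m + 1
        · simp [hw]
        · rw [update_of_ne hw]; exact hle w
      · by_cases hw : w = m + 1
        · simp [hw]
        · rw [update_of_ne hw]; exact (hq.2 w).2 (by omega)
    · simp
  · rintro ⟨p, v⟩ h
    simp only [Finset.mem_sigma, mem_TrF, Finset.mem_range] at h
    exact (upd_W h.1 (Nat.lt_succ_iff.1 h.2)).symm

def DD (m : ℕ) (p : ℕ → ℕ) : Finset (ℕ × ℕ) :=
  (Finset.Icc 1 m).image (fun i => (i, 0)) ∪ (imp m p).image (fun j => (p j, bt p j))

lemma mem_DD {m : ℕ} {p : ℕ → ℕ} (hp : p ∈ Tr m) (x : ℕ × ℕ) :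
    x ∈ DD m p ↔ Good m p x.1 x.2 := by
  obtain ⟨i, t⟩ := x
  simp only [DD, Finset.mem_union, Finset.mem_image, Finset.mem_Icc, Prod.mk.injEq, mem_imp]
  constructor
  · rintro (⟨i', h, rfl, rfl⟩ | ⟨j, h, rfl, rfl⟩)
    · exact ⟨hp, h.1, h.2, Or.inl rfl⟩
    · exact ⟨hp, by omega, (hp.2 j).1, Or.inr ⟨j, by omega, rfl, rfl, h.2⟩⟩
  · intro h
    rcases h.ht with h1 | ⟨j, h1, h2, h3, h4⟩
    · left; exact ⟨i, ⟨h.i1, h.im⟩, rfl, h1.symm⟩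
    · right
      have := h.i1
      have := Tr.le_of_p_ne hp (c := j) (by omega)
      exact ⟨j, ⟨⟨by omega, this⟩, by omega⟩, h2, h3⟩

lemma sum_DD {m : ℕ} {p : ℕ → ℕ} (hp : p ∈ Tr m) (f : ℕ × ℕ → Pol) :
    ∑ x ∈ DD m p, f x = ∑ i ∈ Finset.Icc 1 m, f (i, 0) + ∑ j ∈ imp m p, f (p j, bt p j) := by
  rw [DD, Finset.sum_union, Finset.sum_image, Finset.sum_image]
  · intro c hc d hd h
    simp only [Finset.mem_coe, mem_imp, Prod.mk.injEq] at hc hd h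
    exact hp.1.sib_inj (by omega) (by omega) h.1 h.2
  · intro c hc d hd h
    simpa using h
  · rw [Finset.disjoint_left]
    intro x h1 h2
    simp only [Finset.mem_image, mem_imp] at h1 h2
    obtain ⟨i, _, rfl⟩ := h1
    obtain ⟨j, hj, h⟩ := h2
    simp only [Prod.mk.injEq] at h
    have := hp.1.bt_pos (v := j) (by omega)
    omega

lemma W_ins {m : ℕ} {p : ℕ → ℕ} {i t : ℕ} (h : Good m p i t) :
    W (m + 1) (ins m p i t) = (if t = 0 ∨ bt (ins m p i t) i ≠ i then X 1 else X 2) * W m p := by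
  have h5 := Tr.imp_add_rch h.mem
  have h6 := Tr.ipp_le_imp h.mem
  rw [W, h.card_imp, h.card_rch, W]
  rw [show m + 1 - ((imp m p).card + 1) - (rch m p).card = m - (imp m p).card - (rch m p).card by omega]
  by_cases ht : t = 0
  · rw [h.card_ipp_zero ht, if_pos (Or.inl ht)]
    rw [Nat.add_sub_add_right]; ring
  · rw [h.card_ipp_pos ht]
    by_cases hb : bt (ins m p i t) i ≠ i
    · rw [if_pos hb, if_pos (Or.inr hb), Nat.add_sub_add_right]; ring
    · rw [if_neg hb, if_neg (by tauto), add_zero, Nat.sub_add_comm h6]; ring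

open scoped Classical in
lemma sum_int (m : ℕ) :
    ∑ q ∈ (TrF (m + 1)).filter (fun q => ∃ c, q c = m + 1), W (m + 1) q
      = ∑ p ∈ TrF m, ((m : Pol) * X 1 + (((imp m p).card - (ipp m p).card : ℕ) : Pol) * X 1
          + ((ipp m p).card : Pol) * X 2) * W m p := by
  have e : ∀ p ∈ TrF m, ((m : Pol) * X 1 + (((imp m p).card - (ipp m p).card : ℕ) : Pol) * X 1
          + ((ipp m p).card : Pol) * X 2) * W m p
      = ∑ x ∈ DD m p, W (m + 1) (ins m p x.1 x.2) := by
    intro p hp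
    rw [mem_TrF] at hp
    have e1 : ∑ x ∈ DD m p, W (m + 1) (ins m p x.1 x.2) = ∑ x ∈ DD m p,
        (if x.2 = 0 ∨ bt (ins m p x.1 x.2) x.1 ≠ x.1 then X 1 else X 2) * W m p := by
      apply Finset.sum_congr rfl
      intro x hx
      exact W_ins ((mem_DD hp x).1 hx)
    rw [e1, ← Finset.sum_mul, sum_DD hp]
    congr 1
    have e2 : ∀ j ∈ imp m p, (if bt p j = 0 ∨ bt (ins m p (p j) (bt p j)) (p j) ≠ p j
        then (X 1 : Pol) else X 2)
        = if (∀ d ∈ imp m p, p d = p j → bt p d ≤ bt p j) then X 2 else X 1 := by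
      intro j hj
      have hg : Good m p (p j) (bt p j) := (mem_DD hp (p j, bt p j)).1 (by
        rw [DD, Finset.mem_union]; right; exact Finset.mem_image_of_mem _ hj)
      rw [mem_imp] at hj
      have h0 := hp.1.bt_pos (v := j) (by omega)
      have hgi := hg.bt_i_iff
      by_cases h : ∀ d ∈ imp m p, p d = p j → bt p d ≤ bt p j
      · rw [if_pos h, if_neg]
        rintro (h1 | h1)
        · omega
        · obtain ⟨c, hc0, hc, h1, h2⟩ := hgi.1 h1
          have := h c (by
            rw [mem_imp]
            exact ⟨⟨by omega, Tr.le_of_p_ne hp (by omega)⟩, by omega⟩) hc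
          omega
      · rw [if_neg h, if_pos]
        push Not at h
        obtain ⟨d, hd, h1, h2⟩ := h
        rw [mem_imp] at hd
        exact Or.inr (hgi.2 ⟨d, by omega, h1, h2, by omega⟩)
    dsimp only
    rw [Finset.sum_congr rfl e2, Finset.sum_ite (s := imp m p), Finset.sum_const, Finset.sum_const,
      Tr.card_last hp]
    have e3 := Finset.card_filter_add_card_filter_not (s := imp m p)
      (fun c => ∀ d ∈ imp m p, p d = p c → bt p d ≤ bt p c)
    rw [Tr.card_last hp] at e3
    rw [show (imp m p).card - (ipp m p).card = ((imp m p).filter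
      (fun c => ¬ ∀ d ∈ imp m p, p d = p c → bt p d ≤ bt p c)).card by omega]
    simp only [true_or, if_true, Finset.sum_const, Nat.card_Icc, nsmul_eq_mul]
    simp only [Nat.add_sub_cancel]
    ring
  rw [Finset.sum_congr rfl e, Finset.sum_sigma']
  symm
  apply Finset.sum_bij (fun x _ => ins m x.1 x.2.1 x.2.2)
  · rintro ⟨p, x⟩ h
    simp only [Finset.mem_sigma, mem_TrF] at h
    have hg := (mem_DD h.1 x).1 h.2
    rw [Finset.mem_filter, mem_TrF]
    exact ⟨hg.mem', x.1, hg.insi⟩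
  · rintro ⟨p, x⟩ h ⟨p', x'⟩ h' he
    simp only [Finset.mem_sigma, mem_TrF] at h h' he
    obtain ⟨h1, h2, h3⟩ := ins_inj ((mem_DD h.1 x).1 h.2) ((mem_DD h'.1 x').1 h'.2) he
    subst h1
    rw [show x = x' from Prod.ext h2 h3]
  · intro q hq
    rw [Finset.mem_filter, mem_TrF] at hq
    obtain ⟨p, i, t, hg, he⟩ := ins_surj hq.1 hq.2
    refine ⟨⟨p, (i, t)⟩, ?_, he⟩
    simp only [Finset.mem_sigma, mem_TrF]
    exact ⟨hg.mem, (mem_DD hg.mem _).2 hg⟩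
  · intro x _; rfl

open scoped Classical in
lemma K_succ' (m : ℕ) : K (m + 1) = ∑ p ∈ TrF m, (X 0 + (m : Pol) * X 3 + (m : Pol) * X 1
    + (((imp m p).card - (ipp m p).card : ℕ) : Pol) * X 1
          + ((ipp m p).card : Pol) * X 2) * W m p := by
  rw [K, ← Finset.sum_filter_add_sum_filter_not _ (fun q : ℕ → ℕ => ∃ c, q c = m + 1), sum_int, sum_leaf,
    ← Finset.sum_add_distrib]
  apply Finset.sum_congr rfl
  intro p _
  ring

/-- the derivation `∂_a + ∂_b` -/
def DR : Derivation ℚ Pol Pol := pderiv 1 + pderiv 2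

lemma K_succ (m : ℕ) : K (m + 1) = (X 0 + (m : Pol) * (X 3 + X 1)) * K m + X 1 * X 2 * DR (K m) := by
  rw [K_succ', K, map_sum, Finset.mul_sum, Finset.mul_sum, ← Finset.sum_add_distrib]
  apply Finset.sum_congr rfl
  intro p _
  have e1 : ∀ (i j : Fin 4) (n : ℕ), i ≠ j → pderiv i ((X j : Pol) ^ n) = 0 := by
    intro i j n h
    rw [Derivation.leibniz_pow, pderiv_X_of_ne h.symm]; simp
  have e2 : ∀ (i : Fin 4) (n : ℕ), X i * pderiv i ((X i : Pol) ^ n) = (n : Pol) * X i ^ n := by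
    intro i n
    rw [Derivation.leibniz_pow, pderiv_X_self]
    cases n with
    | zero => simp
    | succ n => simp [pow_succ]; ring
  rw [W, DR, Derivation.add_apply]
  generalize (rch m p).card = d
  generalize (ipp m p).card = f
  generalize (imp m p).card - f = e
  generalize m - (imp m p).card - d = g
  simp only [Derivation.leibniz, smul_eq_mul]
  rw [e1 1 0 _ (by decide), e1 1 2 _ (by decide), e1 1 3 _ (by decide),
    e1 2 0 _ (by decide), e1 2 1 _ (by decide), e1 2 3 _ (by decide)]
  linear_combination -(X 2 * X 0 ^ d * X 2 ^ e * X 3 ^ g) * e2 1 f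
    - (X 1 * X 0 ^ d * X 1 ^ f * X 3 ^ g) * e2 2 e

/-- substitution `a ↔ b`, `z ↦ z + a - b` -/
def phi : Pol →ₐ[ℚ] Pol := aeval ![X 0, X 2, X 1, X 3 + X 1 - X 2]

lemma phi_DR (f : Pol) : phi (DR f) = DR (phi f) := by
  induction f using MvPolynomial.induction_on with
  | C a =>
    have h1 : ∀ a : ℚ, DR (C a : Pol) = 0 := fun a => by
      rw [DR, Derivation.add_apply, pderiv_C, pderiv_C, add_zero]
    rw [h1, map_zero, phi, aeval_C, algebraMap_eq, h1]
  | add p q hp hq => rw [map_add, map_add, map_add, map_add, hp, hq]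
  | mul_X p i hp =>
    have h2 : phi (DR (X i)) = DR (phi (X i)) := by
      have hd : ∀ i : Fin 4, DR (X i : Pol) = if i = 1 ∨ i = 2 then 1 else 0 := by
        intro i
        rw [DR, Derivation.add_apply]
        fin_cases i <;> simp [pderiv_X, Pi.single_apply]
      rw [hd]
      fin_cases i <;> simp [phi, hd]
    rw [Derivation.leibniz, smul_eq_mul, smul_eq_mul, map_add, map_mul, map_mul, map_mul,
      Derivation.leibniz, h2, hp, smul_eq_mul, smul_eq_mul]

lemma K_zero : K 0 = 1 := by
  have h : TrF 0 = {fun _ => 0} := by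
    ext p
    rw [mem_TrF, Finset.mem_singleton]
    constructor
    · intro h; funext v; exact Nat.le_zero.1 (h.2 v).1
    · rintro rfl
      exact ⟨⟨rfl, fun v => ⟨1, rfl⟩⟩, fun v => ⟨le_rfl, fun _ => rfl⟩⟩
  rw [K, h, Finset.sum_singleton, W]
  simp [rch, ipp, imp]

lemma phi_K (m : ℕ) : phi (K m) = K m := by
  induction m with
  | zero => rw [K_zero, map_one]
  | succ m ih =>
    rw [K_succ, map_add, map_mul, map_mul, map_mul, phi_DR, ih]
    have : phi (X 0 + (m : Pol) * (X 3 + X 1)) = X 0 + (m : Pol) * (X 3 + X 1) := by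
      rw [map_add, map_mul, map_add, map_natCast]
      simp [phi]
    rw [this]
    rw [show phi (X 1) = X 2 by simp [phi], show phi (X 2) = X 1 by simp [phi]]
    ring

end RT

namespace RT

open scoped Classical in
/-- functions with `F c ∈ t c` for `1 ≤ c ≤ m` and `0` elsewhere -/
def FF (m : ℕ) (t : ℕ → Finset ℕ) : Finset (ℕ → ℕ) :=
  ((Finset.Icc 1 m).pi t).image (fun F v => if h : v ∈ Finset.Icc 1 m then F v h else 0)

open scoped Classical in
lemma mem_FF {m : ℕ} {t : ℕ → Finset ℕ} {F : ℕ → ℕ} :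
    F ∈ FF m t ↔ (∀ c ∈ Finset.Icc 1 m, F c ∈ t c) ∧ ∀ c, c ∉ Finset.Icc 1 m → F c = 0 := by
  rw [FF, Finset.mem_image]
  constructor
  · rintro ⟨G, hG, rfl⟩
    rw [Finset.mem_pi] at hG
    refine ⟨fun c hc => ?_, fun c hc => ?_⟩
    · simp only [dif_pos hc]; exact hG c hc
    · simp only [dif_neg hc]
  · rintro ⟨h1, h2⟩
    refine ⟨fun c _ => F c, ?_, ?_⟩
    · rw [Finset.mem_pi]; exact h1
    · funext v
      split_ifs with h
      · rfl
      · exact (h2 v h).symm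

open scoped Classical in
lemma expand (m : ℕ) (t : ℕ → Finset ℕ) (g : ℕ → ℕ → Pol) :
    ∏ c ∈ Finset.Icc 1 m, ∑ d ∈ t c, g c d
      = ∑ F ∈ FF m t, ∏ c ∈ Finset.Icc 1 m, g c (F c) := by
  rw [Finset.prod_sum, FF, Finset.sum_image]
  · apply Finset.sum_congr rfl
    intro F _
    rw [← Finset.prod_attach (Finset.Icc 1 m)]
    apply Finset.prod_congr rfl
    rintro ⟨c, hc⟩ _
    simp only [dif_pos hc]
  · intro F _ G _ h
    funext c hc
    have := congrFun h c
    simpa only [dif_pos hc] using this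

section
variable (m : ℕ) (x y z s : Pol)

def wt (p : ℕ → ℕ) (c : ℕ) : Pol := if p c = 0 then x else if bt p c < p c then y else z

def sibs (p : ℕ → ℕ) (c : ℕ) : Finset ℕ :=
  (Finset.Icc 1 m).filter (fun d => p d = p c ∧ bt p d < bt p c)

def tF (p : ℕ → ℕ) (c : ℕ) : Finset ℕ := insert 0 (sibs m p c)
def tB (q : ℕ → ℕ) (c : ℕ) : Finset ℕ :=
  if q c ≠ 0 ∧ bt q (q c) ≠ bt q c then {0, 1} else {0}

def gw (p : ℕ → ℕ) (c d : ℕ) : Pol := if d = 0 then wt x y z p c else s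

def toQ (p F : ℕ → ℕ) (v : ℕ) : ℕ := if F v = 0 then p v else F v
def toB (F : ℕ → ℕ) (v : ℕ) : ℕ := if F v = 0 then 0 else 1

variable {m}

lemma mem_sibs {p : ℕ → ℕ} {c d : ℕ} : d ∈ sibs m p c ↔ (1 ≤ d ∧ d ≤ m) ∧ p d = p c ∧ bt p d < bt p c := by
  simp [sibs]

section fwd
variable {p F : ℕ → ℕ}

lemma F_ne (hp : p ∈ Tr m) (hF : F ∈ FF m (tF m p)) {c : ℕ} (h : F c ≠ 0) : (1 ≤ c ∧ c ≤ m) ∧ (1 ≤ F c ∧ F c ≤ m) ∧ p (F c) = p c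
    ∧ bt p (F c) < bt p c := by
  rw [mem_FF] at hF
  by_cases hc : c ∈ Finset.Icc 1 m
  · have h1 := hF.1 c hc
    rw [tF, Finset.mem_insert, mem_sibs] at h1
    rw [Finset.mem_Icc] at hc
    exact ⟨hc, by tauto⟩
  · exact absurd (hF.2 c hc) h

lemma toQ_T (hp : p ∈ Tr m) (hF : F ∈ FF m (tF m p)) : toQ p F ∈ Tr m := by
  have hF0 : F 0 = 0 := by
    by_contra h
    have := (F_ne hp hF h).1; omega
  refine ⟨⟨?_, ?_⟩, fun v => ⟨?_, fun hv => ?_⟩⟩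
  · rw [toQ, if_pos hF0, hp.1.1]
  · have key : ∀ k n v, bt p v ≤ n → p^[k] v = 0 → Rc (toQ p F) v 0 := by
      intro k
      induction k with
      | zero => intro n v _ h; rw [show v = 0 from h]; exact Rc.refl _ _
      | succ k ih =>
        intro n
        induction n with
        | zero =>
          intro v hv _
          have : v = 0 := by
            by_contra h0
            have := hp.1.bt_pos h0; omega
          rw [this]; exact Rc.refl _ _
        | succ n ihn =>
          intro v hv hk
          by_cases h : F v = 0
          · apply Rc.step; rw [toQ, if_pos h]
            exact ih _ _ le_rfl hk
          · apply Rc.step; rw [toQ, if_neg h]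
            have h1 := F_ne hp hF h
            apply ihn _ (by omega)
            rw [iterate_succ_apply, h1.2.2.1]; exact hk
    intro v
    obtain ⟨k, hk⟩ := hp.1.2 v
    exact key k _ v le_rfl hk
  · rw [toQ]
    split_ifs with h
    · exact (hp.2 v).1
    · exact (F_ne hp hF h).2.1.2
  · rw [toQ, if_pos]
    · exact (hp.2 v).2 hv
    · by_contra h
      have := (F_ne hp hF h).1; omega

lemma toQ_bt (hp : p ∈ Tr m) (hF : F ∈ FF m (tF m p)) : bt (toQ p F) = bt p := by
  apply bt_eq_of (bt_le p)
  · intro v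
    rw [toQ]
    split_ifs with h
    · exact bt_mono p v
    · exact (F_ne hp hF h).2.2.2.le
  · apply bt_path (fun a => a)
    intro v hv
    have h : F v = 0 := by
      by_contra h
      have h1 := (F_ne hp hF h).2.2
      have h2 := bt_mono p (F v)
      rw [h1.1] at h2
      omega
    have := Rc.one (toQ p F) v
    rwa [toQ, if_pos h] at this

lemma toB_mem (hp : p ∈ Tr m) (hF : F ∈ FF m (tF m p)) : toB F ∈ FF m (tB (toQ p F)) := by
  rw [mem_FF]
  refine ⟨fun c _ => ?_, fun c hc => ?_⟩
  · rw [toB]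
    split_ifs with h
    · rw [tB]; split_ifs <;> simp
    · have h1 := F_ne hp hF h
      rw [tB, if_pos]
      · simp
      · rw [toQ_bt hp hF, toQ, if_neg h]; omega
  · rw [toB, if_pos]; rw [mem_FF] at hF; exact hF.2 c hc

lemma toQ_wt (hp : p ∈ Tr m) (hF : F ∈ FF m (tF m p)) (c : ℕ) : gw x y z s p c (F c) = gw x y z s (toQ p F) c (toB F c) := by
  rw [gw, gw, toB]
  by_cases h : F c = 0
  · rw [if_pos h, if_pos h, if_pos rfl, wt, wt, toQ_bt hp hF, toQ, if_pos h]
  · rw [if_neg h, if_neg h, if_neg (by omega)]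

end fwd

lemma toQ_inj {p F p' F' : ℕ → ℕ} (hp : p ∈ Tr m) (hF : F ∈ FF m (tF m p))
    (hp' : p' ∈ Tr m) (hF' : F' ∈ FF m (tF m p')) (h1 : toQ p F = toQ p' F')
    (h2 : toB F = toB F') : p = p' ∧ F = F' := by
  have hb : ∀ v, F v = 0 ↔ F' v = 0 := by
    intro v
    have := congrFun h2 v
    rw [toB, toB] at this
    split_ifs at this <;> simp_all
  have hFF : F = F' := by
    funext v
    have := congrFun h1 v
    have h3 := hb v
    rw [toQ, toQ] at this
    split_ifs at this with h4 h5 <;> omega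
  subst hFF
  refine ⟨?_, rfl⟩
  have hq := toQ_T hp hF
  have key : ∀ k v, (toQ p F)^[k] v = 0 → p v = p' v := by
    intro k
    induction k with
    | zero => intro v h; rw [show v = 0 from h, hp.1.1, hp'.1.1]
    | succ k ih =>
      intro v h
      rw [iterate_succ_apply] at h
      have h3 := congrFun h1 v
      by_cases h4 : F v = 0
      · rwa [toQ, toQ, if_pos h4, if_pos h4] at h3
      · have h5 := ih _ h
        rw [toQ, if_neg h4] at h5
        rw [← (F_ne hp hF h4).2.2.1, ← (F_ne hp' hF' h4).2.2.1, h5]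
  funext v
  obtain ⟨k, hk⟩ := hq.1.2 v
  exact key k v hk

lemma toQ_surj {q B : ℕ → ℕ} (hq : q ∈ Tr m) (hB : B ∈ FF m (tB q)) :
    ∃ p F, p ∈ Tr m ∧ F ∈ FF m (tF m p) ∧ toQ p F = q ∧ toB F = B := by
  have hBne : ∀ c, B c ≠ 0 → B c = 1 ∧ (1 ≤ c ∧ c ≤ m) ∧ q c ≠ 0 ∧ bt q (q c) ≠ bt q c := by
    intro c h
    rw [mem_FF] at hB
    by_cases hc : c ∈ Finset.Icc 1 m
    · have h1 := hB.1 c hc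
      rw [tB] at h1
      split_ifs at h1 with h2
      · simp only [Finset.mem_insert, Finset.mem_singleton] at h1
        rw [Finset.mem_Icc] at hc
        exact ⟨by omega, hc, h2⟩
      · simp only [Finset.mem_singleton] at h1; exact absurd h1 h
    · exact absurd (hB.2 c hc) h
  have hB0 : B 0 = 0 := by
    by_contra h
    have := (hBne 0 h).2.1; omega
  have hex : ∀ c, ∃ k, B (q^[k] c) = 0 := by
    intro c
    obtain ⟨k, hk⟩ := hq.1.2 c
    exact ⟨k, by rw [hk, hB0]⟩
  obtain ⟨p, hpdef⟩ : ∃ p : ℕ → ℕ, ∀ c, p c = q (q^[Nat.find (hex c)] c) := ⟨_, fun _ => rfl⟩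
  have hp0 : ∀ c, B c = 0 → p c = q c := by
    intro c hc
    rw [hpdef, (Nat.find_eq_zero (hex c)).2 hc]; rfl
  have hp1 : ∀ c, B c ≠ 0 → p c = p (q c) := by
    intro c hc
    rw [hpdef c, hpdef (q c), Nat.find_comp_succ (hex c) (hex (q c)) hc, iterate_succ_apply]
    rfl
  have hpit : ∀ c, ∃ j, p c = q^[j + 1] c := fun c =>
    ⟨Nat.find (hex c), by rw [iterate_succ_apply', hpdef]⟩
  have hpT : p ∈ Tr m := by
    refine ⟨⟨?_, ?_⟩, fun v => ⟨?_, fun hv => ?_⟩⟩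
    · rw [hp0 0 hB0, hq.1.1]
    · have key : ∀ k v, q^[k] v = 0 → Rc p v 0 := by
        intro k
        induction k using Nat.strong_induction_on with
        | _ k ih =>
          intro v hk
          obtain ⟨j, hj⟩ := hpit v
          apply Rc.step
          rcases Nat.lt_or_ge k (j + 1) with h | h
          · have : p v = 0 := by
              rw [hj, show j + 1 = (j + 1 - k) + k by omega, iterate_add_apply, hk, hq.1.iter_zero]
            rw [this]; exact Rc.refl _ _
          · apply ih (k - (j + 1)) (by omega)
            rw [hj, ← iterate_add_apply, Nat.sub_add_cancel h, hk]
      intro v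
      obtain ⟨k, hk⟩ := hq.1.2 v
      exact key k v hk
    · rw [hpdef]; exact (hq.2 _).1
    · have : B v = 0 := by
        by_contra h
        have := (hBne v h).2.1; omega
      rw [hp0 v this]; exact (hq.2 v).2 hv
  have hbt : bt p = bt q := by
    apply bt_eq_of (bt_le q)
    · intro v
      obtain ⟨j, hj⟩ := hpit v
      rw [hj]; exact bt_mono_iter q _ _
    · apply bt_path (fun a => a)
      intro v hv
      have h : B v = 0 := by
        by_contra h
        exact (hBne v h).2.2.2 hv
      have := Rc.one p v
      rwa [hp0 v h] at this
  refine ⟨p, fun v => if B v = 0 then 0 else q v, hpT, ?_, ?_, ?_⟩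
  · rw [mem_FF]
    refine ⟨fun c _ => ?_, fun c hc => ?_⟩
    · split_ifs with h
      · simp [tF]
      · have h1 := hBne c h
        have h2 := bt_mono q c
        have h3 := (hq.2 c).1
        rw [tF, Finset.mem_insert, mem_sibs, hbt, hp1 c h]
        right
        refine ⟨by omega, rfl, by omega⟩
    · rw [mem_FF] at hB
      rw [if_pos (hB.2 c hc)]
  · funext v
    rw [toQ]
    by_cases h : B v = 0
    · simp [h, hp0]
    · have h1 := hBne v h
      simp [h, h1.2.2.1]
  · funext v
    rw [toB]
    by_cases h : B v = 0
    · simp [h]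
    · have h1 := hBne v h
      simp [h1.1, h1.2.2.1]

lemma sum_colour : ∑ p ∈ TrF m, ∏ c ∈ Finset.Icc 1 m, (wt x y z p c + ((sibs m p c).card : Pol) * s)
    = ∑ q ∈ TrF m, ∏ c ∈ Finset.Icc 1 m,
      (wt x y z q c + if q c ≠ 0 ∧ bt q (q c) ≠ bt q c then s else 0) := by
  have e1 : ∀ p ∈ TrF m, ∏ c ∈ Finset.Icc 1 m, (wt x y z p c + ((sibs m p c).card : Pol) * s)
      = ∑ F ∈ FF m (tF m p), ∏ c ∈ Finset.Icc 1 m, gw x y z s p c (F c) := by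
    intro p _
    rw [← expand]
    apply Finset.prod_congr rfl
    intro c _
    have h0 : 0 ∉ sibs m p c := by rw [mem_sibs]; omega
    rw [tF, Finset.sum_insert h0, gw, if_pos rfl]
    congr 1
    rw [← nsmul_eq_mul, ← Finset.sum_const]
    apply Finset.sum_congr rfl
    intro d hd
    rw [gw, if_neg]; rintro rfl; exact h0 hd
  have e2 : ∀ q ∈ TrF m, ∏ c ∈ Finset.Icc 1 m,
      (wt x y z q c + if q c ≠ 0 ∧ bt q (q c) ≠ bt q c then s else 0)
      = ∑ F ∈ FF m (tB q), ∏ c ∈ Finset.Icc 1 m, gw x y z s q c (F c) := by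
    intro q _
    rw [← expand]
    apply Finset.prod_congr rfl
    intro c _
    rw [tB]
    split_ifs with h
    · rw [Finset.sum_pair (by omega)]; simp [gw]
    · simp [gw]
  rw [Finset.sum_congr rfl e1, Finset.sum_congr rfl e2, Finset.sum_sigma', Finset.sum_sigma']
  apply Finset.sum_bij (fun a _ => (⟨toQ a.1 a.2, toB a.2⟩ : (_ : ℕ → ℕ) × (ℕ → ℕ)))
  · rintro ⟨p, F⟩ h
    simp only [Finset.mem_sigma, mem_TrF] at h ⊢
    exact ⟨toQ_T h.1 h.2, toB_mem h.1 h.2⟩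
  · rintro ⟨p, F⟩ h ⟨p', F'⟩ h' he
    simp only [Finset.mem_sigma, mem_TrF] at h h'
    simp only [Sigma.mk.injEq, heq_eq_eq] at he
    obtain ⟨h1, h2⟩ := toQ_inj h.1 h.2 h'.1 h'.2 he.1 he.2
    rw [h1, h2]
  · rintro ⟨q, B⟩ h
    simp only [Finset.mem_sigma, mem_TrF] at h
    obtain ⟨p, F, h1, h2, h3, h4⟩ := toQ_surj h.1 h.2
    refine ⟨⟨p, F⟩, ?_, ?_⟩
    · simp only [Finset.mem_sigma, mem_TrF]; exact ⟨h1, h2⟩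
    · simp only [h3, h4]
  · rintro ⟨p, F⟩ h
    simp only [Finset.mem_sigma, mem_TrF] at h
    exact Finset.prod_congr rfl fun c _ => toQ_wt x y z s h.1 h.2 c

lemma prod_colour {q : ℕ → ℕ} (hq : q ∈ Tr m) : ∏ c ∈ Finset.Icc 1 m,
      (wt x y z q c + if q c ≠ 0 ∧ bt q (q c) ≠ bt q c then s else 0)
    = aeval ![x, y, y + s, z + s] (W m q) := by
  have e1 : ∀ c ∈ Finset.Icc 1 m,
      (wt x y z q c + if q c ≠ 0 ∧ bt q (q c) ≠ bt q c then s else 0)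
      = if q c = 0 then x else if bt q c < q c then (if bt q c = bt q (q c) then y else y + s)
        else z + s := by
    intro c hc
    rw [Finset.mem_Icc] at hc
    rw [wt]
    by_cases h1 : q c = 0
    · simp [h1]
    · by_cases h2 : bt q c = bt q (q c)
      · have := hq.1.imp_of_eq (c := c) (by omega) h2
        rw [if_neg h1, if_neg h1, if_pos this, if_pos this, if_pos h2, if_neg (by tauto), add_zero]
      · have h3 : q c ≠ 0 ∧ bt q (q c) ≠ bt q c := ⟨h1, Ne.symm h2⟩
        simp only [if_neg h1, if_neg h2, if_pos h3]
        split_ifs <;> rfl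
  rw [Finset.prod_congr rfl e1, Finset.prod_ite, Finset.prod_ite, Finset.prod_ite]
  simp only [Finset.prod_const]
  have c1 : ((Finset.Icc 1 m).filter (fun c => ¬ q c = 0)).filter (fun c => bt q c < q c) = imp m q := by
    ext c
    simp only [Finset.mem_filter, mem_imp, Finset.mem_Icc]
    omega
  have c2 : (((Finset.Icc 1 m).filter (fun c => ¬ q c = 0)).filter (fun c => ¬ bt q c < q c)).card
      = m - (imp m q).card - (rch m q).card := by
    have h1 := Finset.card_filter_add_card_filter_not (s := (Finset.Icc 1 m).filter (fun c => ¬ q c = 0))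
      (fun c => bt q c < q c)
    have h2 := Finset.card_filter_add_card_filter_not (s := Finset.Icc 1 m) (fun c => q c = 0)
    rw [c1] at h1
    rw [Nat.card_Icc] at h2
    change (rch m q).card + _ = _ at h2
    omega
  have c3 : ((imp m q).filter (fun c => ¬ bt q c = bt q (q c))).card
      = (imp m q).card - (ipp m q).card := by
    have h1 := Finset.card_filter_add_card_filter_not (s := imp m q)
      (fun c => bt q c = bt q (q c))
    rw [Tr.card_first hq] at h1
    omega
  rw [c2, c1, c3, Tr.card_first hq, W]
  simp only [map_mul, map_pow, aeval_X]
  simp only [Matrix.cons_val]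
  rw [show ((Finset.Icc 1 m).filter (fun c => q c = 0)) = rch m q from rfl]
  ring

/-- main algebraic identity -/
lemma sum_main : ∑ p ∈ TrF m, ∏ c ∈ Finset.Icc 1 m, (wt x y z p c + ((sibs m p c).card : Pol) * s)
    = aeval ![x, y + s, y, z] (K m) := by
  rw [sum_colour, Finset.sum_congr rfl (fun q hq => prod_colour x y z s (mem_TrF.1 hq)), ← map_sum]
  change aeval ![x, y, y + s, z + s] (K m) = _
  conv_rhs => rw [← phi_K]
  rw [phi, ← AlgHom.comp_apply]
  congr 1
  apply MvPolynomial.algHom_ext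
  intro i
  fin_cases i <;> simp
  ring

end
end RT

namespace RT

/-! ### Non-leading vertices -/

def NL (p : ℕ → ℕ) (v : ℕ) : Prop := ∃ k, (∀ l ≤ k, v ≤ p^[l] v) ∧ bt p (p^[k] v) < v

open scoped Classical in
def nls (m : ℕ) (p : ℕ → ℕ) : Finset ℕ := (Finset.Icc 1 m).filter (fun v => NL p v)

lemma mem_nls {m : ℕ} {p : ℕ → ℕ} {v : ℕ} : v ∈ nls m p ↔ (1 ≤ v ∧ v ≤ m) ∧ NL p v := by
  simp [nls]

lemma card_nls {m : ℕ} {p : ℕ → ℕ} (hp : p ∈ Tr m) : (imp m p).card = (nls m p).card := by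
  apply Finset.card_bij (fun c _ => if bt p (p c) = bt p c then p c else bt p c)
  · intro c hc
    rw [mem_imp] at hc
    rw [mem_nls]
    have hpm := (hp.2 c).1
    split_ifs with h
    · refine ⟨⟨by omega, hpm⟩, 0, ?_, ?_⟩
      · intro l hl
        obtain rfl : l = 0 := by omega
        exact le_rfl
      · change bt p (p c) < p c
        omega
    · have hb := hp.1.bt_pos (v := c) (by omega)
      have hb' := bt_le p c
      refine ⟨⟨by omega, by omega⟩, ?_⟩
      obtain ⟨k, hk⟩ := bt_spec p c
      have hk1 : p^[k + 1] (bt p c) = p c := by rw [iterate_succ_apply', hk]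
      refine ⟨k + 1, ?_, ?_⟩
      · intro l hl
        rcases Nat.lt_or_ge k l with h1 | h1
        · obtain rfl : l = k + 1 := by omega
          rw [hk1]; omega
        · apply bt_le_of p (k := k - l)
          rw [← iterate_add_apply, Nat.sub_add_cancel h1, hk]
      · rw [hk1]
        have := bt_mono p c
        omega
  · have key : ∀ c d : ℕ, bt p (p c) ≠ bt p c → bt p c = bt p d → ∀ k l, p^[k] (bt p c) = c →
        p^[l] (bt p c) = d → k < l → False := by
      intro c d h1 h2 k l hk hl hkl
      obtain ⟨j, rfl⟩ := Nat.exists_eq_add_of_le' (Nat.succ_le_of_lt hkl)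
      rw [iterate_add_apply, iterate_succ_apply', hk] at hl
      have h3 := bt_mono_iter p j (p c)
      rw [hl] at h3
      have := bt_mono p c
      omega
    have key2 : ∀ c d : ℕ, bt p c < p c → bt p (p c) = bt p c → p c = bt p d → False := by
      intro c d h1 h2 h3
      obtain ⟨k, hk⟩ := bt_spec p d
      have h4 := bt_mono_iter p k (bt p d)
      rw [hk, ← h3, h2] at h4
      omega
    intro c hc d hd h
    rw [mem_imp] at hc hd
    split_ifs at h with h1 h2 h2
    · exact hp.1.sib_inj (by omega) (by omega) h (by rw [← h1, ← h2, h])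
    · exact (key2 c d hc.2 h1 h).elim
    · exact (key2 d c hd.2 h2 h.symm).elim
    · obtain ⟨k, hk⟩ := bt_spec p c
      obtain ⟨l, hl⟩ := bt_spec p d
      rcases lt_trichotomy k l with h3 | h3 | h3
      · exact (key c d h1 h k l hk (h ▸ hl) h3).elim
      · subst h3
        rw [← hk, ← hl, h]
      · exact (key d c h2 h.symm l k hl (h ▸ hk) h3).elim
  · intro v hv
    rw [mem_nls] at hv
    obtain ⟨⟨hv1, hvm⟩, k, hk1, hk2⟩ := hv
    by_cases hb : bt p v = v
    · have hex : ∃ k, bt p (p^[k] v) < v := ⟨k, hk2⟩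
      classical
      have hs := Nat.find_spec hex
      have hmin : ∀ j < Nat.find hex, ¬ bt p (p^[j] v) < v := fun j hj => Nat.find_min hex hj
      have hle : Nat.find hex ≤ k := Nat.find_le hk2
      generalize Nat.find hex = j at hs hmin hle
      cases j with
      | zero => rw [iterate_zero, id_eq, hb] at hs; omega
      | succ j =>
        have h1 := hmin j (by omega)
        have h2 := bt_mono_iter p j v
        have h3 : bt p (p^[j] v) = v := by omega
        have h4 := hk1 (j + 1) hle
        have h5 : p^[j + 1] v ≠ v := fun h => by
          have := hp.1.no_cycle h; omega
        rw [iterate_succ_apply'] at h4 h5 hs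
        have h6 := Tr.le_of_p_ne hp (c := p^[j] v) (by omega)
        have h7 : p^[j] v ≠ 0 := by
          intro h; rw [h, hp.1.bt_zero] at h3; omega
        refine ⟨p^[j] v, ?_, ?_⟩
        · rw [mem_imp]; exact ⟨⟨by omega, h6⟩, by omega⟩
        · rw [if_neg (by omega), h3]
    · obtain ⟨c, hc0, hcv, hcb⟩ := hp.1.exists_child hb
      have h1 := bt_le p v
      have h6 := Tr.le_of_p_ne hp (c := c) (by omega)
      refine ⟨c, ?_, ?_⟩
      · rw [mem_imp]; exact ⟨⟨by omega, h6⟩, by omega⟩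
      · rw [if_pos (by rw [hcv, hcb]), hcv]

/-! ### Transfer from `Fin` -/

def lift {m : ℕ} (p : Fin (m + 1) → Fin (m + 1)) : ℕ → ℕ :=
  fun v => if h : v < m + 1 then (p ⟨v, h⟩).val else 0

section
variable {m : ℕ} (p : Fin (m + 1) → Fin (m + 1))

lemma lift_val (v : Fin (m + 1)) : lift p v.val = (p v).val := by
  rw [lift, dif_pos v.2]

lemma lift_iter (k : ℕ) (v : Fin (m + 1)) : (lift p)^[k] v.val = (p^[k] v).val := by
  induction k with
  | zero => rfl
  | succ k ih => rw [iterate_succ_apply', iterate_succ_apply', ih, lift_val]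

lemma lift_inj {p q : Fin (m + 1) → Fin (m + 1)} (h : lift p = lift q) : p = q := by
  funext v
  apply Fin.ext
  rw [← lift_val, ← lift_val, h]

lemma lift_mem (h0 : ∀ v : Fin (m + 1), v.val = 0 → p v = v)
    (h1 : ∀ v : Fin (m + 1), ∃ k, k < m + 1 ∧ (p^[k] v).val = 0) : lift p ∈ Tr m := by
  have h00 : lift p 0 = 0 := by
    have := lift_val p 0
    rw [h0 0 rfl] at this
    exact this
  refine ⟨⟨h00, ?_⟩, ?_⟩
  · intro v
    rcases Nat.lt_or_ge v (m + 1) with h | h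
    · obtain ⟨k, -, hk⟩ := h1 ⟨v, h⟩
      exact ⟨k, by rw [← hk, ← lift_iter]⟩
    · exact ⟨1, by simp [lift, Nat.not_lt.2 h]⟩
  · intro v
    refine ⟨?_, fun hv => ?_⟩
    · rw [lift]; split_ifs with h
      · have := (p ⟨v, h⟩).2; omega
      · omega
    · rw [lift, dif_neg (by omega)]

lemma Tr.short {q : ℕ → ℕ} (hq : q ∈ Tr m) (v : ℕ) (hv : v ≤ m) : ∃ k, k < m + 1 ∧ q^[k] v = 0 := by
  classical
  have hex := hq.1.2 v
  refine ⟨Nat.find hex, ?_, Nat.find_spec hex⟩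
  have hmin : ∀ j < Nat.find hex, q^[j] v ≠ 0 := fun j hj => Nat.find_min hex hj
  generalize Nat.find hex = k at hmin
  have hle : ∀ j, q^[j] v ≤ m := by
    intro j
    cases j with
    | zero => exact hv
    | succ j => rw [iterate_succ_apply']; exact (hq.2 _).1
  have h1 : (Finset.range k).card ≤ (Finset.Icc 1 m).card := by
    apply Finset.card_le_card_of_injOn (fun j => q^[j] v)
    · intro j hj
      have := hmin j (by simpa using hj)
      have := hle j
      simp only [Finset.coe_Icc, Set.mem_Icc]
      omega
    · have key : ∀ i j, i < j → j < k → q^[i] v = q^[j] v → False := by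
        intro i j hij hj h
        obtain ⟨d, rfl⟩ := Nat.exists_eq_add_of_le' (Nat.succ_le_of_lt hij)
        rw [show d + i.succ = (d + 1) + i by omega, iterate_add_apply] at h
        exact hmin i (by omega) (hq.1.no_cycle h.symm)
      intro i hi j hj h
      simp only [Finset.coe_range, Set.mem_Iio] at hi hj
      rcases lt_trichotomy i j with h1 | h1 | h1
      · exact (key i j h1 hj h).elim
      · exact h1
      · exact (key j i h1 hi h.symm).elim
  rw [Finset.card_range, Nat.card_Icc] at h1
  omega

lemma exists_lift {q : ℕ → ℕ} (hq : q ∈ Tr m) : ∃ p : Fin (m + 1) → Fin (m + 1),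
    lift p = q ∧ (∀ v : Fin (m + 1), v.val = 0 → p v = v) ∧
    (∀ v : Fin (m + 1), ∃ k, k < m + 1 ∧ (p^[k] v).val = 0) := by
  have hl : lift (fun v : Fin (m + 1) => (⟨q v.val, Nat.lt_succ_of_le (hq.2 v.val).1⟩ : Fin (m + 1)))
      = q := by
    funext v
    rw [lift]; split_ifs with h
    · rfl
    · exact ((hq.2 v).2 (by omega)).symm
  refine ⟨_, hl, ?_, ?_⟩
  · intro v hv
    apply Fin.ext
    simp only [hv, hq.1.1]
  · intro v
    obtain ⟨k, hk, hk2⟩ := Tr.short hq v.val (by omega)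
    refine ⟨k, hk, ?_⟩
    rw [← lift_iter, hl, hk2]

lemma beta_eq (a : Fin (m + 1)) :
    sInf {j : ℕ | ∃ v : Fin (m + 1), v.val = j ∧ ∃ k, p^[k] v = a} = bt (lift p) a.val := by
  apply le_antisymm
  · obtain ⟨k, hk⟩ := bt_spec (lift p) a.val
    have hle := bt_le (lift p) a.val
    have ha := a.2
    apply Nat.sInf_le
    refine ⟨⟨bt (lift p) a.val, by omega⟩, rfl, k, ?_⟩
    apply Fin.ext
    rw [← lift_iter]
    exact hk
  · obtain ⟨v, hv, k, hk⟩ := Nat.sInf_mem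
      (s := {j : ℕ | ∃ v : Fin (m + 1), v.val = j ∧ ∃ k, p^[k] v = a}) ⟨a.val, a, rfl, 0, rfl⟩
    rw [← hv]
    apply bt_le_of _ (k := k)
    rw [lift_iter, hk]

lemma ncard_fin (P : Fin (m + 1) → Prop) (s : Finset ℕ) (hs : s ⊆ Finset.Icc 0 m)
    (h : ∀ c : Fin (m + 1), P c ↔ c.val ∈ s) : {c | P c}.ncard = s.card := by
  rw [← Set.ncard_image_of_injective _ Fin.val_injective, ← Set.ncard_coe_finset]
  congr 1
  ext v
  simp only [Set.mem_image, Set.mem_ofPred_eq, Finset.mem_coe]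
  constructor
  · rintro ⟨c, hc, rfl⟩; exact (h c).1 hc
  · intro hv
    have := hs hv
    rw [Finset.mem_Icc] at this
    exact ⟨⟨v, by omega⟩, (h _).2 hv, rfl⟩

end

section
variable {m : ℕ} (T : CayleyTree (m + 1))

lemma cay_mem : lift T.1 ∈ Tr m := lift_mem T.1 T.2.1 T.2.2

lemma cay_beta (a : Fin (m + 1)) : T.beta a = bt (lift T.1) a.val := beta_eq T.1 a

lemma sub_aux (P : ℕ → Prop) [DecidablePred P] :
    (Finset.Icc 1 m).filter P ⊆ Finset.Icc 0 m := by
  intro c hc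
  rw [Finset.mem_filter, Finset.mem_Icc] at hc
  rw [Finset.mem_Icc]; omega

lemma cay_impe : T.impe = (imp m (lift T.1)).card := by
  apply ncard_fin
  · exact sub_aux _
  · intro c
    have := c.2
    rw [CayleyTree.ImproperEdge, mem_imp, cay_beta, lift_val]
    omega

lemma cay_impp : T.impp = (ipp m (lift T.1)).card := by
  apply ncard_fin
  · exact sub_aux _
  · intro c
    have := c.2
    have := bt_le (lift T.1) c.val
    rw [CayleyTree.ImproperParent, mem_ipp, cay_beta]
    omega

lemma cay_deg : T.degRoot = (rch m (lift T.1)).card := by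
  apply ncard_fin
  · exact sub_aux _
  · intro c
    have := c.2
    rw [mem_rch, lift_val]
    omega

lemma cay_leading (i : Fin (m + 1)) : T.Leading i ↔ ¬ NL (lift T.1) i.val := by
  have hT := cay_mem T
  rw [CayleyTree.Leading, cay_beta, ← lift_iter]
  have hP0 : ∀ l ≤ 0, i ≤ T.1^[l] i := by
    intro l hl
    obtain rfl : l = 0 := by omega
    exact le_rfl
  have hg : ∀ l ≤ T.bapLen i, i ≤ T.1^[l] i :=
    Nat.findGreatest_spec (P := fun k => ∀ l ≤ k, i ≤ T.1^[l] i) (Nat.zero_le (m + 1)) hP0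
  constructor
  · rintro h ⟨k, hk1, hk2⟩
    have hk : k ≤ T.bapLen i := by
      apply Nat.le_findGreatest
      · obtain ⟨k0, hk0, hk0'⟩ := T.2.2 i
        by_contra hlt
        have := hk1 k0 (by omega)
        rw [lift_iter, hk0'] at this
        omega
      · intro l hl
        have := hk1 l hl
        rw [lift_iter] at this
        exact this
    obtain ⟨j, hj⟩ := Nat.exists_eq_add_of_le' hk
    rw [hj, iterate_add_apply] at h
    have := bt_mono_iter (lift T.1) j ((lift T.1)^[k] i.val)
    omega
  · intro h
    by_contra hne
    apply h
    refine ⟨T.bapLen i, ?_, ?_⟩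
    · intro l hl
      rw [lift_iter]
      exact hg l hl
    · have := bt_le_of (lift T.1) (v := i.val) (k := T.bapLen i) rfl
      omega

lemma cay_lead : T.lead + T.impe = m + 1 := by
  have h1 : T.lead = ((Finset.Icc 0 m) \ nls m (lift T.1)).card := by
    apply ncard_fin
    · exact Finset.sdiff_subset
    · intro c
      have := c.2
      rw [cay_leading, Finset.mem_sdiff, mem_nls, Finset.mem_Icc]
      constructor
      · intro h; exact ⟨by omega, fun h' => h h'.2⟩
      · rintro ⟨-, h⟩ h'
        apply h
        refine ⟨⟨?_, by omega⟩, h'⟩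
        obtain ⟨k, -, hk⟩ := h'
        omega
  have h2 : nls m (lift T.1) ⊆ Finset.Icc 0 m := by
    intro c hc
    rw [mem_nls] at hc
    rw [Finset.mem_Icc]; omega
  rw [h1, cay_impe, card_nls (cay_mem T), Finset.card_sdiff_add_card_eq_card h2, Nat.card_Icc]
  omega

end

lemma sum_cayley (m : ℕ) (f : (ℕ → ℕ) → Pol) :
    ∑ T : CayleyTree (m + 1), f (lift T.1) = ∑ p ∈ TrF m, f p := by
  apply Finset.sum_bij (fun T _ => lift T.1)
  · intro T _; exact mem_TrF.2 (cay_mem T)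
  · intro T _ T' _ h
    exact Subtype.ext (lift_inj h)
  · intro q hq
    obtain ⟨p, h1, h2, h3⟩ := exists_lift (mem_TrF.1 hq)
    exact ⟨⟨p, h2, h3⟩, Finset.mem_univ _, h1⟩
  · intro T _; rfl

lemma rch_pos {m : ℕ} {p : ℕ → ℕ} (hp : p ∈ Tr m) (hm : 1 ≤ m) : 1 ≤ (rch m p).card := by
  rw [Nat.succ_le_iff, Finset.card_pos]
  have key : ∀ k v, v ≠ 0 → v ≤ m → p^[k] v = 0 → (rch m p).Nonempty := by
    intro k
    induction k with
    | zero => intro v hv _ h; exact absurd h hv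
    | succ k ih =>
      intro v hv hvm h
      by_cases h0 : p v = 0
      · exact ⟨v, mem_rch.2 ⟨⟨by omega, hvm⟩, h0⟩⟩
      · exact ih (p v) h0 (hp.2 v).1 h
  obtain ⟨k, hk⟩ := hp.1.2 m
  exact key k m (by omega) le_rfl hk

lemma lhs_eq (m : ℕ) (hm : 1 ≤ m) :
    X 0 * ∑ T : CayleyTree (m + 1),
        (X 1 : MvPolynomial (Fin 4) ℚ) ^ T.impe * (X 3 + 1) ^ T.impp
          * X 0 ^ (T.degRoot - 1) * X 2 ^ (T.lead - T.degRoot - 1)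
    = aeval ![(X 0 : Pol), X 1 + X 1 * X 3, X 1, X 2] (K m) := by
  rw [K, map_sum, ← sum_cayley, Finset.mul_sum]
  apply Finset.sum_congr rfl
  intro T _
  have h1 := cay_lead T
  have h2 := rch_pos (cay_mem T) hm
  have h3 := Tr.ipp_le_imp (cay_mem T)
  rw [cay_impe] at h1
  rw [W, cay_impe, cay_impp, cay_deg]
  simp only [map_mul, map_pow, aeval_X]
  simp only [Matrix.cons_val]
  rw [show T.lead - (rch m (lift T.1)).card - 1
    = m - (imp m (lift T.1)).card - (rch m (lift T.1)).card by omega]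
  generalize m - (imp m (lift T.1)).card - (rch m (lift T.1)).card = a
  obtain ⟨b, hb⟩ := Nat.exists_eq_add_of_le' h3
  obtain ⟨d, hd⟩ := Nat.exists_eq_add_of_le' h2
  rw [hb, hd, Nat.add_sub_cancel, Nat.add_sub_cancel]
  rw [show (X 1 + X 1 * X 3 : Pol) = X 1 * (X 3 + 1) by ring, mul_pow]
  ring

end RT

namespace RT

/-! ### Inversion codes of linear orders -/

/-- inversion code -/
def cod (S : Finset ℕ) (b r : ℕ → ℕ) (c : ℕ) : ℕ := (S.filter (fun d => b d < b c ∧ r c < r d)).card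

lemma rk_image {S : Finset ℕ} {r : ℕ → ℕ} (h1 : Set.InjOn r S) (h2 : ∀ c ∈ S, r c < S.card) :
    S.image r = Finset.range S.card := by
  apply Finset.eq_of_subset_of_card_le
  · intro v hv
    rw [Finset.mem_image] at hv
    obtain ⟨c, hc, rfl⟩ := hv
    exact Finset.mem_range.2 (h2 c hc)
  · rw [Finset.card_image_of_injOn h1, Finset.card_range]

lemma rk_count {S : Finset ℕ} {r : ℕ → ℕ} (h1 : Set.InjOn r S) (h2 : ∀ c ∈ S, r c < S.card)
    {k : ℕ} (hk : k ≤ S.card) : (S.filter (fun d => r d < k)).card = k := by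
  rw [← Finset.card_image_of_injOn (f := r) (h1.mono (by
    intro x hx; exact (Finset.mem_filter.1 hx).1))]
  have : (S.filter (fun d => r d < k)).image r = Finset.range k := by
    ext v
    simp only [Finset.mem_image, Finset.mem_filter, Finset.mem_range]
    constructor
    · rintro ⟨c, ⟨-, hc⟩, rfl⟩; exact hc
    · intro hv
      have : v ∈ S.image r := by rw [rk_image h1 h2, Finset.mem_range]; omega
      obtain ⟨c, hc, rfl⟩ := Finset.mem_image.1 this
      exact ⟨c, ⟨hc, hv⟩, rfl⟩
  rw [this, Finset.card_range]

lemma rk_exists (b : ℕ → ℕ) (S : Finset ℕ) : Set.InjOn b S → ∀ e : ℕ → ℕ,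
    (∀ c ∈ S, e c ≤ (S.filter (fun d => b d < b c)).card) →
    ∃ r : ℕ → ℕ, Set.InjOn r S ∧ (∀ c ∈ S, r c < S.card) ∧ ∀ c ∈ S, cod S b r c = e c := by
  induction S using Finset.induction_on_max_value b with
  | empty => intro _ e _; exact ⟨fun _ => 0, by simp, by simp, by simp⟩
  | insert a S ha hmax ih =>
    intro hb e he
    have hlt : ∀ c ∈ S, b c < b a := by
      intro c hc
      refine lt_of_le_of_ne (hmax c hc) fun h => ?_
      have := hb (by simp [hc]) (by simp) h
      exact ha (this ▸ hc)
    have hne : ∀ c ∈ S, c ≠ a := fun c hc h => ha (h ▸ hc)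
    have hsub : ∀ c ∈ S, (insert a S).filter (fun d => b d < b c) = S.filter (fun d => b d < b c) := by
      intro c hc
      rw [Finset.filter_insert, if_neg (by have := hlt c hc; omega)]
    obtain ⟨r, hr1, hr2, hr3⟩ := ih (hb.mono (by simp)) e (by
      intro c hc
      have := he c (by simp [hc])
      rwa [hsub c hc] at this)
    have hea : e a ≤ S.card := by
      refine (he a (by simp)).trans ?_
      rw [Finset.filter_insert, if_neg (by omega)]
      exact Finset.card_filter_le _ _
    obtain ⟨t, ht⟩ : ∃ t, t + e a = S.card := ⟨S.card - e a, by omega⟩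
    obtain ⟨r', hra, hrd⟩ : ∃ r' : ℕ → ℕ, r' a = t ∧
        ∀ d ∈ S, (r d < t ∧ r' d = r d) ∨ (t ≤ r d ∧ r' d = r d + 1) := by
      refine ⟨fun d => if d = a then t else if r d < t then r d else r d + 1, by simp, ?_⟩
      intro d hd
      simp only [if_neg (hne d hd)]
      split_ifs <;> omega
    have hcard : (insert a S).card = S.card + 1 := Finset.card_insert_of_notMem ha
    refine ⟨r', ?_, ?_, ?_⟩
    · intro c hc d hd h
      rw [Finset.mem_coe, Finset.mem_insert] at hc hd
      rcases hc with rfl | hc <;> rcases hd with rfl | hd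
      · rfl
      · have := hrd d hd; omega
      · have := hrd c hc; omega
      · have h1 := hrd d hd
        have h2 := hrd c hc
        exact hr1 hc hd (by omega)
    · intro c hc
      rw [hcard]
      rcases Finset.mem_insert.1 hc with rfl | hc
      · omega
      · have := hrd c hc
        have := hr2 c hc
        omega
    · intro c hc
      rcases Finset.mem_insert.1 hc with rfl | hc
      · have h1 := rk_count hr1 hr2 (k := t) (by omega)
        have h2 := Finset.card_filter_add_card_filter_not (s := S) (fun d => r d < t)
        rw [cod, Finset.filter_insert, if_neg (by omega)]
        have : S.filter (fun d => b d < b c ∧ r' c < r' d) = S.filter (fun d => ¬ r d < t) := by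
          apply Finset.filter_congr
          intro d hd
          have := hrd d hd
          have := hlt d hd
          omega
        rw [this]; omega
      · rw [← hr3 c hc, cod, cod, Finset.filter_insert, if_neg (by have := hlt c hc; omega)]
        congr 1
        apply Finset.filter_congr
        intro d hd
        have := hrd d hd
        have := hrd c hc
        omega

lemma rk_order (b : ℕ → ℕ) (r r' : ℕ → ℕ) (S : Finset ℕ) : Set.InjOn b S → Set.InjOn r S →
    Set.InjOn r' S → (∀ c ∈ S, cod S b r c = cod S b r' c) →
    ∀ c ∈ S, ∀ d ∈ S, (r c < r d ↔ r' c < r' d) := by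
  induction S using Finset.induction_on_max_value b with
  | empty => simp
  | insert a S ha hmax ih =>
    intro hb hr hr' he
    have hlt : ∀ c ∈ S, b c < b a := by
      intro c hc
      refine lt_of_le_of_ne (hmax c hc) fun h => ?_
      have := hb (by simp [hc]) (by simp) h
      exact ha (this ▸ hc)
    have hne : ∀ c ∈ S, c ≠ a := fun c hc h => ha (h ▸ hc)
    have ih' := ih (hb.mono (by simp)) (hr.mono (by simp)) (hr'.mono (by simp)) (by
      intro c hc
      have := he c (by simp [hc])
      have h1 := hlt c hc
      rwa [cod, cod, Finset.filter_insert, Finset.filter_insert, if_neg (by omega),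
        if_neg (by omega)] at this)
    have hU : (S.filter (fun d => r a < r d)).card = (S.filter (fun d => r' a < r' d)).card := by
      have := he a (by simp)
      rw [cod, cod, Finset.filter_insert, Finset.filter_insert, if_neg (by omega),
        if_neg (by omega)] at this
      rw [Finset.filter_congr (q := fun d => r a < r d) (fun d hd => by
        have := hlt d hd; omega)] at this
      rw [this]
      rw [Finset.filter_congr (q := fun d => r' a < r' d) (fun d hd => by have := hlt d hd; omega)]
    have key : ∀ r r' : ℕ → ℕ, (∀ c ∈ S, ∀ d ∈ S, (r c < r d ↔ r' c < r' d)) →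
        (S.filter (fun d => r a < r d)).card = (S.filter (fun d => r' a < r' d)).card →
        ∀ d ∈ S, r a < r d → r' a < r' d := by
      intro r r' ih' hU d hd hrd
      by_contra hn
      have hsub : S.filter (fun d => r' a < r' d) ⊆ S.filter (fun d => r a < r d) := by
        intro f hf
        rw [Finset.mem_filter] at hf ⊢
        have := (ih' d hd f hf.1).2 (by omega)
        exact ⟨hf.1, by omega⟩
      have heq := Finset.eq_of_subset_of_card_le hsub hU.le
      have : d ∈ S.filter (fun d => r' a < r' d) := by
        rw [heq, Finset.mem_filter]; exact ⟨hd, hrd⟩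
      exact hn (Finset.mem_filter.1 this).2
    have hA : ∀ d ∈ S, (r a < r d ↔ r' a < r' d) := fun d hd =>
      ⟨key r r' ih' hU d hd, key r' r (fun c hc d hd => (ih' c hc d hd).symm) hU.symm d hd⟩
    have hN : ∀ d ∈ S, r a ≠ r d ∧ r' a ≠ r' d := fun d hd =>
      ⟨fun h => hne d hd (hr (by simp [hd]) (by simp) h.symm),
       fun h => hne d hd (hr' (by simp [hd]) (by simp) h.symm)⟩
    intro c hc d hd
    rcases Finset.mem_insert.1 hc with h1 | h1 <;> rcases Finset.mem_insert.1 hd with h2 | h2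
    · rw [h1, h2]; simp
    · rw [h1]; exact hA d h2
    · rw [h2]
      have := hA c h1
      have := hN c h1
      omega
    · exact ih' c h1 d h2

lemma rk_unique {b r r' : ℕ → ℕ} {S : Finset ℕ} (hb : Set.InjOn b S) (hr : Set.InjOn r S)
    (hr' : Set.InjOn r' S) (h : ∀ c ∈ S, r c < S.card) (h' : ∀ c ∈ S, r' c < S.card)
    (he : ∀ c ∈ S, cod S b r c = cod S b r' c) : ∀ c ∈ S, r c = r' c := by
  intro c hc
  rw [← rk_count hr h (h c hc).le, ← rk_count hr' h' (h' c hc).le]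
  congr 1
  exact Finset.filter_congr fun d hd => rk_order b r r' S hb hr hr' he d hd c hc

/-! ### Planar trees -/

/-- children of `a` -/
def ch (m : ℕ) (P : ℕ → ℕ) (a : ℕ) : Finset ℕ := (Finset.Icc 1 m).filter (fun d => P d = a)

lemma mem_ch {m : ℕ} {P : ℕ → ℕ} {a d : ℕ} : d ∈ ch m P a ↔ (1 ≤ d ∧ d ≤ m) ∧ P d = a := by
  simp [ch]

/-- rank functions -/
def RK (m : ℕ) (P R : ℕ → ℕ) : Prop := (∀ c, c ∉ Finset.Icc 1 m → R c = 0) ∧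
  ∀ a, Set.InjOn R (ch m P a) ∧ ∀ c ∈ ch m P a, R c < (ch m P a).card

def code (m : ℕ) (P R : ℕ → ℕ) (c : ℕ) : ℕ :=
  if c ∈ Finset.Icc 1 m then cod (ch m P (P c)) (bt P) R c else 0

lemma code_of {m : ℕ} {P R : ℕ → ℕ} {a c : ℕ} (h : c ∈ ch m P a) :
    code m P R c = cod (ch m P a) (bt P) R c := by
  rw [mem_ch] at h
  rw [code, if_pos (Finset.mem_Icc.2 h.1), h.2]

lemma bt_injOn {m : ℕ} {P : ℕ → ℕ} (hP : P ∈ Tr m) (a : ℕ) : Set.InjOn (bt P) (ch m P a) := by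
  intro c hc d hd h
  rw [Finset.mem_coe, mem_ch] at hc hd
  exact hP.1.sib_inj (by omega) (by omega) (by omega) h

lemma sibs_eq {m : ℕ} {P : ℕ → ℕ} {a c : ℕ} (h : c ∈ ch m P a) :
    (ch m P a).filter (fun d => bt P d < bt P c) = sibs m P c := by
  rw [mem_ch] at h
  ext d
  rw [Finset.mem_filter, mem_ch, mem_sibs, h.2, and_assoc]

lemma mem_ch_self {m : ℕ} {P : ℕ → ℕ} {c : ℕ} (h : c ∈ Finset.Icc 1 m) : c ∈ ch m P (P c) := by
  rw [mem_ch]; exact ⟨Finset.mem_Icc.1 h, rfl⟩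

lemma code_mem {m : ℕ} {P R : ℕ → ℕ} :
    code m P R ∈ FF m (fun c => Finset.range ((sibs m P c).card + 1)) := by
  rw [mem_FF]
  refine ⟨fun c hc => ?_, fun c hc => by rw [code, if_neg hc]⟩
  have h := mem_ch_self (P := P) hc
  rw [code_of h, Finset.mem_range, ← sibs_eq h, Nat.lt_succ_iff, cod]
  apply Finset.card_le_card
  intro d hd
  rw [Finset.mem_filter] at hd ⊢
  exact ⟨hd.1, hd.2.1⟩

lemma code_inj {m : ℕ} {P R R' : ℕ → ℕ} (hP : P ∈ Tr m) (hR : RK m P R) (hR' : RK m P R')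
    (h : code m P R = code m P R') : R = R' := by
  funext c
  by_cases hc : c ∈ Finset.Icc 1 m
  · apply rk_unique (bt_injOn hP (P c)) (hR.2 _).1 (hR'.2 _).1 (hR.2 _).2 (hR'.2 _).2 _ _
      (mem_ch_self hc)
    intro d hd
    rw [← code_of hd, ← code_of hd, h]
  · rw [hR.1 c hc, hR'.1 c hc]

lemma code_surj {m : ℕ} {P e : ℕ → ℕ} (hP : P ∈ Tr m)
    (he : e ∈ FF m (fun c => Finset.range ((sibs m P c).card + 1))) :
    ∃ R, RK m P R ∧ code m P R = e := by
  rw [mem_FF] at he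
  have h1 : ∀ a, ∃ r : ℕ → ℕ, Set.InjOn r (ch m P a) ∧ (∀ c ∈ ch m P a, r c < (ch m P a).card) ∧
      ∀ c ∈ ch m P a, cod (ch m P a) (bt P) r c = e c := by
    intro a
    apply rk_exists _ _ (bt_injOn hP a)
    intro c hc
    have := he.1 c (Finset.mem_Icc.2 (mem_ch.1 hc).1)
    rw [Finset.mem_range] at this
    rw [sibs_eq hc]; omega
  choose r hr1 hr2 hr3 using h1
  obtain ⟨R, hR0, hR1⟩ : ∃ R : ℕ → ℕ, (∀ c, c ∉ Finset.Icc 1 m → R c = 0) ∧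
      ∀ a, ∀ c ∈ ch m P a, R c = r a c := by
    refine ⟨fun c => if c ∈ Finset.Icc 1 m then r (P c) c else 0, ?_, ?_⟩
    · intro c hc
      simp only [if_neg hc]
    · intro a c hc
      rw [mem_ch] at hc
      simp only [if_pos (Finset.mem_Icc.2 hc.1), hc.2]
  refine ⟨R, ⟨hR0, fun a => ⟨?_, ?_⟩⟩, ?_⟩
  · intro c hc d hd h
    rw [hR1 a c hc, hR1 a d hd] at h
    exact hr1 a hc hd h
  · intro c hc
    rw [hR1 a c hc]; exact hr2 a c hc
  · funext c
    by_cases hc : c ∈ Finset.Icc 1 m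
    · have h := mem_ch_self (P := P) hc
      rw [code_of h, ← hr3 _ c h, cod, cod]
      congr 1
      apply Finset.filter_congr
      intro d hd
      rw [hR1 _ d hd, hR1 _ c h]
    · rw [code, if_neg hc, he.2 c hc]

section
variable {m : ℕ} (T : PlanarTree (m + 1))

lemma pl_mem : lift T.1.1 ∈ Tr m := lift_mem T.1.1 T.2.1 T.2.2.1

lemma pl_beta (a : Fin (m + 1)) : T.beta a = bt (lift T.1.1) a.val := beta_eq T.1.1 a

lemma pl_rk : RK m (lift T.1.1) (lift T.1.2) := by
  refine ⟨fun c hc => ?_, fun a => ?_⟩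
  · rw [Finset.mem_Icc] at hc
    rcases Nat.lt_or_ge c (m + 1) with h | h
    · have := T.2.2.2.1 ⟨c, h⟩ (by change c = 0; omega)
      rw [← lift_val] at this
      exact this
    · rw [lift, dif_neg (by omega)]
  · have hinj : Set.InjOn (lift T.1.2) (ch m (lift T.1.1) a) := by
      intro c hc d hd h
      rw [Finset.mem_coe, mem_ch] at hc hd
      have := T.2.2.2.2.1 ⟨c, by omega⟩ ⟨d, by omega⟩ (by change c ≠ 0; omega)
        (by change d ≠ 0; omega) (by
          apply Fin.ext
          rw [← lift_val, ← lift_val]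
          exact hc.2.trans hd.2.symm) (by
          apply Fin.ext
          rw [← lift_val, ← lift_val]
          exact h)
      exact congrArg Fin.val this
    refine ⟨hinj, fun c hc => ?_⟩
    have hc' := mem_ch.1 hc
    have hsub : Finset.range (lift T.1.2 c + 1) ⊆ (ch m (lift T.1.1) a).image (lift T.1.2) := by
      intro s hs
      rw [Finset.mem_range, Nat.lt_succ_iff] at hs
      rcases hs.lt_or_eq with hs | hs
      · have hcl : c < m + 1 := by omega
        have hv := lift_val T.1.2 ⟨c, hcl⟩
        have hb := (T.1.2 ⟨c, hcl⟩).2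
        simp only at hv
        obtain ⟨d, hd0, hd1, hd2⟩ := T.2.2.2.2.2 ⟨c, hcl⟩ (by change c ≠ 0; omega)
          ⟨s, by omega⟩ (by rw [Fin.lt_def]; change s < _; omega)
        rw [Finset.mem_image]
        refine ⟨d.val, ?_, ?_⟩
        · rw [mem_ch, lift_val, hd1, ← lift_val]
          exact ⟨by omega, hc'.2⟩
        · rw [lift_val, hd2]
      · rw [Finset.mem_image]; exact ⟨c, hc, hs.symm⟩
    have := Finset.card_le_card hsub
    rw [Finset.card_range, Finset.card_image_of_injOn hinj] at this
    omega

lemma exists_planar {P R : ℕ → ℕ} (hP : P ∈ Tr m) (hR : RK m P R) :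
    ∃ T : PlanarTree (m + 1), lift T.1.1 = P ∧ lift T.1.2 = R := by
  obtain ⟨p, h1, h2, h3⟩ := exists_lift hP
  have hRm : ∀ v, R v < m + 1 := by
    intro v
    by_cases hv : v ∈ Finset.Icc 1 m
    · have h4 := (hR.2 (P v)).2 v (mem_ch_self hv)
      have h5 : (ch m P (P v)).card ≤ (Finset.Icc 1 m).card := Finset.card_filter_le _ _
      rw [Nat.card_Icc] at h5
      omega
    · rw [hR.1 v hv]; omega
  have hl : lift (fun v : Fin (m + 1) => (⟨R v.val, hRm v.val⟩ : Fin (m + 1))) = R := by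
    funext v
    rw [lift]; split_ifs with h
    · rfl
    · exact (hR.1 v (by rw [Finset.mem_Icc]; omega)).symm
  have hch : ∀ c : Fin (m + 1), c.val ≠ 0 → c.val ∈ ch m P (p c).val := by
    intro c hc
    have := c.2
    rw [mem_ch, ← h1, lift_val]
    exact ⟨by omega, rfl⟩
  refine ⟨⟨(p, _), h2, h3, ?_, ?_, ?_⟩, h1, hl⟩
  · intro v hv
    change R v.val = 0
    exact hR.1 _ (by rw [Finset.mem_Icc]; omega)
  · intro c d hc hd hp hr
    apply Fin.ext
    have h4 := hch c hc
    have h5 := hch d hd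
    rw [← show p c = p d from hp] at h5
    exact (hR.2 _).1 h4 h5 (congrArg Fin.val hr)
  · intro c hc s hs
    have h4 := hch c hc
    have h5 := (hR.2 _).2 _ h4
    have h6 : s.val ∈ (ch m P (p c).val).image R := by
      rw [rk_image (hR.2 _).1 (hR.2 _).2, Finset.mem_range]
      have : s.val < R c.val := hs
      omega
    obtain ⟨d, hd, hds⟩ := Finset.mem_image.1 h6
    rw [mem_ch] at hd
    refine ⟨⟨d, by omega⟩, by change d ≠ 0; omega, ?_, ?_⟩
    · apply Fin.ext
      change (p _).val = (p c).val
      rw [← lift_val, h1]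
      exact hd.2
    · apply Fin.ext
      exact hds

lemma pl_elder (c : Fin (m + 1)) :
    T.Elder c ↔ c.val ≠ 0 ∧ code m (lift T.1.1) (lift T.1.2) c.val ≠ 0 := by
  have hc2 := c.2
  rw [PlanarTree.Elder]
  apply and_congr_right
  intro hc
  have hcm : c.val ∈ Finset.Icc 1 m := by rw [Finset.mem_Icc]; omega
  rw [code_of (mem_ch_self hcm), cod, ← Nat.pos_iff_ne_zero, Finset.card_pos]
  constructor
  · rintro ⟨k, hk0, hk1, hk2, hk3⟩
    have := k.2
    rw [pl_beta, pl_beta] at hk3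
    refine ⟨k.val, ?_⟩
    rw [Finset.mem_filter, mem_ch, lift_val, lift_val, lift_val, lift_val, hk1]
    exact ⟨⟨by omega, rfl⟩, hk3, hk2⟩
  · rintro ⟨k, hk⟩
    rw [Finset.mem_filter, mem_ch] at hk
    refine ⟨⟨k, by omega⟩, by change k ≠ 0; omega, ?_, ?_, ?_⟩
    · apply Fin.ext
      rw [← lift_val, ← lift_val]
      exact hk.1.2
    · rw [Fin.lt_def, ← lift_val, ← lift_val]
      exact hk.2.2
    · rw [pl_beta, pl_beta]; exact hk.2.1

lemma pl_eld : T.eld = ((Finset.Icc 1 m).filter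
    (fun c => ¬ code m (lift T.1.1) (lift T.1.2) c = 0)).card := by
  apply ncard_fin
  · exact sub_aux _
  · intro c
    have := c.2
    rw [pl_elder, Finset.mem_filter, Finset.mem_Icc]
    omega

lemma pl_young : T.youngRoot = (((Finset.Icc 1 m).filter
    (fun c => code m (lift T.1.1) (lift T.1.2) c = 0)).filter (fun c => lift T.1.1 c = 0)).card := by
  apply ncard_fin
  · exact (Finset.filter_subset _ _).trans (sub_aux _)
  · intro c
    have := c.2
    rw [pl_elder, Finset.mem_filter, Finset.mem_filter, Finset.mem_Icc, lift_val]
    omega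

lemma pl_impe : T.impe = ((((Finset.Icc 1 m).filter
    (fun c => code m (lift T.1.1) (lift T.1.2) c = 0)).filter (fun c => ¬ lift T.1.1 c = 0)).filter
      (fun c => bt (lift T.1.1) c < lift T.1.1 c)).card := by
  apply ncard_fin
  · exact (Finset.filter_subset _ _).trans ((Finset.filter_subset _ _).trans (sub_aux _))
  · intro c
    have := c.2
    rw [PlanarTree.ImproperEdge, pl_elder, Finset.mem_filter, Finset.mem_filter, Finset.mem_filter,
      Finset.mem_Icc, lift_val, pl_beta]
    omega

lemma pl_young_pos (hm : 1 ≤ m) : 1 ≤ T.youngRoot := by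
  have hT := pl_mem T
  have h1 := rch_pos hT hm
  obtain ⟨c, hc, hmin⟩ := Finset.exists_min_image (rch m (lift T.1.1)) (bt (lift T.1.1))
    (Finset.card_pos.1 h1)
  rw [mem_rch] at hc
  rw [pl_young, Nat.succ_le_iff, Finset.card_pos]
  refine ⟨c, ?_⟩
  have hci := Finset.mem_Icc.2 hc.1
  rw [Finset.mem_filter, Finset.mem_filter]
  refine ⟨⟨hci, ?_⟩, hc.2⟩
  rw [code_of (mem_ch_self hci), cod, Finset.card_eq_zero, Finset.filter_eq_empty_iff]
  intro d hd h
  rw [mem_ch, hc.2] at hd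
  have := hmin d (mem_rch.2 hd)
  omega

lemma pl_weight (hm : 1 ≤ m) :
    X 0 * ((X 1 : Pol) ^ (T.impe + T.eld) * X 3 ^ T.eld
            * X 0 ^ (T.youngRoot - 1) * X 2 ^ (m - T.impe - T.youngRoot - T.eld))
    = ∏ c ∈ Finset.Icc 1 m, gw (X 0) (X 1) (X 2) (X 1 * X 3) (lift T.1.1) c
        (code m (lift T.1.1) (lift T.1.2) c) := by
  simp only [gw, wt]
  rw [Finset.prod_ite, Finset.prod_ite, Finset.prod_ite]
  simp only [Finset.prod_const]
  have e1 := Finset.card_filter_add_card_filter_not (s := Finset.Icc 1 m)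
    (fun c => code m (lift T.1.1) (lift T.1.2) c = 0)
  have e2 := Finset.card_filter_add_card_filter_not (s := (Finset.Icc 1 m).filter
    (fun c => code m (lift T.1.1) (lift T.1.2) c = 0)) (fun c => lift T.1.1 c = 0)
  have e3 := Finset.card_filter_add_card_filter_not (s := ((Finset.Icc 1 m).filter
    (fun c => code m (lift T.1.1) (lift T.1.2) c = 0)).filter (fun c => ¬ lift T.1.1 c = 0))
    (fun c => bt (lift T.1.1) c < lift T.1.1 c)
  rw [← pl_impe] at e3 ⊢
  rw [← pl_young] at e2 ⊢
  rw [← pl_eld] at e1 ⊢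
  rw [Nat.card_Icc] at e1
  rw [show m - T.impe - T.youngRoot - T.eld = ((((Finset.Icc 1 m).filter
    (fun c => code m (lift T.1.1) (lift T.1.2) c = 0)).filter (fun c => ¬ lift T.1.1 c = 0)).filter
    (fun c => ¬ bt (lift T.1.1) c < lift T.1.1 c)).card by omega]
  obtain ⟨d, hd⟩ := Nat.exists_eq_add_of_le' (pl_young_pos T hm)
  rw [hd, Nat.add_sub_cancel, mul_pow]
  ring

end

lemma rhs_eq (m : ℕ) (hm : 1 ≤ m) :
    X 0 * ∑ T : PlanarTree (m + 1),
          (X 1 : MvPolynomial (Fin 4) ℚ) ^ (T.impe + T.eld) * X 3 ^ T.eld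
            * X 0 ^ (T.youngRoot - 1) * X 2 ^ (m - T.impe - T.youngRoot - T.eld)
    = aeval ![(X 0 : Pol), X 1 + X 1 * X 3, X 1, X 2] (K m) := by
  rw [← sum_main (m := m) (X 0) (X 1) (X 2) (X 1 * X 3), Finset.mul_sum]
  have h1 : ∀ p ∈ TrF m, ∏ c ∈ Finset.Icc 1 m,
      (wt (X 0) (X 1) (X 2) p c + ((sibs m p c).card : Pol) * (X 1 * X 3))
      = ∑ e ∈ FF m (fun c => Finset.range ((sibs m p c).card + 1)),
        ∏ c ∈ Finset.Icc 1 m, gw (X 0) (X 1) (X 2) (X 1 * X 3) p c (e c) := by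
    intro p _
    rw [← expand m _ (fun c d => gw (X 0) (X 1) (X 2) (X 1 * X 3) p c d)]
    apply Finset.prod_congr rfl
    intro c _
    rw [Finset.sum_range_succ']
    simp [gw, add_comm]
  rw [Finset.sum_congr rfl h1, Finset.sum_sigma']
  apply Finset.sum_bij
    (fun T _ => (⟨lift T.1.1, code m (lift T.1.1) (lift T.1.2)⟩ : (_ : ℕ → ℕ) × (ℕ → ℕ)))
  · intro T _
    rw [Finset.mem_sigma]
    exact ⟨mem_TrF.2 (pl_mem T), code_mem⟩
  · intro T _ T' _ h
    rw [Sigma.mk.injEq] at h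
    obtain ⟨hp, hc⟩ := h
    have hc := eq_of_heq hc
    have hrk := pl_rk T'
    rw [← hp] at hc hrk
    have hr := code_inj (pl_mem T) (pl_rk T) hrk hc
    exact Subtype.ext (Prod.ext (lift_inj hp) (lift_inj hr))
  · rintro ⟨P, e⟩ h
    rw [Finset.mem_sigma] at h
    have hP := mem_TrF.1 h.1
    obtain ⟨R, hR, hRe⟩ := code_surj hP h.2
    obtain ⟨T, hT1, hT2⟩ := exists_planar hP hR
    refine ⟨T, Finset.mem_univ _, ?_⟩
    rw [hT1, hT2, hRe]
  · intro T _
    exact pl_weight T hm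

end RT

/-- For every `n > 1`, with `x = X 0`, `y = X 1`, `z = X 2`, `t = X 3`,
`Σ_{T ∈ C_{n+1}} y^{impe T} (t+1)^{impp T} x^{deg_T(1)-1} z^{lead T - deg_T(1) - 1}
 = Σ_{T ∈ O_{n+1}} y^{impe T + eld T} t^{eld T} x^{young_T(1)-1}
     z^{n - impe T - young_T(1) - eld T}`. -/
theorem sum_cayleyTree_eq_sum_planarTree (n : ℕ) (hn : 1 < n) :
    ∑ T : CayleyTree (n + 1),
        (X 1 : MvPolynomial (Fin 4) ℚ) ^ T.impe * (X 3 + 1) ^ T.impp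
          * X 0 ^ (T.degRoot - 1) * X 2 ^ (T.lead - T.degRoot - 1)
      = ∑ T : PlanarTree (n + 1),
          (X 1 : MvPolynomial (Fin 4) ℚ) ^ (T.impe + T.eld) * X 3 ^ T.eld
            * X 0 ^ (T.youngRoot - 1) * X 2 ^ (n - T.impe - T.youngRoot - T.eld) := by
  have hm : 1 ≤ n := hn.le
  exact mul_left_cancel₀ (X_ne_zero (R := ℚ) (0 : Fin 4))
    ((RT.lhs_eq n hm).trans (RT.rhs_eq n hm).symm)

end
end

section
/- For every n ≥ 1, Q_n(x,y,z,t) = Σ_{T ∈ O_{n+1}} x^{young_T(1)-1} t^{eld(T)} y^{impe(T)} z^{n - young_T(1) - eld(T) - impe(T)}, where the sum is over all planar trees of size n+1 rooted at 1. -/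
noncomputable section

open MvPolynomial Function

/-! ### Ordered forests with natural number labels -/

/-- Ordered labelled forests, in first child / next brother form. -/
inductive Fo : Type
  | nil : Fo
  | cons (a : ℕ) (c r : Fo) : Fo

namespace Fo

/-- Multiset of labels. -/
def lab : Fo → Multiset ℕ
  | nil => 0
  | cons a c r => a ::ₘ (lab c + lab r)

/-- Smallest label. -/
def minF : Fo → WithTop ℕ
  | nil => ⊤
  | cons a c r => min (min (a : WithTop ℕ) (minF c)) (minF r)

lemma minF_lt_iff (F : Fo) (x : WithTop ℕ) : F.minF < x ↔ ∃ y ∈ F.lab, (y : WithTop ℕ) < x := by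
  induction F with
  | nil => simp [minF, lab]
  | cons a c r ihc ihr =>
    simp only [minF, lab, min_lt_iff, ihc, ihr, Multiset.mem_cons, Multiset.mem_add]
    grind

lemma le_minF_iff (F : Fo) (x : WithTop ℕ) : x ≤ F.minF ↔ ∀ y ∈ F.lab, x ≤ (y : WithTop ℕ) := by
  have := minF_lt_iff F x
  rw [← not_iff_not, not_le, this]
  push Not
  rfl

lemma minF_mem (F : Fo) : F.minF = ⊤ ∨ ∃ y ∈ F.lab, F.minF = (y : WithTop ℕ) := by
  induction F with
  | nil => simp [minF]
  | cons a c r ihc ihr =>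
    simp only [minF, lab, Multiset.mem_cons, Multiset.mem_add]
    rcases min_choice (min (a : WithTop ℕ) c.minF) r.minF with h | h <;> rw [h]
    · rcases min_choice (a : WithTop ℕ) c.minF with h' | h' <;> rw [h']
      · right; exact ⟨a, by simp, rfl⟩
      · rcases ihc with h0 | ⟨y, hy, h0⟩
        · left; exact h0
        · right; exact ⟨y, by simp [hy], h0⟩
    · rcases ihr with h0 | ⟨y, hy, h0⟩
      · left; exact h0
      · right; exact ⟨y, by simp [hy], h0⟩

lemma minF_congr {F G : Fo} (h : F.lab = G.lab) : F.minF = G.minF := by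
  apply le_antisymm
  · rw [le_minF_iff, ← h]; exact (le_minF_iff F _).1 le_rfl
  · rw [le_minF_iff, h]; exact (le_minF_iff G _).1 le_rfl

/-- `β` of the tree with root `a` and children `c`. -/
def be (a : ℕ) (c : Fo) : WithTop ℕ := min (a : WithTop ℕ) (minF c)

lemma minF_cons (a : ℕ) (c r : Fo) : (cons a c r).minF = min (be a c) r.minF := rfl

lemma minF_nil : nil.minF = ⊤ := rfl

lemma minF_single (a : ℕ) (c : Fo) : (cons a c nil).minF = be a c := by
  simp [minF_cons, minF_nil]

lemma be_le (a : ℕ) (c : Fo) : be a c ≤ a := min_le_left _ _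

/-- The `β`s of disjoint pieces differ. -/
lemma be_ne_minF {a : ℕ} {c r : Fo} (h : (cons a c r).lab.Nodup) : be a c ≠ r.minF := by
  intro e
  have h1 : (cons a c nil).minF = be a c := by simp [minF, be]
  have h2 := minF_mem (cons a c nil)
  rw [h1] at h2
  have h3 := minF_mem r
  simp only [lab, Multiset.nodup_cons, Multiset.nodup_add, Multiset.mem_add, Multiset.mem_cons,
    add_zero, Multiset.disjoint_left] at h h2
  have h4 : be a c ≠ ⊤ := ne_of_lt (lt_of_le_of_lt (be_le a c) (WithTop.coe_lt_top a))
  rcases h2 with h2 | ⟨y, hy, hy'⟩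
  · exact h4 h2
  rcases h3 with h3 | ⟨w, hw, hw'⟩
  · exact h4 (e.trans h3)
  have : y = w := by
    have := hy'.symm.trans (e.trans hw')
    exact_mod_cast this
  subst this
  grind

open Classical in
/-- Weight of a vertex with `β = b`, whose right brothers form `r`, with parent `v`. -/
def om (v : ℕ) (b : WithTop ℕ) (r : WithTop ℕ) : MvPolynomial (Fin 4) ℚ :=
  if r < b then X 3 else if b < v then X 1 else if v = 0 then X 0 else X 2

/-- Weight of a forest hanging from vertex `v`. -/
def W (v : ℕ) : Fo → MvPolynomial (Fin 4) ℚ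
  | nil => 1
  | cons a c r => om v (be a c) r.minF * (W a c * W v r)

open Classical in
/-- Number of top improper edges. -/
def top (v : ℕ) : Fo → ℕ
  | nil => 0
  | cons a c r => (if ¬ r.minF < be a c ∧ be a c < v then 1 else 0) + top v r

/-- Number of deep improper edges. -/
def deep : Fo → ℕ
  | nil => 0
  | cons a c r => top a c + deep c + deep r

open Classical in
/-- Ways of splitting the vertex `a` with children `c` at an improper edge. -/
def sp (a : ℕ) : Fo → List Fo
  | nil => []
  | cons p d s =>
    (if ¬ s.minF < be p d ∧ be p d < a then
      [cons p d (cons a s nil), cons a s (cons p d nil)] else []) ++ (sp a s).map (cons p d)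

/-- All insertions of the largest label `m`. -/
def ins (m : ℕ) : Fo → List Fo
  | nil => [cons m nil nil]
  | cons a c r =>
    cons m nil (cons a c r) ::
      ((ins m c).map (fun c' => cons a c' r) ++ ((ins m r).map (fun r' => cons a c r') ++
        (cons a c nil :: sp a c).map (fun w => cons m w r)))

lemma lab_sp {a : ℕ} {c w : Fo} (h : w ∈ sp a c) : w.lab = a ::ₘ c.lab := by
  induction c generalizing w with
  | nil => simp [sp] at h
  | cons p d s _ ih =>
    simp only [sp, List.mem_append, List.mem_map] at h
    rcases h with h | ⟨w', hw', rfl⟩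
    · split_ifs at h
      · simp only [List.mem_cons, List.not_mem_nil, or_false] at h
        rcases h with rfl | rfl <;> ext x <;> simp [lab, Multiset.count_cons] <;> ring
      · simp at h
    · ext x; simp [lab, ih hw', Multiset.count_cons]; ring

lemma lab_ins {m : ℕ} {F G : Fo} (h : G ∈ ins m F) : G.lab = m ::ₘ F.lab := by
  induction F generalizing G with
  | nil => simp [ins] at h; subst h; simp [lab]
  | cons a c r ihc ihr =>
    simp only [ins, List.mem_append, List.mem_map, List.mem_cons] at h
    rcases h with rfl | ⟨c', h, rfl⟩ | ⟨r', h, rfl⟩ | ⟨w, rfl | h, rfl⟩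
    · simp [lab]
    · ext x; simp [lab, ihc h, Multiset.count_cons]; ring
    · ext x; simp [lab, ihr h, Multiset.count_cons]; ring
    · ext x; simp [lab, Multiset.count_cons]
    · ext x; simp [lab, lab_sp h, Multiset.count_cons]

lemma minF_of_lab_cons {a : ℕ} {c w : Fo} (h : w.lab = a ::ₘ c.lab) : w.minF = min (a : WithTop ℕ) c.minF := by
  have : w.lab = (cons a c nil).lab := by simp [h, lab]
  rw [minF_congr this]; simp [minF]

lemma sp_minF_lt {a : ℕ} {c w : Fo} (h : w ∈ sp a c) : c.minF < a := by
  induction c generalizing w with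
  | nil => simp [sp] at h
  | cons p d s _ ih =>
    simp only [sp, List.mem_append, List.mem_map] at h
    rw [minF_cons]
    rcases h with h | ⟨w', hw', rfl⟩
    · split_ifs at h with h'
      · exact lt_of_le_of_lt (min_le_left _ _) h'.2
      · simp at h
    · exact lt_of_le_of_lt (min_le_right _ _) (ih hw')

lemma lab_nodup_cons {a : ℕ} {c r : Fo} (h : (cons a c r).lab.Nodup) :
    c.lab.Nodup ∧ r.lab.Nodup ∧ a ∉ c.lab ∧ a ∉ r.lab ∧ (∀ x ∈ c.lab, x ∉ r.lab) := by
  simp only [lab, Multiset.nodup_cons, Multiset.nodup_add, Multiset.mem_add,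
    Multiset.disjoint_left] at h
  grind

lemma sum_sp {m a : ℕ} {c : Fo} (ham : a < m) (hn : (cons a c nil).lab.Nodup) :
    ((sp a c).map (W m)).sum = (top a c : MvPolynomial (Fin 4) ℚ) * ((X 1 + X 3) * W a c) := by
  have ham' : (a : WithTop ℕ) < m := by exact_mod_cast ham
  induction c with
  | nil => simp [sp, top]
  | cons p d s _ ih =>
    have h1 := lab_nodup_cons hn
    have h2 := lab_nodup_cons h1.1
    have hne := be_ne_minF h1.1
    have hn' : (cons a s nil).lab.Nodup := by
      simp only [lab, add_zero, Multiset.nodup_cons]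
      refine ⟨?_, h2.2.1⟩
      have := h1.2.2.1
      simp [lab] at this
      tauto
    have key : ((sp a s).map (fun w => W m (cons p d w))).sum =
        om a (be p d) s.minF * W p d * ((sp a s).map (W m)).sum := by
      rw [← List.sum_map_mul_left]
      congr 1
      apply List.map_congr_left
      intro w hw
      have e1 := minF_of_lab_cons (lab_sp hw)
      have e2 := sp_minF_lt hw
      simp only [W, e1, min_eq_right e2.le, om]
      by_cases hh : s.minF < be p d
      · simp [hh]; ring
      · have h3 : be p d < a := lt_of_le_of_lt (not_lt.1 hh) e2
        have h4 : be p d < m := h3.trans ham'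
        simp [hh, h3, h4]; ring
    simp only [sp, List.map_append, List.sum_append, List.map_map, Function.comp_def]
    rw [key, ih hn']
    by_cases hh : ¬ s.minF < be p d ∧ be p d < a
    · have h4 : be p d < m := hh.2.trans ham'
      have h5 : be p d < s.minF := lt_of_le_of_ne (not_lt.1 hh.1) hne
      have h6 : be a s < m := lt_of_le_of_lt (be_le _ _) ham'
      have h7 : be p d < be a s := lt_min hh.2 h5
      have w1 : W m (cons p d (cons a s nil)) = X 1 * (W p d * (X 1 * W a s)) := by
        simp [W, om, minF_single, minF_nil, h4, h6, not_lt_of_gt h7]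
      have w2 : W m (cons a s (cons p d nil)) = X 3 * (W a s * (X 1 * W p d)) := by
        simp [W, om, minF_single, minF_nil, h4, h7]
      have w3 : W a (cons p d s) = X 1 * (W p d * W a s) := by
        simp [W, om, hh.1, hh.2]
      have w4 : om a (be p d) s.minF = X 1 := by simp [om, hh.1, hh.2]
      rw [if_pos hh, w3, w4]
      simp only [top, if_pos hh, List.map_cons, List.map_nil, List.sum_cons, List.sum_nil, w1, w2]
      push_cast
      ring
    · simp only [top, if_neg hh, W]
      simp
      ring

/-- Number of vertices. -/
def size (F : Fo) : ℕ := Multiset.card F.lab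

lemma top_zero (F : Fo) : top 0 F = 0 := by
  induction F with
  | nil => rfl
  | cons a c r _ ih => simp [top, ih]

lemma pderiv_W (v : ℕ) (F : Fo) : X 1 * pderiv 1 (W v F) = ((top v F + deep F : ℕ) : MvPolynomial (Fin 4) ℚ) * W v F := by
  induction F generalizing v with
  | nil => simp [W, top, deep]
  | cons a c r ihc ihr =>
    have h1 := ihc a
    have h2 := ihr v
    have h3 : X 1 * pderiv 1 (om v (be a c) r.minF) = (if ¬ r.minF < be a c ∧ be a c < v then 1 else 0) * om v (be a c) r.minF := by
      unfold om
      by_cases g1 : r.minF < be a c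
      · simp [g1, pderiv_X]
      by_cases g2 : be a c < v
      · simp [g1, g2]
      by_cases g3 : v = 0
      · simp [g3, g1, pderiv_X]
      · simp [g1, g2, g3, pderiv_X]
    simp only [W, Derivation.leibniz, smul_eq_mul, top, deep]
    push_cast at h1 h2 ⊢
    linear_combination (W a c * W v r) * h3 + om v (be a c) r.minF * W v r * h1 + om v (be a c) r.minF * W a c * h2

lemma om_insert (v m : ℕ) (b r : WithTop ℕ) (hb : b < m) : om v b (min (m : WithTop ℕ) r) = om v b r := by
  unfold om
  have : min (m : WithTop ℕ) r < b ↔ r < b := by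
    simp [not_lt_of_gt hb]
  simp [this]

lemma sum_ins {m v : ℕ} {F : Fo} (hv : v < m) (hm : ∀ x ∈ F.lab, x < m ∧ x ≠ 0) (hn : F.lab.Nodup) :
    ((ins m F).map (W v)).sum = ((if v = 0 then X 0 else X 2) + (size F : MvPolynomial (Fin 4) ℚ) * (X 2 + (X 1 + X 3))
      + (X 1 + X 3) * (deep F : MvPolynomial (Fin 4) ℚ)) * W v F := by
  induction F generalizing v with
  | nil =>
    have : ¬ ((m : WithTop ℕ) < v) := by exact_mod_cast not_lt_of_gt hv
    simp [ins, W, size, lab, deep, om, minF, be, this]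
  | cons a c r ihc ihr =>
    have h1 := lab_nodup_cons hn
    have ha := hm a (by simp [lab])
    have ham' : (a : WithTop ℕ) < m := by exact_mod_cast ha.1
    have hb : be a c < m := lt_of_le_of_lt (be_le _ _) ham'
    have ec := ihc (v := a) ha.1 (fun x hx => hm x (by simp [lab, hx])) h1.1
    have er := ihr (v := v) hv (fun x hx => hm x (by simp [lab, hx])) h1.2.1
    have es := sum_sp (c := c) ha.1 (by simp [lab, h1.1, h1.2.2.1])
    have k1 : ((ins m c).map (fun c' => W v (cons a c' r))).sum =
        om v (be a c) r.minF * W v r * ((ins m c).map (W a)).sum := by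
      rw [← List.sum_map_mul_left]
      congr 1
      apply List.map_congr_left
      intro w hw
      have e1 := minF_of_lab_cons (lab_ins hw)
      have : be a w = be a c := by
        unfold be; rw [e1, min_left_comm, min_eq_right]
        exact le_trans (min_le_left _ _) ham'.le
      simp only [W, this]; ring
    have k2 : ((ins m r).map (fun r' => W v (cons a c r'))).sum =
        om v (be a c) r.minF * W a c * ((ins m r).map (W v)).sum := by
      rw [← List.sum_map_mul_left]
      congr 1
      apply List.map_congr_left
      intro w hw
      have e1 := minF_of_lab_cons (lab_ins hw)
      simp only [W, e1, om_insert _ _ _ _ hb]; ring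
    have k3 : ((cons a c nil :: sp a c).map (fun w => W v (cons m w r))).sum =
        om v (be a c) r.minF * W v r * ((cons a c nil :: sp a c).map (W m)).sum := by
      rw [← List.sum_map_mul_left]
      congr 1
      apply List.map_congr_left
      intro w hw
      have e0 : w.lab = a ::ₘ c.lab := by
        rcases List.mem_cons.1 hw with rfl | hw
        · simp [lab]
        · exact lab_sp hw
      have e1 := minF_of_lab_cons e0
      have : be m w = be a c := by
        unfold be; rw [e1, min_eq_right]
        exact le_trans (min_le_left _ _) ham'.le
      simp only [W, this]; ring
    have k4 : W v (cons m nil (cons a c r)) = X 3 * W v (cons a c r) := by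
      have : (cons a c r).minF < be m nil := by
        simp only [be, minF, min_top_right]
        exact lt_of_le_of_lt (min_le_left _ _) hb
      rw [W, om, if_pos this, W]; simp
    have k5 : W m (cons a c nil) = X 1 * W a c := by
      simp [W, om, minF, hb]
    simp only [ins, List.map_cons, List.map_append, List.sum_cons, List.sum_append, List.map_map, Function.comp_def] at k3 ⊢
    rw [k1, k2, k3, k4, k5, ec, er, es]
    simp only [W, size, lab, deep, Multiset.card_cons, Multiset.card_add, if_neg ha.2]
    push_cast
    ring

end Fo

namespace Fo

open Classical in
/-- Merge the top vertex with its relevant child. -/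
def merge : Fo → ℕ × Fo
  | nil => (0, nil)
  | cons a u nil => (a, u)
  | cons p d (cons q e nil) => if be q e < be p d then (p, cons q e d) else (q, cons p d e)
  | cons p d (cons q e (cons b f g)) =>
      ((merge (cons q e (cons b f g))).1, cons p d (merge (cons q e (cons b f g))).2)

/-- Result of removing the top vertex with children `c` and right brothers `r`. -/
def glue (c r : Fo) : Fo :=
  match c with
  | nil => r
  | cons p d s => cons (merge (cons p d s)).1 (merge (cons p d s)).2 r

open Classical in
/-- Removal of the label `m`. -/
def rem (m : ℕ) : Fo → Fo
  | nil => nil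
  | cons b c r => if b = m then glue c r else
      if m ∈ c.lab then cons b (rem m c) r else cons b c (rem m r)

lemma sp_shape {a : ℕ} {c w : Fo} (h : w ∈ sp a c) :
    ∃ p d q e s, w = cons p d (cons q e s) := by
  induction c generalizing w with
  | nil => simp [sp] at h
  | cons p d s _ ih =>
    simp only [sp, List.mem_append, List.mem_map] at h
    rcases h with h | ⟨w', hw', rfl⟩
    · split_ifs at h with h'
      · simp only [List.mem_cons, List.not_mem_nil, or_false] at h
        rcases h with rfl | rfl
        · exact ⟨_, _, _, _, _, rfl⟩
        · exact ⟨_, _, _, _, _, rfl⟩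
      · simp at h
    · obtain ⟨p', d', q, e, s', rfl⟩ := ih hw'
      exact ⟨_, _, _, _, _, rfl⟩

lemma merge_sp {a : ℕ} {c w : Fo} (hn : c.lab.Nodup) (h : w ∈ sp a c) : merge w = (a, c) := by
  induction c generalizing w with
  | nil => simp [sp] at h
  | cons p d s _ ih =>
    have h2 := lab_nodup_cons hn
    have hne := be_ne_minF hn
    simp only [sp, List.mem_append, List.mem_map] at h
    rcases h with h | ⟨w', hw', rfl⟩
    · split_ifs at h with hh
      · have h5 : be p d < s.minF := lt_of_le_of_ne (not_lt.1 hh.1) hne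
        have h7 : be p d < be a s := lt_min hh.2 h5
        simp only [List.mem_cons, List.not_mem_nil, or_false] at h
        rcases h with rfl | rfl
        · simp [merge, not_lt_of_gt h7]
        · simp [merge, h7]
      · simp at h
    · have := ih h2.2.1 hw'
      obtain ⟨p', d', q, e, s', rfl⟩ := sp_shape hw'
      simp [merge, this]

lemma mem_sp_merge {p : ℕ} {d s : Fo} (hn : (cons p d s).lab.Nodup) :
    cons p d s = cons (merge (cons p d s)).1 (merge (cons p d s)).2 nil ∨
      cons p d s ∈ sp (merge (cons p d s)).1 (merge (cons p d s)).2 := by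
  induction s generalizing p d with
  | nil => left; simp [merge]
  | cons q e s _ ih =>
    right
    cases s with
    | nil =>
      have hne := be_ne_minF hn
      have hm : (cons q e nil).minF = be q e := by simp [minF, be]
      rw [hm] at hne
      by_cases h : be q e < be p d
      · have h1 : ¬ d.minF < be q e := not_lt.2 (h.le.trans (min_le_right _ _))
        have h2 : be q e < p := lt_of_lt_of_le h (be_le _ _)
        simp [merge, h, sp, h1, h2]
      · have h' : be p d < be q e := lt_of_le_of_ne (not_lt.1 h) hne
        have h1 : ¬ e.minF < be p d := not_lt.2 (h'.le.trans (min_le_right _ _))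
        have h2 : be p d < q := lt_of_lt_of_le h' (be_le _ _)
        simp [merge, h, sp, h1, h2]
    | cons b f g =>
      have h2 := lab_nodup_cons hn
      rcases ih h2.2.1 with h | h
      · simp at h
      · simp only [merge, sp, List.mem_append, List.mem_map]
        right
        exact ⟨_, h, rfl⟩

lemma rem_ins {m : ℕ} {F G : Fo} (hm : m ∉ F.lab) (hn : F.lab.Nodup) (h : G ∈ ins m F) :
    rem m G = F := by
  induction F generalizing G with
  | nil => simp [ins] at h; subst h; simp [rem, glue]
  | cons a c r ihc ihr =>
    have h1 := lab_nodup_cons hn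
    have hm' : m ≠ a ∧ m ∉ c.lab ∧ m ∉ r.lab := by simpa [lab] using hm
    simp only [ins, List.mem_append, List.mem_map, List.mem_cons] at h
    rcases h with rfl | ⟨c', h, rfl⟩ | ⟨r', h, rfl⟩ | ⟨w, rfl | h, rfl⟩
    · simp [rem, glue]
    · have : m ∈ c'.lab := by rw [lab_ins h]; simp
      simp [rem, hm'.1.symm, this, ihc hm'.2.1 h1.1 h]
    · simp [rem, hm'.1.symm, hm'.2.1, ihr hm'.2.2 h1.2.1 h]
    · simp [rem, glue, merge]
    · have := merge_sp h1.1 h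
      obtain ⟨p', d', q, e, s', rfl⟩ := sp_shape h
      simp [rem, glue, this]

lemma ins_rem {m : ℕ} {G : Fo} (hm : m ∈ G.lab) (hn : G.lab.Nodup) : G ∈ ins m (rem m G) := by
  induction G with
  | nil => simp [lab] at hm
  | cons b c r ihc ihr =>
    have h1 := lab_nodup_cons hn
    by_cases hb : b = m
    · subst hb
      simp only [rem, if_true]
      cases c with
      | nil =>
        simp only [glue]
        cases r <;> simp [ins]
      | cons p d s =>
        simp only [glue, ins, List.mem_append, List.mem_map, List.mem_cons]
        right; right; right
        exact ⟨_, mem_sp_merge h1.1, rfl⟩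
    · by_cases hc : m ∈ c.lab
      · simp only [rem, if_neg hb, if_pos hc, ins, List.mem_append, List.mem_map, List.mem_cons]
        right; left
        exact ⟨_, ihc hc h1.1, rfl⟩
      · have hr : m ∈ r.lab := by
          simp only [lab, Multiset.mem_cons, Multiset.mem_add] at hm
          rcases hm with h | h | h
          · exact absurd h.symm hb
          · exact absurd h hc
          · exact h
        simp only [rem, if_neg hb, if_neg hc, ins, List.mem_append, List.mem_map, List.mem_cons]
        right; right; left
        exact ⟨_, ihr hr h1.2.1, rfl⟩

lemma sp_nodup {a : ℕ} {c : Fo} (ha : a ∉ c.lab) : (sp a c).Nodup := by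
  induction c with
  | nil => simp [sp]
  | cons p d s _ ih =>
    have ha' : a ≠ p ∧ a ∉ d.lab ∧ a ∉ s.lab := by simpa [lab] using ha
    have i1 := ih ha'.2.2
    simp only [sp]
    rw [List.nodup_append]
    refine ⟨?_, i1.map (fun x y h => by simpa using h), ?_⟩
    · split_ifs
      · simp [ha'.1.symm]
      · simp
    · intro x hx y hy e
      subst e
      simp only [List.mem_map] at hy
      obtain ⟨w, hw, rfl⟩ := hy
      obtain ⟨p', d', q, e, s', rfl⟩ := sp_shape hw
      split_ifs at hx
      · simp at hx
      · simp at hx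

lemma ins_nodup {m : ℕ} {F : Fo} (hm : m ∉ F.lab) (hn : F.lab.Nodup) : (ins m F).Nodup := by
  induction F with
  | nil => simp [ins]
  | cons a c r ihc ihr =>
    have h1 := lab_nodup_cons hn
    have hm' : m ≠ a ∧ m ∉ c.lab ∧ m ∉ r.lab := by simpa [lab] using hm
    have i1 := ihc hm'.2.1 h1.1
    have i2 := ihr hm'.2.2 h1.2.1
    have i3 : (cons a c nil :: sp a c).Nodup := by
      rw [List.nodup_cons]
      refine ⟨fun h => ?_, sp_nodup h1.2.2.1⟩
      obtain ⟨p', d', q, e, s', h⟩ := sp_shape h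
      simp at h
    have hc : ∀ G ∈ ins m c, m ∈ G.lab := fun G h => by rw [lab_ins h]; simp
    have hr : ∀ G ∈ ins m r, m ∈ G.lab := fun G h => by rw [lab_ins h]; simp
    have hs : ∀ w ∈ cons a c nil :: sp a c, w ≠ nil := by
      intro w hw e
      subst e
      rcases List.mem_cons.1 hw with h | h
      · simp at h
      · obtain ⟨p', d', q, e, s', h⟩ := sp_shape h
        simp at h
    simp only [ins]
    rw [List.nodup_cons, List.nodup_append, List.nodup_append]
    refine ⟨?_, i1.map (fun x y h => by simpa using h), ⟨i2.map (fun x y h => by simpa using h),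
      i3.map (fun x y h => by simpa using h), ?_⟩, ?_⟩
    · simp only [List.mem_append, List.mem_map, not_or, not_exists, not_and]
      refine ⟨fun x _ h => ?_, fun x _ h => ?_, fun x hx h => ?_⟩
      · simp at h; exact hm'.1 h.1.symm
      · simp at h; exact hm'.1 h.1.symm
      · simp at h; exact hs x hx h.1
    · intro x hx y hy e
      subst e
      simp only [List.mem_map] at hx hy
      obtain ⟨w, _, rfl⟩ := hx
      obtain ⟨w', _, h⟩ := hy
      simp at h
      exact hm'.1 h.1
    · intro x hx y hy e
      subst e
      simp only [List.mem_append, List.mem_map] at hx hy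
      obtain ⟨w, hw, rfl⟩ := hx
      rcases hy with ⟨w', _, h⟩ | ⟨w', _, h⟩
      · simp at h
        have := hc w hw
        rw [← h.1] at this
        exact hm'.2.1 this
      · simp at h
        exact hm'.1 h.1

lemma lab_rem {m : ℕ} {G : Fo} {s : Multiset ℕ} (h : G.lab = m ::ₘ s) (hn : G.lab.Nodup) :
    (rem m G).lab = s := by
  have h1 := ins_rem (m := m) (G := G) (by simp [h]) hn
  have := lab_ins h1
  rw [h] at this
  exact (Multiset.cons_inj_right m).1 this.symm

/-- The multiset `{1, ..., n}`. -/
def tgt : ℕ → Multiset ℕ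
  | 0 => 0
  | n + 1 => (n + 1) ::ₘ tgt n

lemma mem_tgt {n x : ℕ} : x ∈ tgt n ↔ x ≠ 0 ∧ x < n + 1 := by
  induction n with
  | zero => simp [tgt]
  | succ n ih => simp only [tgt, Multiset.mem_cons, ih]; omega

lemma tgt_nodup (n : ℕ) : (tgt n).Nodup := by
  induction n with
  | zero => simp [tgt]
  | succ n ih => simp [tgt, ih, mem_tgt]

lemma card_tgt (n : ℕ) : Multiset.card (tgt n) = n := by
  induction n with
  | zero => simp [tgt]
  | succ n ih => simp [tgt, ih]

/-- All forests labelled by `{1, ..., n}`. -/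
def S : ℕ → List Fo
  | 0 => [nil]
  | n + 1 => (S n).flatMap (ins (n + 1))

lemma mem_S {n : ℕ} {F : Fo} : F ∈ S n ↔ F.lab = tgt n := by
  induction n generalizing F with
  | zero => cases F <;> simp [S, tgt, lab]
  | succ n ih =>
    simp only [S, List.mem_flatMap, ih, tgt]
    constructor
    · rintro ⟨G, hG, h⟩
      rw [lab_ins h, hG]
    · intro h
      have hn : F.lab.Nodup := by rw [h]; exact tgt_nodup (n + 1)
      exact ⟨rem (n + 1) F, lab_rem h hn, ins_rem (by simp [h]) hn⟩

lemma S_nodup (n : ℕ) : (S n).Nodup := by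
  induction n with
  | zero => simp [S]
  | succ n ih =>
    simp only [S]
    have key : ∀ F ∈ S n, n + 1 ∉ F.lab ∧ F.lab.Nodup := by
      intro F hF
      rw [mem_S] at hF
      rw [hF]
      exact ⟨by simp [mem_tgt], tgt_nodup n⟩
    rw [List.nodup_flatMap]
    refine ⟨fun F hF => ins_nodup (key F hF).1 (key F hF).2, ?_⟩
    refine List.Pairwise.imp_of_mem ?_ ih
    intro F G hF hG hne x hx hy
    exact hne ((rem_ins (key F hF).1 (key F hF).2 hx).symm.trans
      (rem_ins (key G hG).1 (key G hG).2 hy))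

lemma sum_S_succ (n : ℕ) : ((S (n + 1)).map (W 0)).sum =
    (X 0 + C (n : ℚ) * X 2 + C (n : ℚ) * (X 1 + X 3)) * ((S n).map (W 0)).sum +
      (X 1 + X 3) * (X 1 * pderiv 1 ((S n).map (W 0)).sum) := by
  have h : ∀ l : List Fo, (∀ F ∈ l, F.lab = tgt n) → ((l.flatMap (ins (n + 1))).map (W 0)).sum =
    (X 0 + C (n : ℚ) * X 2 + C (n : ℚ) * (X 1 + X 3)) * (l.map (W 0)).sum +
      (X 1 + X 3) * (X 1 * pderiv 1 (l.map (W 0)).sum) := by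
    intro l
    induction l with
    | nil => simp
    | cons F l ih =>
      intro hl
      have hF : F.lab = tgt n := hl F (by simp)
      have e1 := sum_ins (m := n + 1) (v := 0) (F := F) (by omega)
        (by intro x hx; rw [hF, mem_tgt] at hx; omega) (by rw [hF]; exact tgt_nodup n)
      have e2 := pderiv_W 0 F
      simp only [top_zero, zero_add] at e2
      simp only [size, hF, card_tgt, if_true] at e1
      rw [List.flatMap_cons, List.map_append, List.sum_append, e1, ih (fun G hG => hl G (by simp [hG]))]
      simp only [List.map_cons, List.sum_cons, map_add, map_natCast]
      linear_combination -(X 1 + X 3) * e2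
  exact h (S n) (fun F hF => mem_S.1 hF)

lemma sum_S (n : ℕ) : ((S (n + 1)).map (W 0)).sum = X 0 * Qpoly (n + 1) := by
  induction n with
  | zero => simp [S, ins, W, Qpoly, om, be, minF]
  | succ n ih =>
    rw [sum_S_succ, ih, Qpoly]
    simp only [Derivation.leibniz, smul_eq_mul]
    have : pderiv 1 (X 0 : MvPolynomial (Fin 4) ℚ) = 0 := by simp [pderiv_X]
    rw [this]
    push_cast
    ring

end Fo

namespace PlanarTree

variable {n : ℕ} (T : PlanarTree n)

lemma root_fix {v : Fin n} (h : v.val = 0) : T.1.1 v = v := T.2.1 v h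

lemma reach (v : Fin n) : ∃ k, k < n ∧ (T.1.1^[k] v).val = 0 := T.2.2.1 v

lemma rank_root {v : Fin n} (h : v.val = 0) : (T.1.2 v).val = 0 := T.2.2.2.1 v h

lemma rank_inj {c d : Fin n} (hc : c.val ≠ 0) (hd : d.val ≠ 0) (h : T.1.1 c = T.1.1 d)
    (h' : (T.1.2 c).val = (T.1.2 d).val) : c = d := T.2.2.2.2.1 c d hc hd h (Fin.ext h')

lemma rank_seg {c : Fin n} (hc : c.val ≠ 0) {s : ℕ} (hs : s < (T.1.2 c).val) :
    ∃ d : Fin n, d.val ≠ 0 ∧ T.1.1 d = T.1.1 c ∧ (T.1.2 d).val = s := by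
  obtain ⟨d, h1, h2, h3⟩ := T.2.2.2.2.2 c hc ⟨s, hs.trans (T.1.2 c).2⟩ hs
  exact ⟨d, h1, h2, by rw [h3]⟩

lemma reach' (v : Fin n) : ∃ k, (T.1.1^[k] v).val = 0 := by
  obtain ⟨k, _, h⟩ := T.reach v
  exact ⟨k, h⟩

open Classical in
/-- Depth. -/
def dep (v : Fin n) : ℕ := Nat.find (T.reach' v)

open Classical in
lemma dep_lt (v : Fin n) : T.dep v < n := by
  obtain ⟨k, h, h'⟩ := T.reach v
  exact lt_of_le_of_lt (Nat.find_min' _ h') h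

open Classical in
lemma dep_eq_zero {v : Fin n} : T.dep v = 0 ↔ v.val = 0 := by
  simp [dep, Nat.find_eq_zero]

open Classical in
lemma dep_parent (v : Fin n) : T.dep (T.1.1 v) = T.dep v - 1 := by
  by_cases h : v.val = 0
  · rw [T.root_fix h, T.dep_eq_zero.2 h]
  · have h0 : T.dep v ≠ 0 := fun h' => h (T.dep_eq_zero.1 h')
    obtain ⟨k, hk⟩ := Nat.exists_eq_succ_of_ne_zero h0
    have h1 : (T.1.1^[T.dep v] v).val = 0 := Nat.find_spec (T.reach' v)
    rw [hk, iterate_succ_apply] at h1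
    have h2 : T.dep (T.1.1 v) ≤ k := Nat.find_min' _ h1
    have h3 : (T.1.1^[T.dep (T.1.1 v)] (T.1.1 v)).val = 0 := Nat.find_spec (T.reach' (T.1.1 v))
    rw [← iterate_succ_apply] at h3
    have h4 : T.dep v ≤ T.dep (T.1.1 v) + 1 := Nat.find_min' _ h3
    omega

lemma dep_iter (k : ℕ) (v : Fin n) : T.dep (T.1.1^[k] v) = T.dep v - k := by
  induction k with
  | zero => simp
  | succ k ih => rw [iterate_succ_apply', dep_parent, ih]; omega

lemma dep_child {c v : Fin n} (hc : c.val ≠ 0) (h : T.1.1 c = v) : T.dep c = T.dep v + 1 := by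
  have := T.dep_parent c
  rw [h] at this
  have h0 : T.dep c ≠ 0 := fun h' => hc (T.dep_eq_zero.1 h')
  omega

/-- `x` is below a child of `v` of rank at least `i`. -/
def Under (v : Fin n) (i : ℕ) (x : Fin n) : Prop :=
  ∃ c : Fin n, c.val ≠ 0 ∧ T.1.1 c = v ∧ i ≤ (T.1.2 c).val ∧ ∃ k, T.1.1^[k] x = c

/-- `F` is the forest of the children of `v` of rank at least `i`. -/
def Rep : Fin n → ℕ → Fo → Prop
  | v, i, .nil => ∀ c : Fin n, c.val ≠ 0 → T.1.1 c = v → (T.1.2 c).val < i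
  | v, i, .cons a l r => ∃ c : Fin n, c.val = a ∧ c.val ≠ 0 ∧ T.1.1 c = v ∧ (T.1.2 c).val = i ∧
      Rep c 0 l ∧ Rep v (i + 1) r

lemma exists_rep_aux (m : ℕ) : ∀ v : Fin n, n - T.dep v ≤ m →
    ∀ j i, n + 1 - i ≤ j → ∃ F, T.Rep v i F := by
  induction m with
  | zero =>
    intro v hv
    have := T.dep_lt v
    omega
  | succ m ihm =>
    intro v hv j
    induction j with
    | zero =>
      intro i hi
      refine ⟨.nil, fun c _ _ => ?_⟩
      have := (T.1.2 c).2
      omega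
    | succ j ihj =>
      intro i hi
      by_cases h : ∃ c : Fin n, c.val ≠ 0 ∧ T.1.1 c = v ∧ (T.1.2 c).val = i
      · obtain ⟨c, h0, h1, h2⟩ := h
        have hd := T.dep_child h0 h1
        have hd' := T.dep_lt c
        obtain ⟨l, hl⟩ := ihm c (by omega) (n + 1) 0 (by omega)
        have hi' := (T.1.2 c).2
        obtain ⟨r, hr⟩ := ihj (i + 1) (by omega)
        exact ⟨.cons c.val l r, c, rfl, h0, h1, h2, hl, hr⟩
      · refine ⟨.nil, fun c hc hv' => ?_⟩
        by_contra hlt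
        rcases Nat.lt_or_ge i (T.1.2 c).val with hh | hh
        · obtain ⟨d, d0, d1, d2⟩ := T.rank_seg hc hh
          exact h ⟨d, d0, d1.trans hv', d2⟩
        · exact h ⟨c, hc, hv', by omega⟩

lemma exists_rep (v : Fin n) (i : ℕ) : ∃ F, T.Rep v i F :=
  T.exists_rep_aux n v (by omega) (n + 1) i (by omega)

variable {T}

lemma Rep.unique {v : Fin n} {i : ℕ} {F G : Fo} (hF : T.Rep v i F) (hG : T.Rep v i G) :
    F = G := by
  induction F generalizing v i G with
  | nil =>
    cases G with
    | nil => rfl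
    | cons a l r =>
      obtain ⟨c, _, h1, h2, h3, _⟩ := hG
      have := hF c h1 h2
      omega
  | cons a l r ihl ihr =>
    obtain ⟨c, c0, c1, c2, c3, c4, c5⟩ := hF
    cases G with
    | nil =>
      have := hG c c1 c2
      omega
    | cons b l' r' =>
      obtain ⟨d, d0, d1, d2, d3, d4, d5⟩ := hG
      have : c = d := T.rank_inj c1 d1 (c2.trans d2.symm) (c3.trans d3.symm)
      subst this
      rw [ihl c4 d4, ihr c5 d5, ← c0, ← d0]

lemma Rep.mem_lab {v : Fin n} {i : ℕ} {F : Fo} (h : T.Rep v i F) (x : ℕ) :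
    x ∈ F.lab ↔ ∃ y : Fin n, y.val = x ∧ T.Under v i y := by
  induction F generalizing v i with
  | nil =>
    simp only [Fo.lab, Multiset.notMem_zero, false_iff]
    rintro ⟨y, _, c, h0, h1, h2, _⟩
    have := h c h0 h1
    omega
  | cons a l r ihl ihr =>
    obtain ⟨c, c0, c1, c2, c3, c4, c5⟩ := h
    simp only [Fo.lab, Multiset.mem_cons, Multiset.mem_add, ihl c4, ihr c5]
    constructor
    · rintro (rfl | ⟨y, rfl, d, d0, d1, d2, k, d3⟩ | ⟨y, rfl, d, d0, d1, d2, d3⟩)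
      · exact ⟨c, c0, c, c1, c2, c3.ge, 0, rfl⟩
      · exact ⟨y, rfl, c, c1, c2, c3.ge, k + 1, by rw [iterate_succ_apply', d3, d1]⟩
      · exact ⟨y, rfl, d, d0, d1, by omega, d3⟩
    · rintro ⟨y, rfl, d, d0, d1, d2, k, d3⟩
      rcases Nat.lt_or_ge i (T.1.2 d).val with hh | hh
      · right; right
        exact ⟨y, rfl, d, d0, d1, hh, k, d3⟩
      · have : d = c := T.rank_inj d0 c1 (d1.trans c2.symm) (by omega)
        subst this
        cases k with
        | zero => left; rw [← c0, ← d3]; rfl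
        | succ k =>
          right; left
          rw [iterate_succ_apply'] at d3
          refine ⟨y, rfl, T.1.1^[k] y, ?_, d3, Nat.zero_le _, k, rfl⟩
          intro h0
          rw [T.root_fix h0] at d3
          rw [d3] at h0
          exact d0 h0

lemma anc_unique {x c d : Fin n} {k k' : ℕ} (hc : c.val ≠ 0) (h : T.1.1^[k] x = c)
    (h' : T.1.1^[k'] x = d) (hd : T.dep c = T.dep d) : c = d := by
  have h1 := T.dep_iter k x
  have h2 := T.dep_iter k' x
  rw [h] at h1
  rw [h'] at h2
  have h0 : T.dep c ≠ 0 := fun h' => hc (T.dep_eq_zero.1 h')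
  have : k = k' := by omega
  subst this
  exact h.symm.trans h'

lemma Rep.nodup {v : Fin n} {i : ℕ} {F : Fo} (h : T.Rep v i F) : F.lab.Nodup := by
  induction F generalizing v i with
  | nil => simp [Fo.lab]
  | cons a l r ihl ihr =>
    obtain ⟨c, c0, c1, c2, c3, c4, c5⟩ := h
    have hdc := T.dep_child c1 c2
    simp only [Fo.lab, Multiset.nodup_cons, Multiset.nodup_add, Multiset.mem_add,
      Multiset.disjoint_left, c4.mem_lab, c5.mem_lab]
    refine ⟨?_, ihl c4, ihr c5, ?_⟩
    · rintro (⟨y, hy, d, d0, d1, d2, k, d3⟩ | ⟨y, hy, d, d0, d1, d2, k, d3⟩)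
      · have : y = c := Fin.ext (hy.trans c0.symm)
        subst this
        have h1 := T.dep_child d0 d1
        have h2 := T.dep_iter k y
        rw [d3] at h2
        omega
      · have : y = c := Fin.ext (hy.trans c0.symm)
        subst this
        have h1 := T.dep_child d0 d1
        have : d = y := anc_unique (k' := 0) d0 d3 rfl (by omega)
        subst this
        omega
    · rintro x ⟨y, rfl, d, d0, d1, d2, k, d3⟩ ⟨y', hy, e, e0, e1, e2, k', e3⟩
      have : y' = y := Fin.ext hy
      subst this
      have h1 := T.dep_child e0 e1
      have h4 : T.1.1^[k + 1] y' = c := by rw [iterate_succ_apply', d3, d1]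
      have : c = e := anc_unique c1 h4 e3 (by omega)
      subst this
      omega

lemma Rep.lab_eq {n : ℕ} {T : PlanarTree (n + 1)} {F : Fo} (h : T.Rep 0 0 F) :
    F.lab = Fo.tgt n := by
  rw [Multiset.Nodup.ext h.nodup (Fo.tgt_nodup n)]
  intro x
  rw [h.mem_lab, Fo.mem_tgt]
  constructor
  · rintro ⟨y, rfl, d, d0, d1, d2, k, d3⟩
    refine ⟨fun h0 => ?_, y.2⟩
    have h2 := T.dep_iter k y
    rw [T.dep_eq_zero.2 h0, d3] at h2
    exact d0 (T.dep_eq_zero.1 (by omega))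
  · rintro ⟨hx, hx'⟩
    refine ⟨⟨x, hx'⟩, rfl, ?_⟩
    obtain ⟨k, hk⟩ := T.reach' ⟨x, hx'⟩
    induction k with
    | zero => exact absurd hk hx
    | succ k ih =>
      by_cases h0 : (T.1.1^[k] ⟨x, hx'⟩).val = 0
      · exact ih h0
      · rw [iterate_succ_apply'] at hk
        exact ⟨_, h0, Fin.ext hk, Nat.zero_le _, k, rfl⟩

/-! #### Statistics -/

lemma Rep.beta_eq {c : Fin n} {l : Fo} (hc : c.val ≠ 0) (h : T.Rep c 0 l) :
    ((T.beta c : ℕ) : WithTop ℕ) = Fo.be c.val l := by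
  have hne : ({j : ℕ | ∃ v : Fin n, v.val = j ∧ ∃ k, T.1.1^[k] v = c}).Nonempty :=
    ⟨c.val, c, rfl, 0, rfl⟩
  apply le_antisymm
  · refine le_min ?_ ?_
    · have : T.beta c ≤ c.val := Nat.sInf_le ⟨c, rfl, 0, rfl⟩
      exact_mod_cast this
    · rw [Fo.le_minF_iff]
      intro y hy
      rw [h.mem_lab] at hy
      obtain ⟨y, rfl, d, d0, d1, d2, k, d3⟩ := hy
      have : T.beta c ≤ y.val := Nat.sInf_le ⟨y, rfl, k + 1, by rw [iterate_succ_apply', d3, d1]⟩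
      exact_mod_cast this
  · obtain ⟨y, hy, k, hk⟩ := Nat.sInf_mem hne
    unfold beta
    rw [← hy]
    cases k with
    | zero =>
      have : y = c := hk
      subst this
      exact min_le_left _ _
    | succ k =>
      refine le_trans (min_le_right _ _) ((Fo.le_minF_iff l _).1 le_rfl _ ?_)
      rw [h.mem_lab]
      rw [iterate_succ_apply'] at hk
      refine ⟨y, rfl, T.1.1^[k] y, ?_, hk, Nat.zero_le _, k, rfl⟩
      intro h0
      rw [T.root_fix h0] at hk
      rw [hk] at h0
      exact hc h0

lemma Rep.elder_iff {v c : Fin n} {i : ℕ} {r : Fo} (hc : c.val ≠ 0) (hv : T.1.1 c = v)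
    (hi : (T.1.2 c).val = i) (h : T.Rep v (i + 1) r) :
    T.Elder c ↔ r.minF < ((T.beta c : ℕ) : WithTop ℕ) := by
  rw [Fo.minF_lt_iff]
  constructor
  · rintro ⟨_, d, d0, d1, d2, d3⟩
    have hne : ({j : ℕ | ∃ v : Fin n, v.val = j ∧ ∃ k, T.1.1^[k] v = d}).Nonempty :=
      ⟨d.val, d, rfl, 0, rfl⟩
    obtain ⟨y, hy, k, hk⟩ := Nat.sInf_mem hne
    refine ⟨y.val, ?_, ?_⟩
    · rw [h.mem_lab]
      have : (T.1.2 c).val < (T.1.2 d).val := d2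
      exact ⟨y, rfl, d, d0, d1.trans hv, by omega, k, hk⟩
    · have : y.val = T.beta d := hy
      rw [this]
      exact_mod_cast d3
  · rintro ⟨y, hy, hlt⟩
    rw [h.mem_lab] at hy
    obtain ⟨y, rfl, d, d0, d1, d2, k, d3⟩ := hy
    refine ⟨hc, d, d0, d1.trans hv.symm, ?_, ?_⟩
    · have : (T.1.2 c).val < (T.1.2 d).val := by omega
      exact this
    · have h1 : T.beta d ≤ y.val := Nat.sInf_le ⟨y, rfl, k, d3⟩
      have h2 : y.val < T.beta c := by exact_mod_cast hlt
      omega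

variable (T)

open Classical in
/-- Weight of a vertex. -/
def vw (c : Fin n) : MvPolynomial (Fin 4) ℚ :=
  if T.Elder c then X 3 else if T.beta c < (T.1.1 c).val then X 1 else
    if (T.1.1 c).val = 0 then X 0 else X 2

/-- Weight of a label. -/
def vwN (x : ℕ) : MvPolynomial (Fin 4) ℚ := if h : x < n then T.vw ⟨x, h⟩ else 1

variable {T}

lemma Rep.W_eq {v : Fin n} {i : ℕ} {F : Fo} (h : T.Rep v i F) :
    F.W v.val = (F.lab.map T.vwN).prod := by
  induction F generalizing v i with
  | nil => simp [Fo.W, Fo.lab]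
  | cons a l r ihl ihr =>
    obtain ⟨c, rfl, c1, c2, c3, c4, c5⟩ := h
    have e1 := c4.beta_eq c1
    have e2 := c5.elder_iff c1 c2 c3
    have e3 : T.vwN c.val = Fo.om v.val (Fo.be c.val l) r.minF := by
      simp only [vwN, c.2, dif_pos, vw, Fo.om, e2, c2, ← e1]
      norm_cast
    simp only [Fo.W, Fo.lab, Multiset.map_cons, Multiset.prod_cons, Multiset.map_add,
      Multiset.prod_add, ihl c4, ihr c5, e3]

lemma Rep.exists_young {v : Fin n} {i a : ℕ} {l r : Fo} (h : T.Rep v i (.cons a l r)) :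
    ∃ c : Fin n, c.val ≠ 0 ∧ T.1.1 c = v ∧ ¬ T.Elder c := by
  induction r generalizing i a l with
  | nil =>
    obtain ⟨c, rfl, c1, c2, c3, c4, c5⟩ := h
    refine ⟨c, c1, c2, ?_⟩
    rw [c5.elder_iff c1 c2 c3]
    simp [Fo.minF]
  | cons b l' r' _ ih =>
    obtain ⟨c, rfl, c1, c2, c3, c4, c5⟩ := h
    exact ih c5

end PlanarTree

namespace Fo

/-- `x` has parent `q` and rank `j` in the forest `F` hanging from `v`, ranks starting at `i`. -/
def Edge : ℕ → ℕ → Fo → ℕ → ℕ → ℕ → Prop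
  | _, _, nil, _, _, _ => False
  | v, i, cons a l r, x, q, j =>
      (x = a ∧ q = v ∧ j = i) ∨ Edge a 0 l x q j ∨ Edge v (i + 1) r x q j

lemma Edge.mem {v i : ℕ} {F : Fo} {x q j : ℕ} (h : Edge v i F x q j) :
    x ∈ F.lab ∧ (q = v ∧ i ≤ j ∨ q ∈ F.lab) := by
  induction F generalizing v i with
  | nil => exact h.elim
  | cons a l r ihl ihr =>
    simp only [lab, Multiset.mem_cons, Multiset.mem_add]
    rcases h with ⟨rfl, rfl, rfl⟩ | h | h
    · simp
    · have := ihl h; tauto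
    · have := ihr h
      rcases this with ⟨h1, ⟨h2, h3⟩ | h2⟩
      · exact ⟨by tauto, Or.inl ⟨h2, by omega⟩⟩
      · tauto

lemma exists_edge {v i : ℕ} {F : Fo} {x : ℕ} (h : x ∈ F.lab) : ∃ q j, Edge v i F x q j := by
  induction F generalizing v i with
  | nil => simp [lab] at h
  | cons a l r ihl ihr =>
    simp only [lab, Multiset.mem_cons, Multiset.mem_add] at h
    rcases h with h | h | h
    · exact ⟨v, i, Or.inl ⟨h, rfl, rfl⟩⟩
    · obtain ⟨q, j, h⟩ := ihl (v := a) (i := 0) h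
      exact ⟨q, j, Or.inr (Or.inl h)⟩
    · obtain ⟨q, j, h⟩ := ihr (v := v) (i := i + 1) h
      exact ⟨q, j, Or.inr (Or.inr h)⟩

lemma Edge.inj {v i : ℕ} {F : Fo} {x x' q j : ℕ} (hn : F.lab.Nodup) (hv : v ∉ F.lab)
    (h : Edge v i F x q j) (h' : Edge v i F x' q j) : x = x' := by
  induction F generalizing v i with
  | nil => exact h.elim
  | cons a l r ihl ihr =>
    have h1 := lab_nodup_cons hn
    have hv' : v ≠ a ∧ v ∉ l.lab ∧ v ∉ r.lab := by simpa [lab] using hv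
    rcases h with ⟨e1, e2, e3⟩ | h | h <;> rcases h' with ⟨f1, f2, f3⟩ | h' | h'
    · rw [e1, f1]
    · have := h'.mem; grind
    · have := h'.mem; grind
    · have := h.mem; grind
    · exact ihl h1.1 h1.2.2.1 h h'
    · have := h.mem; have := h'.mem; grind
    · have := h.mem; grind
    · have := h.mem; have := h'.mem; grind
    · exact ihr h1.2.1 hv'.2.2 h h'

lemma Edge.func {v i : ℕ} {F : Fo} {x q j q' j' : ℕ} (hn : F.lab.Nodup)
    (h : Edge v i F x q j) (h' : Edge v i F x q' j') : q = q' ∧ j = j' := by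
  induction F generalizing v i with
  | nil => exact h.elim
  | cons a l r ihl ihr =>
    have h1 := lab_nodup_cons hn
    rcases h with ⟨e1, e2, e3⟩ | h | h <;> rcases h' with ⟨f1, f2, f3⟩ | h' | h'
    · rw [e2, f2, e3, f3]; simp
    · have := h'.mem; grind
    · have := h'.mem; grind
    · have := h.mem; grind
    · exact ihl h1.1 h h'
    · have := h.mem; have := h'.mem; grind
    · have := h.mem; grind
    · have := h.mem; have := h'.mem; grind
    · exact ihr h1.2.1 h h'

lemma Edge.seg {v i : ℕ} {F : Fo} {x q j s : ℕ} (h : Edge v i F x q j) (hs : s < j)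
    (hi : q = v → i ≤ s) : ∃ x', Edge v i F x' q s := by
  induction F generalizing v i with
  | nil => exact h.elim
  | cons a l r ihl ihr =>
    rcases h with ⟨e1, e2, e3⟩ | h | h
    · have := hi e2; omega
    · obtain ⟨x', h⟩ := ihl h (fun _ => Nat.zero_le _)
      exact ⟨x', Or.inr (Or.inl h)⟩
    · by_cases hh : q = v ∧ s = i
      · exact ⟨a, Or.inl ⟨rfl, hh.1, hh.2⟩⟩
      · obtain ⟨x', h⟩ := ihr h (fun e => by have := hi e; by_contra hc; exact hh ⟨e, by omega⟩)
        exact ⟨x', Or.inr (Or.inr h)⟩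

lemma Edge.bound {v i : ℕ} {F : Fo} {x q j : ℕ} (h : Edge v i F x q j) :
    j < i + Multiset.card F.lab := by
  induction F generalizing v i with
  | nil => exact h.elim
  | cons a l r ihl ihr =>
    simp only [lab, Multiset.card_cons, Multiset.card_add]
    rcases h with ⟨e1, e2, e3⟩ | h | h
    · omega
    · have := ihl h; omega
    · have := ihr h; omega

lemma Edge.reach {N : ℕ} {p : Fin N → Fin N} {v i : ℕ} {F : Fo}
    (hp : ∀ (x : Fin N) (q j : ℕ), Edge v i F x q j → (p x).val = q) (x : Fin N)
    (hx : x.val ∈ F.lab) : ∃ k, k ≤ Multiset.card F.lab ∧ (p^[k] x).val = v := by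
  induction F generalizing v i with
  | nil => simp [lab] at hx
  | cons a l r ihl ihr =>
    simp only [lab, Multiset.mem_cons, Multiset.mem_add] at hx
    simp only [lab, Multiset.card_cons, Multiset.card_add]
    rcases hx with h | h | h
    · exact ⟨1, by omega, hp x v i (Or.inl ⟨h, rfl, rfl⟩)⟩
    · obtain ⟨k, hk, hk'⟩ := ihl (v := a) (i := 0) (fun x q j h => hp x q j (Or.inr (Or.inl h))) h
      refine ⟨k + 1, by omega, ?_⟩
      rw [iterate_succ_apply']
      exact hp _ v i (Or.inl ⟨hk', rfl, rfl⟩)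
    · obtain ⟨k, hk, hk'⟩ := ihr (v := v) (i := i + 1)
        (fun x q j h => hp x q j (Or.inr (Or.inr h))) h
      exact ⟨k, by omega, hk'⟩

end Fo

namespace PlanarTree

lemma rep_of_edge {N : ℕ} {T : PlanarTree N} {v : Fin N} {i : ℕ} {F : Fo}
    (hn : F.lab.Nodup) (hv : v.val ∉ F.lab) (hlt : ∀ x ∈ F.lab, x < N ∧ x ≠ 0)
    (H1 : ∀ (x : Fin N) (q j : ℕ), Fo.Edge v i F x q j → (T.1.1 x).val = q ∧ (T.1.2 x).val = j)
    (H2 : ∀ x : Fin N, x.val ≠ 0 →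
      ((T.1.1 x).val = v.val ∧ i ≤ (T.1.2 x).val ∨ (T.1.1 x).val ∈ F.lab) →
        Fo.Edge v i F x (T.1.1 x) (T.1.2 x)) : T.Rep v i F := by
  induction F generalizing v i with
  | nil =>
    intro c hc hv
    by_contra hh
    exact H2 c hc (Or.inl ⟨by rw [hv], by omega⟩)
  | cons a l r ihl ihr =>
    have h1 := Fo.lab_nodup_cons hn
    have hv' : v.val ≠ a ∧ v.val ∉ l.lab ∧ v.val ∉ r.lab := by simpa [Fo.lab] using hv
    have ha := hlt a (by simp [Fo.lab])
    have hc := H1 ⟨a, ha.1⟩ v i (Or.inl ⟨rfl, rfl, rfl⟩)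
    refine ⟨⟨a, ha.1⟩, rfl, ha.2, Fin.ext hc.1, hc.2, ?_, ?_⟩
    · refine ihl h1.1 h1.2.2.1 (fun x hx => hlt x (by simp [Fo.lab, hx]))
        (fun x q j h => H1 x q j (Or.inr (Or.inl h))) ?_
      intro x hx hx'
      have hx'' : (T.1.1 x).val = a ∨ (T.1.1 x).val ∈ l.lab := by
        rcases hx' with h | h
        · exact Or.inl h.1
        · exact Or.inr h
      rcases H2 x hx (Or.inr (by simp only [Fo.lab, Multiset.mem_cons, Multiset.mem_add]; tauto))
        with ⟨_, e2, _⟩ | h | h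
      · rw [e2] at hx''
        tauto
      · exact h
      · have := h.mem
        grind
    · refine ihr h1.2.1 hv'.2.2 (fun x hx => hlt x (by simp [Fo.lab, hx]))
        (fun x q j h => H1 x q j (Or.inr (Or.inr h))) ?_
      intro x hx hx'
      have hx'' : (T.1.1 x).val = v ∧ i ≤ (T.1.2 x).val ∨ (T.1.1 x).val ∈ (Fo.cons a l r).lab := by
        simp only [Fo.lab, Multiset.mem_cons, Multiset.mem_add]
        rcases hx' with h | h
        · exact Or.inl ⟨h.1, by omega⟩
        · tauto
      rcases H2 x hx hx'' with ⟨_, e2, e3⟩ | h | h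
      · rcases hx' with h | h
        · omega
        · rw [e2] at h; tauto
      · have := h.mem
        grind
      · exact h

lemma exists_tree {n : ℕ} {F : Fo} (hF : F.lab = Fo.tgt n) :
    ∃ T : PlanarTree (n + 1), T.Rep 0 0 F := by
  have hn : F.lab.Nodup := by rw [hF]; exact Fo.tgt_nodup n
  have h0 : 0 ∉ F.lab := by rw [hF]; simp [Fo.mem_tgt]
  have hcard : Multiset.card F.lab = n := by rw [hF, Fo.card_tgt]
  have hmem : ∀ x, x ∈ F.lab ↔ x ≠ 0 ∧ x < n + 1 := fun x => by rw [hF, Fo.mem_tgt]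
  have hex : ∀ x : Fin (n + 1), ∃ qj : Fin (n + 1) × Fin (n + 1),
      (x.val ≠ 0 → Fo.Edge 0 0 F x qj.1 qj.2) ∧ (x.val = 0 → qj = (0, 0)) := by
    intro x
    by_cases hx : x.val = 0
    · exact ⟨(0, 0), by simp [hx], fun _ => rfl⟩
    · obtain ⟨q, j, h⟩ := Fo.exists_edge (v := 0) (i := 0) ((hmem x).2 ⟨hx, x.2⟩)
      have hb := h.bound
      have hq : q < n + 1 := by
        rcases h.mem.2 with h | h
        · omega
        · exact ((hmem q).1 h).2
      exact ⟨(⟨q, hq⟩, ⟨j, by omega⟩), fun _ => h, fun h => absurd h hx⟩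
  choose f hf hf0 using hex
  have hfun : ∀ (x : Fin (n + 1)) (q j : ℕ), Fo.Edge 0 0 F x q j →
      (f x).1.val = q ∧ (f x).2.val = j := by
    intro x q j h
    have hx : x.val ≠ 0 := ((hmem x).1 h.mem.1).1
    exact Fo.Edge.func hn (hf x hx) h
  let T : PlanarTree (n + 1) := ⟨(fun x => (f x).1, fun x => (f x).2), by
    refine ⟨?_, ?_, ?_, ?_, ?_⟩
    · intro v hv
      simp only [hf0 v hv]
      exact Fin.ext hv.symm
    · intro v
      by_cases hv : v.val = 0
      · exact ⟨0, by omega, hv⟩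
      · obtain ⟨k, hk, hk'⟩ := Fo.Edge.reach (p := fun x => (f x).1)
          (fun x q j h => (hfun x q j h).1) v ((hmem v).2 ⟨hv, v.2⟩)
        exact ⟨k, by omega, hk'⟩
    · intro v hv
      simp [hf0 v hv]
    · intro c d hc hd e1 e2
      have hc' := hf c hc
      have hd' := hf d hd
      simp only at e1 e2
      rw [e1, e2] at hc'
      exact Fin.ext (Fo.Edge.inj hn h0 hc' hd')
    · intro c hc s hs
      obtain ⟨x, hx⟩ := (hf c hc).seg hs (fun _ => Nat.zero_le _)
      have hx' := (hmem x).1 hx.mem.1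
      have := hfun ⟨x, hx'.2⟩ _ _ hx
      exact ⟨⟨x, hx'.2⟩, hx'.1, Fin.ext this.1, Fin.ext this.2⟩⟩
  refine ⟨T, rep_of_edge hn h0 (fun x hx => ((hmem x).1 hx).symm) hfun (fun x hx _ => hf x hx)⟩

lemma Rep.edge {n : ℕ} {T : PlanarTree n} {v : Fin n} {i : ℕ} {F : Fo} (h : T.Rep v i F)
    {x q j : ℕ} (he : Fo.Edge v i F x q j) :
    ∃ c : Fin n, c.val = x ∧ (T.1.1 c).val = q ∧ (T.1.2 c).val = j := by
  induction F generalizing v i with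
  | nil => exact he.elim
  | cons a l r ihl ihr =>
    obtain ⟨c, rfl, c1, c2, c3, c4, c5⟩ := h
    rcases he with ⟨rfl, rfl, rfl⟩ | he | he
    · exact ⟨c, rfl, by rw [c2], c3⟩
    · exact ihl c4 he
    · exact ihr c5 he

lemma Rep.inj {n : ℕ} {T T' : PlanarTree (n + 1)} {F : Fo} (h : T.Rep 0 0 F)
    (h' : T'.Rep 0 0 F) : T = T' := by
  have key : ∀ x : Fin (n + 1), T.1.1 x = T'.1.1 x ∧ T.1.2 x = T'.1.2 x := by
    intro x
    by_cases hx : x.val = 0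
    · refine ⟨by rw [T.root_fix hx, T'.root_fix hx], Fin.ext ?_⟩
      rw [T.rank_root hx, T'.rank_root hx]
    · obtain ⟨q, j, he⟩ := Fo.exists_edge (v := 0) (i := 0) (F := F) (x := x.val)
        (by rw [h.lab_eq, Fo.mem_tgt]; exact ⟨hx, x.2⟩)
      obtain ⟨c, c0, c1, c2⟩ := h.edge he
      obtain ⟨d, d0, d1, d2⟩ := h'.edge he
      have e1 : c = x := Fin.ext c0
      have e2 : d = x := Fin.ext d0
      subst e1
      subst e2
      exact ⟨Fin.ext (c1.trans d1.symm), Fin.ext (c2.trans d2.symm)⟩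
  exact Subtype.ext (Prod.ext (funext fun x => (key x).1) (funext fun x => (key x).2))

open Classical in
lemma prod_vw {n : ℕ} (T : PlanarTree (n + 1)) :
    ((Fo.tgt n).map T.vwN).prod = X 0 ^ T.youngRoot * X 3 ^ T.eld * X 1 ^ T.impe
        * X 2 ^ (n - T.youngRoot - T.eld - T.impe) := by
  have h1 : Fo.tgt n =
      (((Finset.univ : Finset (Fin (n + 1))).filter (fun c => c.val ≠ 0)).val.map Fin.val) := by
    rw [Multiset.Nodup.ext (Fo.tgt_nodup n)
      ((Finset.nodup _).map Fin.val_injective)]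
    intro x
    simp only [Fo.mem_tgt, Multiset.mem_map, Finset.mem_val, Finset.mem_filter, Finset.mem_univ,
      true_and]
    constructor
    · rintro ⟨hx, hx'⟩
      exact ⟨⟨x, hx'⟩, hx, rfl⟩
    · rintro ⟨c, hc, rfl⟩
      exact ⟨hc, c.2⟩
  have hcard : ((Finset.univ : Finset (Fin (n + 1))).filter (fun c => c.val ≠ 0)).card = n := by
    have := Fo.card_tgt n
    rw [h1, Multiset.card_map] at this
    exact this
  have h2 : ∀ c : Fin (n + 1), T.vwN c.val = T.vw c := fun c => dif_pos c.2
  rw [h1, Multiset.map_map]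
  simp only [Function.comp_def, h2]
  set A := (Finset.univ : Finset (Fin (n + 1))).filter (fun c => c.val ≠ 0) with hA
  change ∏ c ∈ A, T.vw c = _
  unfold vw
  rw [Finset.prod_ite, Finset.prod_ite, Finset.prod_ite]
  simp only [Finset.prod_const]
  have c1 := Finset.card_filter_add_card_filter_not (s := A) (fun c => T.Elder c)
  have c2 := Finset.card_filter_add_card_filter_not (s := A.filter (fun c => ¬ T.Elder c))
    (fun c => T.beta c < (T.1.1 c).val)
  have c3 := Finset.card_filter_add_card_filter_not
    (s := (A.filter (fun c => ¬ T.Elder c)).filter (fun c => ¬ T.beta c < (T.1.1 c).val))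
    (fun c => (T.1.1 c).val = 0)
  have d1 : T.eld = (A.filter (fun c => T.Elder c)).card := by
    rw [eld, ← Set.ncard_coe_finset]
    congr 1
    ext c
    simp only [hA, Set.mem_ofPred_eq, Finset.coe_filter, Finset.mem_filter, Finset.mem_univ, true_and]
    exact ⟨fun h => ⟨h.1, h⟩, fun h => h.2⟩
  have d2 : T.impe = ((A.filter (fun c => ¬ T.Elder c)).filter
      (fun c => T.beta c < (T.1.1 c).val)).card := by
    rw [impe, ← Set.ncard_coe_finset]
    congr 1
    ext c
    simp [hA, ImproperEdge, and_assoc]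
  have d3 : T.youngRoot = (((A.filter (fun c => ¬ T.Elder c)).filter
      (fun c => ¬ T.beta c < (T.1.1 c).val)).filter (fun c => (T.1.1 c).val = 0)).card := by
    rw [youngRoot, ← Set.ncard_coe_finset]
    congr 1
    ext c
    simp only [hA, Set.mem_ofPred_eq, Finset.coe_filter, Finset.mem_filter, Finset.mem_univ, true_and]
    constructor
    · rintro ⟨h1, h2, h3⟩
      exact ⟨⟨⟨h1, h3⟩, by omega⟩, h2⟩
    · rintro ⟨⟨⟨h1, h3⟩, _⟩, h2⟩
      exact ⟨h1, h2, h3⟩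
  rw [← d1] at c1 ⊢
  rw [← d2] at c2 ⊢
  rw [← d3] at c3 ⊢
  have e : n - T.youngRoot - T.eld - T.impe = (((A.filter (fun c => ¬ T.Elder c)).filter
      (fun c => ¬ T.beta c < (T.1.1 c).val)).filter (fun c => ¬ (T.1.1 c).val = 0)).card := by
    omega
  rw [e]
  ring

lemma youngRoot_pos {n : ℕ} (hn : 1 ≤ n) (T : PlanarTree (n + 1)) : 1 ≤ T.youngRoot := by
  obtain ⟨F, hF⟩ := T.exists_rep 0 0
  cases F with
  | nil =>
    have := congrArg Multiset.card hF.lab_eq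
    rw [Fo.card_tgt] at this
    simp [Fo.lab] at this
    omega
  | cons a l r =>
    obtain ⟨c, h1, h2, h3⟩ := hF.exists_young
    have : 0 < T.youngRoot := by
      unfold youngRoot
      rw [Set.ncard_pos]
      exact ⟨c, h1, by rw [h2]; rfl, h3⟩
    exact this

end PlanarTree

/-- (Guo–Zeng) For every `n ≥ 1`,
`Q_n(x,y,z,t) = Σ_{T ∈ O_{n+1}} x^{young_T(1)-1} t^{eld T} y^{impe T}
  z^{n - young_T(1) - eld T - impe T}`. -/
theorem Qpoly_eq_sum_planarTree (n : ℕ) (hn : 1 ≤ n) :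
    Qpoly n = ∑ T : PlanarTree (n + 1),
      (X 0 : MvPolynomial (Fin 4) ℚ) ^ (T.youngRoot - 1) * X 3 ^ T.eld * X 1 ^ T.impe
        * X 2 ^ (n - T.youngRoot - T.eld - T.impe) := by
  have hX : (X 0 : MvPolynomial (Fin 4) ℚ) ≠ 0 := X_ne_zero 0
  apply mul_left_cancel₀ hX
  obtain ⟨m, rfl⟩ : ∃ m, n = m + 1 := ⟨n - 1, by omega⟩
  rw [← Fo.sum_S]
  classical
  rw [← List.sum_toFinset _ (Fo.S_nodup (m + 1)), Finset.mul_sum]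
  symm
  choose f hf using fun T : PlanarTree (m + 1 + 1) => T.exists_rep 0 0
  refine Finset.sum_bij (fun T _ => f T) ?_ ?_ ?_ ?_
  · intro T _
    rw [List.mem_toFinset, Fo.mem_S]
    exact (hf T).lab_eq
  · intro T _ T' _ e
    have h := hf T
    rw [e] at h
    exact h.inj (hf T')
  · intro F hF
    rw [List.mem_toFinset, Fo.mem_S] at hF
    obtain ⟨T, hT⟩ := PlanarTree.exists_tree hF
    exact ⟨T, Finset.mem_univ _, (hf T).unique hT⟩
  · intro T _
    have h1 := (hf T).W_eq
    rw [(hf T).lab_eq, T.prod_vw] at h1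
    have h2 := T.youngRoot_pos hn
    refine Eq.trans ?_ h1.symm
    obtain ⟨y, hy⟩ : ∃ y, T.youngRoot = y + 1 := ⟨T.youngRoot - 1, by omega⟩
    rw [hy]
    simp only [Nat.add_sub_cancel, pow_succ]
    ring

end
end
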